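/- arXiv:1304.7216 — 2 statements merged into one kernel-verified Lean document; each statement's English description precedes it below -/
import Mathlib

section
/- Let G be an infinite, connected, locally finite simple graph, let Γ be a subgroup of Aut(G) acting transitively on the vertex set V, and let 𝒜 be a non-trivial normal subgroup of Γ. Suppose that every SAW of G of length 1 or 2 has its two endpoints in distinct 𝒜-orbits (equivalently, the shortest SAW of G with distinct endpoints in the same 𝒜-orbit has length at least 3). Let G/𝒜 be the quotient graph, and let σ̄_n(𝒜v) denote the number of n-step SAWs in G/𝒜 from the orbit 𝒜v. If σ_n(v)^{1/n} → μ as n → ∞ for a vertex v of G, then limsup_{n→∞} σ̄_n(𝒜v)^{1/n} < μ. -/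
open Filter

/-- The number of `n`-step self-avoiding walks in `G` starting at `v`. -/
noncomputable def sawCount {V : Type*} (G : SimpleGraph V) (v : V) (n : ℕ) : ℕ :=
  Nat.card {p : Σ w : V, G.Walk v w // p.2.IsPath ∧ p.2.length = n}

/-- The quotient graph `G/𝒜` of a graph `G` by a group `A` of permutations of its vertices:
the vertices are the `A`-orbits, two distinct orbits being adjacent iff some vertex of one
is adjacent in `G` to some vertex of the other. -/
def quotGraph {V : Type*} (G : SimpleGraph V) (A : Subgroup (Equiv.Perm V)) :
    SimpleGraph (Quotient (MulAction.orbitRel A V)) :=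
  SimpleGraph.fromRel (fun x y => ∃ u w : V, G.Adj u w ∧
    Quotient.mk (MulAction.orbitRel A V) u = x ∧ Quotient.mk (MulAction.orbitRel A V) w = y)

/-!
The quotient map `G → G/𝒜` is a covering, and a shortest walk joining two vertices of one fibre
projects to a cycle of `G/𝒜` all of whose lifts are open paths. Replace pieces of a SAW of `G/𝒜` by
windings round translates of this cycle: the result need not be self-avoiding, but its lift to `G`
is. Hence the weighted number of SAWs of `G/𝒜` carrying such decorations is bounded by the
generating function of the SAWs of `G`, which is finite for `z < μ⁻¹`.

As in Kesten's pattern theorem, this shows that SAWs with few places for a decoration are rare, by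
induction on `r`: the walks with at most `r` vertices within distance `2ℓ` of each of their vertices
grow strictly slower than `μ ^ n`, where `ℓ` is the length of the cycle. A walk for `r + 1` has
either few crowded places, hence many blocks which are walks for `r`, or many crowded places, each
of which can be decorated. When `r` is the size of a ball, every SAW is counted.
-/

section Walks

variable {V : Type*} (G : SimpleGraph V)

theorem isChain_adj_map_iso {l : List V} (hl : l.IsChain G.Adj) (e : G ≃g G) :
    (l.map e).IsChain G.Adj :=
  List.isChain_map_of_isChain e (fun _ _ h => e.map_adj_iff.2 h) hl

theorem edist_iso_apply (e : G ≃g G) (x y : V) : G.edist (e x) (e y) = G.edist x y := by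
  have key : ∀ (e : G ≃g G) (x y : V), G.edist (e x) (e y) ≤ G.edist x y := fun e x y =>
    le_iInf fun p => by simpa using SimpleGraph.edist_le (p.map e.toHom)
  exact le_antisymm (key e x y) (by simpa using key e.symm (e x) (e y))

theorem card_eq_of_forall_map_mem [MulAction.IsPretransitive (G ≃g G) V]
    {S : V → Finset (List V)}
    (hS : ∀ (e : G ≃g G) (x : V), ∀ l ∈ S x, l.map e ∈ S (e x)) (x y : V) :
    (S x).card = (S y).card := by
  have key : ∀ x y, (S x).card ≤ (S y).card := fun x y => by
    obtain ⟨e, rfl⟩ := MulAction.exists_smul_eq (G ≃g G) x y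
    exact Finset.card_le_card_of_injOn (List.map e) (hS e x)
      (List.map_injective_iff.2 e.injective).injOn
  exact le_antisymm (key x y) (key y x)

variable [G.LocallyFinite]

theorem finite_setOf_length_le_isChain (n : ℕ) (x : V) :
    {l : List V | l.length ≤ n ∧ List.IsChain G.Adj (x :: l)}.Finite := by
  induction n generalizing x with
  | zero =>
    refine (Set.finite_singleton []).subset ?_
    rintro l ⟨hl, -⟩
    simpa using hl
  | succ n ih =>
    have hstep : (⋃ y ∈ G.neighborSet x,
        List.cons y '' {l | l.length ≤ n ∧ List.IsChain G.Adj (y :: l)}).Finite :=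
      (Set.toFinite _).biUnion fun y _ => (ih y).image _
    refine (hstep.insert []).subset ?_
    rintro (_ | ⟨y, l⟩) ⟨hn, hc⟩
    · exact Set.mem_insert _ _
    · rw [List.isChain_cons_cons] at hc
      exact Or.inr (Set.mem_biUnion hc.1 ⟨l, ⟨by simpa using hn, hc.2⟩, rfl⟩)

/-- The walks with at most `n` steps from `x`, each encoded as the list of the vertices visited
after `x`. -/
noncomputable def walksUpTo (n : ℕ) (x : V) : Finset (List V) :=
  (finite_setOf_length_le_isChain G n x).toFinset

@[simp]
theorem mem_walksUpTo {n : ℕ} {x : V} {l : List V} :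
    l ∈ walksUpTo G n x ↔ l.length ≤ n ∧ List.IsChain G.Adj (x :: l) := by
  simp [walksUpTo]

theorem map_mem_walksUpTo {n : ℕ} (e : G ≃g G) (x : V) :
    ∀ l ∈ walksUpTo G n x, l.map e ∈ walksUpTo G n (e x) := fun l hl => by
  rw [mem_walksUpTo] at hl ⊢
  exact ⟨by simpa using hl.1, by simpa using isChain_adj_map_iso G hl.2 e⟩

theorem finite_setOf_edist_le (d : ℕ) (x : V) : {z | G.edist x z ≤ d}.Finite := by
  refine ((walksUpTo G d x).finite_toSet.image fun l => l.getLastD x).subset fun z hz => ?_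
  obtain ⟨p, hp⟩ := SimpleGraph.exists_walk_of_edist_ne_top
    (ne_top_of_le_ne_top (ENat.natCast_ne_top d) hz)
  refine ⟨p.support.tail, ?_, ?_⟩
  · have hd : p.length ≤ d := by exact_mod_cast hp.trans_le hz
    simpa [p.cons_tail_support] using ⟨hd, p.isChain_adj_support⟩
  · cases p with
    | nil => rfl
    | cons h p => simp [List.getLastD_eq_getLast?, List.getLast?_eq_some_getLast]

open scoped Classical in
/-- The `n`-step self-avoiding walks from `x`, each encoded as the list of the vertices visited
after `x`. -/
noncomputable def selfAvoidingWalks (n : ℕ) (x : V) : Finset (List V) :=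
  {l ∈ walksUpTo G n x | l.length = n ∧ (x :: l).Nodup}

@[simp]
theorem mem_selfAvoidingWalks {n : ℕ} {x : V} {l : List V} :
    l ∈ selfAvoidingWalks G n x ↔
      l.length = n ∧ List.IsChain G.Adj (x :: l) ∧ (x :: l).Nodup := by
  simp only [selfAvoidingWalks, Finset.mem_filter, mem_walksUpTo]
  grind

theorem map_mem_selfAvoidingWalks {n : ℕ} (e : G ≃g G) (x : V) :
    ∀ l ∈ selfAvoidingWalks G n x, l.map e ∈ selfAvoidingWalks G n (e x) := fun l hl => by
  rw [mem_selfAvoidingWalks] at hl ⊢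
  exact ⟨by simpa using hl.1, by simpa using isChain_adj_map_iso G hl.2.1 e,
    by simpa using hl.2.2.map e.injective⟩

variable {G} in
theorem support_tail_mem_selfAvoidingWalks {x w : V} {p : G.Walk x w} (hp : p.IsPath) :
    p.support.tail ∈ selfAvoidingWalks G p.length x := by
  rw [mem_selfAvoidingWalks, p.cons_tail_support]
  exact ⟨by simp, p.isChain_adj_support, hp.support_nodup⟩

theorem sawCount_eq_card_selfAvoidingWalks (x : V) (n : ℕ) :
    sawCount G x n = (selfAvoidingWalks G n x).card := by
  rw [sawCount, ← Fintype.card_coe, ← Nat.card_eq_fintype_card]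
  have hmem : ∀ p : {p : Σ w : V, G.Walk x w // p.2.IsPath ∧ p.2.length = n},
      p.1.2.support.tail ∈ selfAvoidingWalks G n x := by
    rintro ⟨⟨w, p⟩, hp, rfl⟩
    exact support_tail_mem_selfAvoidingWalks hp
  refine Nat.card_eq_of_bijective (fun p => (⟨_, hmem p⟩ : selfAvoidingWalks G n x)) ⟨?_, ?_⟩
  · rintro ⟨⟨w, p⟩, hp⟩ ⟨⟨w', p'⟩, hp'⟩ h
    have htail : p.support.tail = p'.support.tail := congrArg Subtype.val h
    have hsupp : p.support = p'.support := by
      rw [← p.cons_tail_support, ← p'.cons_tail_support, htail]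
    obtain rfl : w = w' := by
      rw [← p.getLast_support, ← p'.getLast_support]
      simp only [hsupp]
    obtain rfl := SimpleGraph.Walk.ext_support hsupp
    rfl
  · rintro ⟨l, hl⟩
    obtain ⟨hlen, hc, hnd⟩ := (mem_selfAvoidingWalks G).1 hl
    let p := SimpleGraph.Walk.ofSupport (x :: l) (by simp) hc
    have hp : p.support = x :: l := SimpleGraph.Walk.support_ofSupport _ _
    have hpath : p.IsPath := .mk' (by rwa [hp])
    refine ⟨⟨⟨_, p⟩, hpath, ?_⟩, Subtype.ext ?_⟩
    · have := p.length_support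
      simp_all
    · exact congrArg List.tail hp

theorem sawCount_eq [MulAction.IsPretransitive (G ≃g G) V] (x y : V) (n : ℕ) :
    sawCount G x n = sawCount G y n := by
  simp only [sawCount_eq_card_selfAvoidingWalks]
  exact card_eq_of_forall_map_mem G (map_mem_selfAvoidingWalks G) x y

theorem one_le_sawCount [Infinite V] (hconn : G.Connected) (x : V) (n : ℕ) :
    1 ≤ sawCount G x n := by
  obtain ⟨w, hw⟩ := (finite_setOf_edist_le G n x).exists_notMem
  obtain ⟨p, hp, -⟩ := hconn.exists_path_of_dist x w
  have hn : n ≤ p.length := by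
    by_contra! hlt
    exact hw ((SimpleGraph.edist_le p).trans (by exact_mod_cast hlt.le))
  have hmem := support_tail_mem_selfAvoidingWalks (hp.take n)
  rw [p.take_length, min_eq_left hn] at hmem
  rw [sawCount_eq_card_selfAvoidingWalks]
  exact Finset.card_pos.2 ⟨_, hmem⟩

end Walks

section SparseWalks

variable {V : Type*} (G : SimpleGraph V) (d r : ℕ)

/-- The number of entries of `l` within distance `d` of `y`. -/
noncomputable def nearCount (y : V) (l : List V) : ℕ :=
  l.countP fun z => G.edist y z ≤ d

/-- A walk is sparse if it is self-avoiding and the ball of radius `d` about each of its vertices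
contains at most `r` of them. -/
def IsSparse (l : List V) : Prop :=
  l.Nodup ∧ ∀ y ∈ l, nearCount G d y l ≤ r

/-- A walk is crowded if the ball of radius `d` about one of its vertices contains at least `r`
entries. -/
def IsCrowded (l : List V) : Prop :=
  ∃ y ∈ l, r ≤ nearCount G d y l

open scoped Classical in
/-- The number of crowded walks among the first `k` consecutive blocks of length `m` of `l`. -/
noncomputable def crowdedBlocks (m : ℕ) : ℕ → List V → ℕ
  | 0, _ => 0
  | k + 1, l =>
    (if IsCrowded G d r (l.take m) then 1 else 0) + crowdedBlocks m k (l.drop m)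

variable {G d r}

theorem nearCount_le_of_sublist {l₁ l₂ : List V} (h : l₁.Sublist l₂) (y : V) :
    nearCount G d y l₁ ≤ nearCount G d y l₂ :=
  h.countP_le

theorem nearCount_map_iso (e : G ≃g G) (y : V) (l : List V) :
    nearCount G d (e y) (l.map e) = nearCount G d y l := by
  simp [nearCount, List.countP_map, Function.comp_def, edist_iso_apply]

theorem IsSparse.sublist {l₁ l₂ : List V} (hl₂ : IsSparse G d r l₂) (h : l₁.Sublist l₂) :
    IsSparse G d r l₁ :=
  ⟨hl₂.1.sublist h, fun y hy => (nearCount_le_of_sublist h y).trans (hl₂.2 y (h.subset hy))⟩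

theorem IsSparse.map_iso {l : List V} (hl : IsSparse G d r l) (e : G ≃g G) :
    IsSparse G d r (l.map e) :=
  ⟨hl.1.map e.injective, List.forall_mem_map.2 fun y hy => by
    rw [nearCount_map_iso]
    exact hl.2 y hy⟩

theorem IsSparse.of_not_isCrowded {l : List V} (hl : IsSparse G d (r + 1) l)
    (h : ¬IsCrowded G d (r + 1) l) : IsSparse G d r l :=
  ⟨hl.1, fun y hy => by
    by_contra! hlt
    exact h ⟨y, hy, hlt⟩⟩

open scoped Classical in
theorem pow_crowdedBlocks_succ (s : ℝ) (m k : ℕ) (l : List V) :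
    s ^ crowdedBlocks G d r m (k + 1) l =
      (if IsCrowded G d r (l.take m) then s else 1) * s ^ crowdedBlocks G d r m k (l.drop m) := by
  rw [crowdedBlocks, pow_add]
  split_ifs <;> simp

variable [G.LocallyFinite]

variable (G d r) in
open scoped Classical in
/-- The `n`-step sparse walks from `x`, each encoded as the list of the vertices visited after
`x`. -/
noncomputable def sparseWalks (n : ℕ) (x : V) : Finset (List V) :=
  {l ∈ walksUpTo G n x | l.length = n ∧ IsSparse G d r l}

@[simp]
theorem mem_sparseWalks {n : ℕ} {x : V} {l : List V} :
    l ∈ sparseWalks G d r n x ↔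
      l.length = n ∧ List.IsChain G.Adj (x :: l) ∧ IsSparse G d r l := by
  simp only [sparseWalks, Finset.mem_filter, mem_walksUpTo]
  grind

theorem card_sparseWalks_eq [MulAction.IsPretransitive (G ≃g G) V] (n : ℕ) (x y : V) :
    (sparseWalks G d r n x).card = (sparseWalks G d r n y).card :=
  card_eq_of_forall_map_mem G (fun e x l hl => by
    rw [mem_sparseWalks] at hl ⊢
    exact ⟨by simpa using hl.1, by simpa using isChain_adj_map_iso G hl.2.1 e,
      hl.2.2.map_iso e⟩) x y

theorem take_mem_sparseWalks {m n : ℕ} {x : V} {l : List V}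
    (hl : l ∈ sparseWalks G d r (m + n) x) : l.take m ∈ sparseWalks G d r m x := by
  rw [mem_sparseWalks] at hl ⊢
  exact ⟨by simp [hl.1], by simpa using hl.2.1.take (m + 1),
    hl.2.2.sublist (List.take_sublist m l)⟩

theorem drop_mem_sparseWalks {m n : ℕ} {x : V} {l : List V}
    (hl : l ∈ sparseWalks G d r (m + n) x) :
    l.drop m ∈ sparseWalks G d r n ((l.take m).getLastD x) := by
  rw [mem_sparseWalks] at hl ⊢
  obtain ⟨hlen, hc, hs⟩ := hl
  refine ⟨by simp [hlen], ?_, hs.sublist (List.drop_sublist m l)⟩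
  rw [← List.take_append_drop m l, ← List.cons_append, List.isChain_append] at hc
  rw [List.isChain_cons]
  exact ⟨fun y hy => hc.2.2 _ (by simp [List.getLast?_cons, List.getLastD_eq_getLast?]) y hy,
    hc.2.1⟩

theorem sum_take_mul_drop_le {f g : List V → ℝ} (hf : ∀ l, 0 ≤ f l) (hg : ∀ l, 0 ≤ g l)
    (m n : ℕ) (x : V) :
    ∑ l ∈ sparseWalks G d r (m + n) x, f (l.take m) * g (l.drop m) ≤
      ∑ b ∈ sparseWalks G d r m x,
        f b * ∑ l ∈ sparseWalks G d r n (b.getLastD x), g l := by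
  classical
  let split : List V → Σ _ : List V, List V := fun l => ⟨l.take m, l.drop m⟩
  have hsplit : Function.Injective split := fun a b h => by
    simp only [split, Sigma.mk.injEq, heq_eq_eq] at h
    rw [← List.take_append_drop m a, ← List.take_append_drop m b, h.1, h.2]
  simp only [Finset.mul_sum]
  rw [Finset.sum_sigma', ← Finset.sum_image (f := fun p => f p.1 * g p.2) hsplit.injOn]
  refine Finset.sum_le_sum_of_subset_of_nonneg (Finset.image_subset_iff.2 fun l hl => ?_)
    fun p _ _ => mul_nonneg (hf _) (hg _)
  exact Finset.mem_sigma.2 ⟨take_mem_sparseWalks hl, drop_mem_sparseWalks hl⟩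

theorem card_sparseWalks_add_le [MulAction.IsPretransitive (G ≃g G) V] (m n : ℕ) (x : V) :
    (sparseWalks G d r (m + n) x).card ≤
      (sparseWalks G d r m x).card * (sparseWalks G d r n x).card := by
  have h := sum_take_mul_drop_le (G := G) (d := d) (r := r) (f := 1) (g := 1)
    (fun _ => zero_le_one) (fun _ => zero_le_one) m n x
  simpa [card_sparseWalks_eq n _ x, ← Nat.cast_mul] using h

open scoped Classical in
theorem sum_ite_isCrowded_le {s : ℝ} (hs : 0 ≤ s) (m : ℕ) (x : V) :
    ∑ b ∈ sparseWalks G d (r + 1) m x, (if IsCrowded G d (r + 1) b then s else 1) ≤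
      (sparseWalks G d r m x).card + s * (sparseWalks G d (r + 1) m x).card := by
  have hpoint : ∀ b ∈ sparseWalks G d (r + 1) m x,
      (if IsCrowded G d (r + 1) b then s else 1) ≤
        (if b ∈ sparseWalks G d r m x then (1 : ℝ) else 0) + s := fun b hb => by
    by_cases hcrowded : IsCrowded G d (r + 1) b
    · rw [if_pos hcrowded]
      split_ifs <;> linarith
    · rw [mem_sparseWalks] at hb
      rw [if_neg hcrowded,
        if_pos (mem_sparseWalks.2 ⟨hb.1, hb.2.1, hb.2.2.of_not_isCrowded hcrowded⟩)]
      linarith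
  have hcard : ((sparseWalks G d (r + 1) m x).filter (· ∈ sparseWalks G d r m x)).card ≤
      (sparseWalks G d r m x).card :=
    Finset.card_le_card fun b hb => (Finset.mem_filter.1 hb).2
  calc _ ≤ _ := Finset.sum_le_sum hpoint
    _ = ((sparseWalks G d (r + 1) m x).filter (· ∈ sparseWalks G d r m x)).card +
          s * (sparseWalks G d (r + 1) m x).card := by
        rw [Finset.sum_add_distrib, Finset.sum_boole, Finset.sum_const, nsmul_eq_mul, mul_comm s]
    _ ≤ _ := by gcongr

theorem sum_pow_crowdedBlocks_le [MulAction.IsPretransitive (G ≃g G) V] {s : ℝ} (hs : 0 ≤ s)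
    (m k : ℕ) (x : V) :
    ∑ l ∈ sparseWalks G d (r + 1) (m * k) x, s ^ crowdedBlocks G d (r + 1) m k l ≤
      ((sparseWalks G d r m x).card + s * (sparseWalks G d (r + 1) m x).card) ^ k := by
  classical
  induction k generalizing x with
  | zero =>
    have hsub : sparseWalks G d (r + 1) (m * 0) x ⊆ {[]} := fun l hl => by
      simpa using (mem_sparseWalks.1 hl).1
    simpa [crowdedBlocks] using Finset.card_le_card hsub
  | succ k ih =>
    set D : ℝ := (sparseWalks G d r m x).card + s * (sparseWalks G d (r + 1) m x).card with hD
    have htail (y : V) : ∑ l ∈ sparseWalks G d (r + 1) (m * k) y,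
        s ^ crowdedBlocks G d (r + 1) m k l ≤ D ^ k := by
      simpa only [hD, card_sparseWalks_eq m y x] using ih y
    simp only [pow_crowdedBlocks_succ, Nat.mul_succ, Nat.add_comm (m * k) m]
    calc _ ≤ ∑ b ∈ sparseWalks G d (r + 1) m x, (if IsCrowded G d (r + 1) b then s else 1) *
            ∑ l ∈ sparseWalks G d (r + 1) (m * k) (b.getLastD x),
              s ^ crowdedBlocks G d (r + 1) m k l :=
          sum_take_mul_drop_le (f := fun b => if IsCrowded G d (r + 1) b then s else 1)
            (fun b => by positivity) (fun l => by positivity) m (m * k) x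
      _ ≤ ∑ b ∈ sparseWalks G d (r + 1) m x,
            (if IsCrowded G d (r + 1) b then s else 1) * D ^ k := by
          gcongr with b
          exact htail _
      _ ≤ D * D ^ k := by
          rw [← Finset.sum_mul]
          gcongr
          exact sum_ite_isCrowded_le hs m x
      _ = D ^ (k + 1) := (pow_succ' D k).symm

theorem sparseWalks_zero_one (x : V) : sparseWalks G d 0 1 x = ∅ := by
  refine Finset.eq_empty_of_forall_notMem fun l hl => ?_
  obtain ⟨hlen, -, -, hsparse⟩ := mem_sparseWalks.1 hl
  obtain ⟨y, rfl⟩ := List.length_eq_one_iff.1 hlen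
  simpa [nearCount] using hsparse y

theorem exists_forall_nearCount_le [MulAction.IsPretransitive (G ≃g G) V] [Nonempty V] (d : ℕ) :
    ∃ R, ∀ (y : V) (l : List V), l.Nodup → nearCount G d y l ≤ R := by
  classical
  inhabit V
  have hfin := finite_setOf_edist_le G d (default : V)
  refine ⟨hfin.toFinset.card, fun y l hl => ?_⟩
  obtain ⟨e, rfl⟩ := MulAction.exists_smul_eq (G ≃g G) default y
  have hmap : nearCount G d (e default) l = nearCount G d default (l.map e.symm) := by
    rw [← nearCount_map_iso e.symm, e.symm_apply_apply]
  have hnodup : ((l.map e.symm).filter fun z => G.edist default z ≤ d).Nodup :=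
    (hl.map e.symm.injective).filter _
  change nearCount G d (e default) l ≤ _
  rw [hmap, nearCount, List.countP_eq_length_filter, ← List.toFinset_card_of_nodup hnodup]
  exact Finset.card_le_card fun z hz => by simp_all

theorem exists_forall_sawCount_le_card_sparseWalks [MulAction.IsPretransitive (G ≃g G) V]
    [Nonempty V] (d : ℕ) :
    ∃ R, ∀ n x, sawCount G x n ≤ (sparseWalks G d R n x).card := by
  obtain ⟨R, hR⟩ := exists_forall_nearCount_le (G := G) d
  refine ⟨R, fun n x => ?_⟩
  rw [sawCount_eq_card_selfAvoidingWalks]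
  refine Finset.card_le_card fun l hl => ?_
  obtain ⟨hlen, hc, hnd⟩ := (mem_selfAvoidingWalks G).1 hl
  exact mem_sparseWalks.2 ⟨hlen, hc, hnd.of_cons, fun y _ => hR y l hnd.of_cons⟩

end SparseWalks

section Pieces

variable {Q : Type*}

/-- A family of closed walks of length `ℓ`, with `c y` based at `y` and continued periodically. -/
structure IsCycleFamily (H : SimpleGraph Q) (ℓ : ℕ) (c : Q → ℕ → Q) : Prop where
  pos : 0 < ℓ
  zero : ∀ y, c y 0 = y
  adj : ∀ y i, H.Adj (c y i) (c y (i + 1))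
  periodic : ∀ y, Function.Periodic (c y) ℓ

/-- A walk which follows a cycle of the family `c` for at least one but less than two full turns,
starting and stopping anywhere on it. -/
def IsWinding (ℓ : ℕ) (c : Q → ℕ → Q) (W : List Q) : Prop :=
  ∃ y i h, h < ℓ ∧ W = (List.range' i (ℓ + h + 1)).map (c y)

/-- A single vertex or a winding. -/
def IsPiece (ℓ : ℕ) (c : Q → ℕ → Q) (W : List Q) : Prop :=
  (∃ x, W = [x]) ∨ IsWinding ℓ c W

/-- A sequence of pairwise disjoint pieces. Concatenating it loses no information
(`IsCycleFamily.eq_of_flatten_eq`). -/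
structure IsPieceList (ℓ : ℕ) (c : Q → ℕ → Q) (ws : List (List Q)) : Prop where
  isPiece : ∀ W ∈ ws, IsPiece ℓ c W
  pairwise_disjoint : ws.Pairwise List.Disjoint

variable {H : SimpleGraph Q} {ℓ : ℕ} {c : Q → ℕ → Q}

theorem IsWinding.lt_length {W : List Q} (hW : IsWinding ℓ c W) : ℓ < W.length := by
  obtain ⟨y, i, h, -, rfl⟩ := hW
  simp only [List.length_map, List.length_range']
  omega

theorem IsPiece.length_eq_one_or_lt {W : List Q} (hW : IsPiece ℓ c W) :
    W.length = 1 ∨ ℓ < W.length := by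
  rcases hW with ⟨x, rfl⟩ | hW
  · exact Or.inl rfl
  · exact Or.inr hW.lt_length

theorem IsPiece.ne_nil {W : List Q} (hW : IsPiece ℓ c W) : W ≠ [] := by
  rintro rfl
  simpa using hW.length_eq_one_or_lt

theorem IsPieceList.tail {W : List Q} {ws : List (List Q)} (h : IsPieceList ℓ c (W :: ws)) :
    IsPieceList ℓ c ws :=
  ⟨fun W' hW' => h.isPiece W' (List.mem_cons_of_mem _ hW'), h.pairwise_disjoint.of_cons⟩

namespace IsCycleFamily

theorem isChain_of_isWinding (hc : IsCycleFamily H ℓ c) {W : List Q} (hW : IsWinding ℓ c W) :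
    W.IsChain H.Adj := by
  obtain ⟨y, i, h, -, rfl⟩ := hW
  exact List.isChain_map_of_isChain (c y) (by rintro a _ rfl; exact hc.adj y a)
    (List.isChain_range' i _ 1)

/-- A winding revisits a vertex after one full turn. -/
theorem exists_mem_of_isPiece_append (hc : IsCycleFamily H ℓ c) {W u : List Q}
    (hW : IsPiece ℓ c W) (hWu : IsPiece ℓ c (W ++ u)) (hu : u ≠ []) : ∃ z ∈ u, z ∈ W := by
  have hpos := hc.pos
  have hWpos := List.length_pos_iff.2 hW.ne_nil
  have hupos := List.length_pos_iff.2 hu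
  rcases hWu with ⟨x, hx⟩ | ⟨y, i, h, -, hy⟩
  · have := congrArg List.length hx
    simp only [List.length_append, List.length_singleton] at this
    omega
  have hlen := congrArg List.length hy
  simp only [List.length_append, List.length_map, List.length_range'] at hlen
  have hget (j : ℕ) (hj : j < (W ++ u).length) : (W ++ u)[j] = c y (i + j) := by
    simp [hy]
  set p := max W.length ℓ
  have hpW : p - ℓ < W.length := by
    rcases hW.length_eq_one_or_lt with h1 | h1 <;> omega
  have hpu : p < (W ++ u).length := by
    rw [List.length_append]
    omega
  refine ⟨c y (i + p), ?_, ?_⟩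
  · rw [← hget p hpu, List.getElem_append_right (le_max_left _ _)]
    exact List.getElem_mem _
  · have hpℓ : p - ℓ + ℓ = p := by omega
    rw [← hpℓ, ← Nat.add_assoc, hc.periodic,
      ← hget _ (by omega), List.getElem_append_left hpW]
    exact List.getElem_mem _

theorem eq_nil_of_isPiece_append (hc : IsCycleFamily H ℓ c) {W u t : List Q}
    {ws : List (List Q)} (hws : IsPieceList ℓ c (W :: ws)) (hWu : IsPiece ℓ c (W ++ u))
    (hflat : ws.flatten = u ++ t) : u = [] := by
  by_contra hu
  obtain ⟨z, hzu, hzW⟩ :=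
    hc.exists_mem_of_isPiece_append (hws.isPiece W List.mem_cons_self) hWu hu
  have hz : z ∈ ws.flatten := hflat ▸ List.mem_append_left t hzu
  obtain ⟨W', hW', hzW'⟩ := List.mem_flatten.1 hz
  exact List.rel_of_pairwise_cons hws.pairwise_disjoint hW' hzW hzW'

theorem eq_of_flatten_eq (hc : IsCycleFamily H ℓ c) {ws ws' : List (List Q)}
    (hws : IsPieceList ℓ c ws) (hws' : IsPieceList ℓ c ws') (h : ws.flatten = ws'.flatten) :
    ws = ws' := by
  induction ws generalizing ws' with
  | nil =>
    cases ws' with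
    | nil => rfl
    | cons W' ws' => simp [(hws'.isPiece W' List.mem_cons_self).ne_nil] at h
  | cons W ws ih =>
    cases ws' with
    | nil => simp [(hws.isPiece W List.mem_cons_self).ne_nil] at h
    | cons W' ws' =>
      obtain rfl : W = W' := by
        rw [List.flatten_cons, List.flatten_cons] at h
        rcases List.append_eq_append_iff.1 h with ⟨u, rfl, hu⟩ | ⟨u, rfl, hu⟩
        · rw [hc.eq_nil_of_isPiece_append hws (hws'.isPiece _ List.mem_cons_self) hu,
            List.append_nil]
        · rw [hc.eq_nil_of_isPiece_append hws' (hws.isPiece _ List.mem_cons_self) hu,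
            List.append_nil]
      rw [ih hws.tail hws'.tail (by simpa using h)]

theorem exists_isWinding (hc : IsCycleFamily H ℓ c) (y : Q) {a b : Q} (ha : a ∈ Set.range (c y))
    (hb : b ∈ Set.range (c y)) :
    ∃ W, IsWinding ℓ c W ∧ W.head? = some a ∧ W.getLast? = some b ∧ W.length ≤ 2 * ℓ ∧
      ∀ x ∈ W, x ∈ Set.range (c y) := by
  obtain ⟨i, rfl⟩ := ha
  obtain ⟨j, rfl⟩ := hb
  set h := (j + i * (ℓ - 1)) % ℓ
  have hlt : h < ℓ := Nat.mod_lt _ hc.pos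
  have hmod : (i + (ℓ + h)) ≡ j [MOD ℓ] := by
    have hij : i + (j + i * (ℓ - 1)) = j + ℓ * i := by
      obtain ⟨n, rfl⟩ := Nat.exists_eq_add_of_le' hc.pos
      simp only [Nat.add_sub_cancel]
      ring
    calc i + (ℓ + h) = ℓ + (i + h) := by ring
      _ ≡ i + h [MOD ℓ] := by simp [Nat.ModEq]
      _ ≡ i + (j + i * (ℓ - 1)) [MOD ℓ] := (Nat.mod_modEq _ ℓ).add_left i
      _ ≡ j [MOD ℓ] := by rw [hij]; simp [Nat.ModEq]
  have hend : c y (i + (ℓ + h)) = c y j := by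
    rw [← (hc.periodic y).map_mod_nat, hmod, (hc.periodic y).map_mod_nat]
  refine ⟨(List.range' i (ℓ + h + 1)).map (c y), ⟨y, i, h, hlt, rfl⟩, ?_, ?_, ?_, ?_⟩
  · simp [List.range'_succ]
  · simp [List.range'_concat, hend]
  · simp only [List.length_map, List.length_range']
    omega
  · exact List.forall_mem_map.2 fun n _ => Set.mem_range_self n

theorem edist_le (hc : IsCycleFamily H ℓ c) (y : Q) (i : ℕ) : H.edist y (c y i) ≤ ℓ := by
  have hle (j : ℕ) : H.edist y (c y j) ≤ j := by
    induction j with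
    | zero => simp [hc.zero]
    | succ j ih =>
      rw [Nat.cast_succ]
      exact (H.edist_triangle (v := c y j)).trans
        (add_le_add ih (SimpleGraph.edist_eq_one_iff_adj.2 (hc.adj y j)).le)
  rw [← (hc.periodic y).map_mod_nat]
  exact (hle _).trans (by exact_mod_cast (Nat.mod_lt i hc.pos).le)

end IsCycleFamily

end Pieces

theorem exists_eq_append_of_exists_mem {α : Type*} {P : α → Prop} {l : List α}
    (h : ∃ x ∈ l, P x) :
    ∃ l₁ s l₂ a b, l = l₁ ++ s ++ l₂ ∧ s.head? = some a ∧ s.getLast? = some b ∧ P a ∧ P b ∧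
      (∀ x ∈ l₁, ¬P x) ∧ ∀ x ∈ l₂, ¬P x := by
  classical
  set t := l.dropWhile (¬P ·) with ht
  set s := t.rdropWhile (¬P ·) with hs
  have hsplit : s ++ t.rtakeWhile (¬P ·) = t := List.rdropWhile_append_rtakeWhile
  have ht_ne : t ≠ [] := by simpa [ht, List.dropWhile_eq_nil_iff] using h
  have hhead : P (t.head ht_ne) := by
    simpa [ht] using List.head_dropWhile_not (¬P ·) ht_ne
  have hs_ne : s ≠ [] := fun hnil => by
    have := List.rdropWhile_eq_nil_iff.1 hnil _ (List.head_mem ht_ne)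
    simp_all
  refine ⟨l.takeWhile (¬P ·), s, t.rtakeWhile (¬P ·), t.head ht_ne, s.getLast hs_ne, ?_, ?_,
    List.getLast?_eq_some_getLast hs_ne, hhead, ?_, fun x hx => ?_, fun x hx => ?_⟩
  · rw [List.append_assoc, hsplit, List.takeWhile_append_dropWhile]
  · rw [← List.head?_append_of_ne_nil s hs_ne, hsplit, List.head?_eq_some_head]
  · simpa [hs] using List.rdropWhile_last_not (¬P ·) t hs_ne
  · simpa using List.mem_takeWhile_imp hx
  · simpa using List.mem_rtakeWhile_imp hx

section Codes

variable {Q : Type*} (H : SimpleGraph Q) (ℓ : ℕ) (c : Q → ℕ → Q) (m : ℕ)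

/-- A winding `p.1` which can replace the segment `p.2`, of at most `m` vertices, of a walk. -/
structure IsDetour (p : List Q × List Q) : Prop where
  isWinding : IsWinding ℓ c p.1
  isChain : p.2.IsChain H.Adj
  head?_eq : p.2.head? = p.1.head?
  getLast?_eq : p.2.getLast? = p.1.getLast?
  length_le : p.2.length ≤ m

/-- An item of a code: an unchanged vertex or a detour. -/
def IsCodeItem (p : List Q × List Q) : Prop :=
  (∃ x, p = ([x], [x])) ∨ IsDetour H ℓ c m p

/-- A recipe for replacing segments of a walk by windings, such that the resulting pieces are
pairwise disjoint. The first entry of each item is the new piece, the second one the segment it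
replaces. -/
structure IsCode (κ : List (List Q × List Q)) : Prop where
  isCodeItem : ∀ p ∈ κ, IsCodeItem H ℓ c m p
  pairwise_disjoint : (κ.map Prod.fst).Pairwise List.Disjoint

/-- The walk resulting from the replacements described by `κ`. -/
def codeOutput (κ : List (List Q × List Q)) : List Q :=
  (κ.map Prod.fst).flatten

/-- The walk to which the replacements described by `κ` apply. -/
def codeSource (κ : List (List Q × List Q)) : List Q :=
  (κ.map Prod.snd).flatten

/-- The number of detours in `κ`. -/
def detourCount (κ : List (List Q × List Q)) : ℕ :=
  (κ.map Prod.fst).countP (1 < ·.length)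

/-- The code which changes nothing. -/
def plainCode (l : List Q) : List (List Q × List Q) :=
  l.map fun x => ([x], [x])

variable {H ℓ c m}

@[simp]
theorem codeOutput_cons (p : List Q × List Q) (κ : List (List Q × List Q)) :
    codeOutput (p :: κ) = p.1 ++ codeOutput κ := by
  simp [codeOutput]

@[simp]
theorem codeSource_cons (p : List Q × List Q) (κ : List (List Q × List Q)) :
    codeSource (p :: κ) = p.2 ++ codeSource κ := by
  simp [codeSource]

@[simp]
theorem codeOutput_append (κ κ' : List (List Q × List Q)) :
    codeOutput (κ ++ κ') = codeOutput κ ++ codeOutput κ' := by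
  simp [codeOutput]

@[simp]
theorem codeSource_append (κ κ' : List (List Q × List Q)) :
    codeSource (κ ++ κ') = codeSource κ ++ codeSource κ' := by
  simp [codeSource]

@[simp]
theorem detourCount_append (κ κ' : List (List Q × List Q)) :
    detourCount (κ ++ κ') = detourCount κ + detourCount κ' := by
  simp [detourCount]

@[simp]
theorem codeOutput_plainCode (l : List Q) : codeOutput (plainCode l) = l := by
  simp [codeOutput, plainCode, Function.comp_def, ← List.flatMap_def]

@[simp]
theorem codeSource_plainCode (l : List Q) : codeSource (plainCode l) = l := by
  simp [codeSource, plainCode, Function.comp_def, ← List.flatMap_def]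

@[simp]
theorem detourCount_plainCode (l : List Q) : detourCount (plainCode l) = 0 := by
  simp [detourCount, plainCode]

theorem IsCodeItem.isPiece {p : List Q × List Q} (hp : IsCodeItem H ℓ c m p) :
    IsPiece ℓ c p.1 := by
  rcases hp with ⟨x, rfl⟩ | hp
  · exact Or.inl ⟨x, rfl⟩
  · exact Or.inr hp.isWinding

theorem IsCodeItem.head?_eq {p : List Q × List Q} (hp : IsCodeItem H ℓ c m p) :
    p.2.head? = p.1.head? := by
  rcases hp with ⟨x, rfl⟩ | hp
  · rfl
  · exact hp.head?_eq

theorem IsCodeItem.getLast?_eq {p : List Q × List Q} (hp : IsCodeItem H ℓ c m p) :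
    p.2.getLast? = p.1.getLast? := by
  rcases hp with ⟨x, rfl⟩ | hp
  · rfl
  · exact hp.getLast?_eq

theorem IsCodeItem.snd_ne_nil {p : List Q × List Q} (hp : IsCodeItem H ℓ c m p) : p.2 ≠ [] := by
  rw [Ne, ← List.head?_eq_none_iff, hp.head?_eq, List.head?_eq_none_iff]
  exact hp.isPiece.ne_nil

theorem IsCycleFamily.isChain_of_isCodeItem (hc : IsCycleFamily H ℓ c) {p : List Q × List Q}
    (hp : IsCodeItem H ℓ c m p) : p.1.IsChain H.Adj := by
  rcases hp with ⟨x, rfl⟩ | hp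
  · exact List.isChain_singleton x
  · exact hc.isChain_of_isWinding hp.isWinding

theorem IsCode.isPieceList {κ : List (List Q × List Q)} (hκ : IsCode H ℓ c m κ) :
    IsPieceList ℓ c (κ.map Prod.fst) :=
  ⟨List.forall_mem_map.2 fun p hp => (hκ.isCodeItem p hp).isPiece, hκ.pairwise_disjoint⟩

theorem isCode_append {κ κ' : List (List Q × List Q)} (hκ : IsCode H ℓ c m κ)
    (hκ' : IsCode H ℓ c m κ') (h : (codeOutput κ).Disjoint (codeOutput κ')) :
    IsCode H ℓ c m (κ ++ κ') where
  isCodeItem p hp := (List.mem_append.1 hp).elim (hκ.isCodeItem p) (hκ'.isCodeItem p)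
  pairwise_disjoint := by
    rw [List.map_append, List.pairwise_append]
    exact ⟨hκ.pairwise_disjoint, hκ'.pairwise_disjoint, fun W hW W' hW' z hz hz' =>
      h (List.mem_flatten_of_mem hW hz) (List.mem_flatten_of_mem hW' hz')⟩

theorem isCode_plainCode {l : List Q} (hl : l.Nodup) : IsCode H ℓ c m (plainCode l) where
  isCodeItem := List.forall_mem_map.2 fun x _ => Or.inl ⟨x, rfl⟩
  pairwise_disjoint := by
    rw [plainCode, List.map_map, List.pairwise_map]
    exact hl.imp fun hne => by simpa using hne.symm

theorem IsDetour.isCode_insert {p : List Q × List Q} (hp : IsDetour H ℓ c m p) {l₁ l₂ : List Q}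
    (hnd : (l₁ ++ l₂).Nodup) (h₁ : l₁.Disjoint p.1) (h₂ : p.1.Disjoint l₂) :
    IsCode H ℓ c m (plainCode l₁ ++ p :: plainCode l₂) := by
  obtain ⟨hnd₁, hnd₂, hdisj⟩ := List.nodup_append'.1 hnd
  have htail : IsCode H ℓ c m (p :: plainCode l₂) :=
    isCode_append (κ := [p]) (κ' := plainCode l₂)
      ⟨List.forall_mem_singleton.2 (Or.inr hp), List.pairwise_singleton _ _⟩
      (isCode_plainCode hnd₂) (by rw [codeOutput_plainCode]; simpa [codeOutput] using h₂)
  exact isCode_append (isCode_plainCode hnd₁) htail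
    (by simpa using List.disjoint_append_right.2 ⟨h₁, hdisj⟩)

theorem IsDetour.detourCount_insert (hℓ : 0 < ℓ) {p : List Q × List Q}
    (hp : IsDetour H ℓ c m p) (l₁ l₂ : List Q) :
    detourCount (plainCode l₁ ++ p :: plainCode l₂) = 1 := by
  have hlen : 1 < p.1.length := Nat.lt_of_le_of_lt hℓ hp.isWinding.lt_length
  have hcons := detourCount_append [p] (plainCode l₂)
  rw [List.singleton_append] at hcons
  rw [detourCount_append, hcons, detourCount_plainCode, detourCount_plainCode]
  simp [detourCount, hlen]

theorem IsCode.eq_of_append_eq {κ₁ κ₂ κ₁' κ₂' : List (List Q × List Q)}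
    (hκ₁ : IsCode H ℓ c m κ₁) (hκ₁' : IsCode H ℓ c m κ₁')
    (hsource : codeSource κ₁ = codeSource κ₁') (h : κ₁ ++ κ₂ = κ₁' ++ κ₂') :
    κ₁ = κ₁' ∧ κ₂ = κ₂' := by
  have hnil {κ κ' : List (List Q × List Q)} (hκ : IsCode H ℓ c m (κ ++ κ'))
      (hs : codeSource κ = codeSource (κ ++ κ')) : κ' = [] := by
    by_contra hne
    obtain ⟨p, hp⟩ := List.exists_mem_of_ne_nil _ hne
    have hp_nil : p.2 = [] := by
      rw [codeSource_append, List.self_eq_append_right, codeSource, List.flatten_eq_nil_iff] at hs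
      exact hs _ (List.mem_map_of_mem hp)
    exact (hκ.isCodeItem p (List.mem_append_right κ hp)).snd_ne_nil hp_nil
  rcases List.append_eq_append_iff.1 h with ⟨κ, rfl, rfl⟩ | ⟨κ, rfl, rfl⟩
  · simp [hnil hκ₁' hsource]
  · simp [hnil hκ₁ hsource.symm]

theorem IsCycleFamily.isChain_codeOutput (hc : IsCycleFamily H ℓ c)
    {κ : List (List Q × List Q)} (hκ : ∀ p ∈ κ, IsCodeItem H ℓ c m p)
    (h : (codeSource κ).IsChain H.Adj) : (codeOutput κ).IsChain H.Adj := by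
  rw [codeSource, List.isChain_flatten (by simpa using fun W hp => (hκ _ hp).snd_ne_nil rfl),
    List.isChain_map] at h
  rw [codeOutput, List.isChain_flatten (by simpa using fun s hp => (hκ _ hp).isPiece.ne_nil rfl),
    List.isChain_map]
  refine ⟨List.forall_mem_map.2 fun p hp => hc.isChain_of_isCodeItem (hκ p hp),
    h.2.imp_of_mem_imp fun p q hp hq hpq => ?_⟩
  rwa [← (hκ p hp).getLast?_eq, ← (hκ q hq).head?_eq]

theorem IsCycleFamily.isChain_cons_codeOutput (hc : IsCycleFamily H ℓ c)
    {κ : List (List Q × List Q)} (hκ : IsCode H ℓ c m κ) {x : Q}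
    (h : (x :: codeSource κ).IsChain H.Adj) : (x :: codeOutput κ).IsChain H.Adj :=
  hc.isChain_codeOutput (κ := ([x], [x]) :: κ)
    (List.forall_mem_cons.2 ⟨Or.inl ⟨x, rfl⟩, hκ.isCodeItem⟩) h

theorem IsCycleFamily.exists_isCode_of_mem (hc : IsCycleFamily H ℓ c) {l : List Q}
    (hnd : l.Nodup) (hl : l.IsChain H.Adj) (hm : l.length ≤ m) {y : Q} (hy : y ∈ l) :
    ∃ κ, IsCode H ℓ c m κ ∧ codeSource κ = l ∧ detourCount κ = 1 ∧
      (codeOutput κ).length ≤ l.length + 2 * ℓ ∧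
      ∀ x ∈ codeOutput κ, x ∈ l ∨ x ∈ Set.range (c y) := by
  obtain ⟨l₁, s, l₂, a, b, rfl, ha, hb, hac, hbc, h₁, h₂⟩ :=
    exists_eq_append_of_exists_mem (P := (· ∈ Set.range (c y))) ⟨y, hy, 0, hc.zero y⟩
  obtain ⟨W, hW, hWa, hWb, hWlen, hWc⟩ := hc.exists_isWinding y hac hbc
  have hdetour : IsDetour H ℓ c m (W, s) :=
    ⟨hW, hl.left_of_append.right_of_append, ha.trans hWa.symm, hb.trans hWb.symm,
      (by simp only [List.length_append]; omega : s.length ≤ (l₁ ++ s ++ l₂).length).trans hm⟩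
  have hsub : (l₁ ++ l₂).Sublist (l₁ ++ s ++ l₂) := (List.sublist_append_left l₁ s).append_right l₂
  refine ⟨plainCode l₁ ++ (W, s) :: plainCode l₂,
    hdetour.isCode_insert (hnd.sublist hsub) (fun x hx hxW => h₁ x hx (hWc x hxW))
      fun x hxW hx => h₂ x hx (hWc x hxW),
    by simp, hdetour.detourCount_insert hc.pos l₁ l₂, ?_, fun x hx => ?_⟩
  · simp only [codeOutput_append, codeOutput_cons, codeOutput_plainCode, List.length_append]
    omega
  · simp only [codeOutput_append, codeOutput_cons, codeOutput_plainCode, List.mem_append] at hx ⊢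
    have := hWc x
    tauto

end Codes

section CodeWeights

variable {Q : Type*} {H : SimpleGraph Q} {ℓ : ℕ} {c : Q → ℕ → Q} {m r : ℕ}

/-- The weight of a code: the generating function weight of its output, discounted by a factor `u`
for each detour. -/
noncomputable def codeWeight (z u : ℝ) (κ : List (List Q × List Q)) : ℝ :=
  z ^ (codeOutput κ).length * u ^ detourCount κ

theorem codeWeight_append (z u : ℝ) (κ κ' : List (List Q × List Q)) :
    codeWeight z u (κ ++ κ') = codeWeight z u κ * codeWeight z u κ' := by
  simp only [codeWeight, codeOutput_append, detourCount_append, List.length_append, pow_add]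
  ring

theorem codeWeight_plainCode (z u : ℝ) (l : List Q) :
    codeWeight z u (plainCode l) = z ^ l.length := by
  simp [codeWeight]

theorem codeWeight_nonneg {z u : ℝ} (hz : 0 ≤ z) (hu : 0 ≤ u) (κ : List (List Q × List Q)) :
    0 ≤ codeWeight z u κ :=
  mul_nonneg (pow_nonneg hz _) (pow_nonneg hu _)

variable (H ℓ c r) in
/-- The vertices which may occur in the output of a code for `l` replacing a segment only near a
vertex with `r` entries of `l` in its vicinity. -/
def footprint (l : List Q) : Set Q :=
  {x | x ∈ l ∨ ∃ y ∈ l, r ≤ nearCount H (2 * ℓ) y l ∧ x ∈ Set.range (c y)}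

theorem footprint_mono {l₁ l₂ : List Q} (h : l₁.Sublist l₂) :
    footprint H ℓ c r l₁ ⊆ footprint H ℓ c r l₂ := by
  rintro x (hx | ⟨y, hy, hr, hx⟩)
  · exact Or.inl (h.subset hx)
  · exact Or.inr ⟨y, h.subset hy, hr.trans (nearCount_le_of_sublist h y), hx⟩

theorem IsCycleFamily.exists_edist_le_of_mem_footprint (hc : IsCycleFamily H ℓ c) {l : List Q}
    {x : Q} (hx : x ∈ footprint H ℓ c r l) :
    ∃ y ∈ l, H.edist y x ≤ ℓ ∧ (y = x ∨ r ≤ nearCount H (2 * ℓ) y l) := by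
  rcases hx with hx | ⟨y, hy, hr, i, rfl⟩
  · exact ⟨x, hx, by simp, Or.inl rfl⟩
  · exact ⟨y, hy, hc.edist_le y i, Or.inr hr⟩

theorem IsSparse.nearCount_lt {d : ℕ} {l b : List Q} {y z : Q} (hl : IsSparse H d r l)
    (hb : (z :: b).Subperm l) (hy : y ∈ l) (hz : H.edist y z ≤ d) : nearCount H d y b < r :=
  calc nearCount H d y b < nearCount H d y (z :: b) := by simp [nearCount, hz]
    _ ≤ nearCount H d y l := hb.countP_le _
    _ ≤ r := hl.2 y hy

theorem IsCycleFamily.disjoint_footprint (hc : IsCycleFamily H ℓ c) {b l : List Q}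
    (h : IsSparse H (2 * ℓ) r (b ++ l)) :
    Disjoint (footprint H ℓ c r b) (footprint H ℓ c r l) := by
  refine Set.disjoint_left.2 fun x hxb hxl => ?_
  obtain ⟨y, hy, hyx, hyr⟩ := hc.exists_edist_le_of_mem_footprint hxb
  obtain ⟨z, hz, hzx, hzr⟩ := hc.exists_edist_le_of_mem_footprint hxl
  have hyz : H.edist y z ≤ (2 * ℓ : ℕ) :=
    calc H.edist y z ≤ H.edist y x + H.edist z x := by
          rw [H.edist_comm (u := z)]
          exact H.edist_triangle
      _ ≤ ℓ + ℓ := add_le_add hyx hzx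
      _ = (2 * ℓ : ℕ) := by push_cast; ring
  have hsub_b : (z :: b).Subperm (b ++ l) :=
    ((List.singleton_sublist.2 hz).append_right b).subperm.trans List.perm_append_comm.subperm
  have hsub_l : (y :: l).Subperm (b ++ l) :=
    ((List.singleton_sublist.2 hy).append_right l).subperm
  rcases hyr with rfl | hyr
  · rcases hzr with rfl | hzr
    · exact (List.nodup_append'.1 h.1).2.2 hy hz
    · exact (h.nearCount_lt hsub_l (List.mem_append_right b hz)
        (by rwa [H.edist_comm])).not_ge hzr
  · exact (h.nearCount_lt hsub_b (List.mem_append_left l hy) hyz).not_ge hyr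

variable (H ℓ c m r) in
/-- A code for the walk `l`, whose output stays in the footprint of `l`. -/
structure IsCodeFor (l : List Q) (κ : List (List Q × List Q)) : Prop where
  isCode : IsCode H ℓ c m κ
  source_eq : codeSource κ = l
  output_subset : ∀ x ∈ codeOutput κ, x ∈ footprint H ℓ c r l

theorem isCodeFor_plainCode {l : List Q} (hl : l.Nodup) :
    IsCodeFor H ℓ c m r l (plainCode l) :=
  ⟨isCode_plainCode hl, codeSource_plainCode l, fun x hx => Or.inl (by simpa using hx)⟩

theorem IsCycleFamily.isCodeFor_append (hc : IsCycleFamily H ℓ c) {b l : List Q}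
    {κ κ' : List (List Q × List Q)} (hκ : IsCodeFor H ℓ c m r b κ)
    (hκ' : IsCodeFor H ℓ c m r l κ') (h : IsSparse H (2 * ℓ) r (b ++ l)) :
    IsCodeFor H ℓ c m r (b ++ l) (κ ++ κ') where
  isCode := isCode_append hκ.isCode hκ'.isCode fun x hx hx' =>
    Set.disjoint_left.1 (hc.disjoint_footprint h) (hκ.output_subset x hx)
      (hκ'.output_subset x hx')
  source_eq := by rw [codeSource_append, hκ.source_eq, hκ'.source_eq]
  output_subset x hx := by
    rcases List.mem_append.1 (codeOutput_append κ κ' ▸ hx) with hx | hx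
    · exact footprint_mono (List.sublist_append_left b l) (hκ.output_subset x hx)
    · exact footprint_mono (List.sublist_append_right b l) (hκ'.output_subset x hx)

variable {z u t : ℝ}

open scoped Classical in
theorem IsCycleFamily.exists_le_sum_codeWeight_block (hc : IsCycleFamily H ℓ c) (hz : 0 < z)
    (hz1 : z ≤ 1) (hu : 0 ≤ u) (ht : t ≤ 1 + z ^ (2 * ℓ) * u) {b : List Q} (hnd : b.Nodup)
    (hb : b.IsChain H.Adj) (hm : b.length = m) :
    ∃ K : Finset (List (List Q × List Q)), (∀ κ ∈ K, IsCodeFor H ℓ c m r b κ) ∧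
      z ^ m * (if IsCrowded H (2 * ℓ) r b then t else 1) ≤ ∑ κ ∈ K, codeWeight z u κ := by
  by_cases hcrowded : IsCrowded H (2 * ℓ) r b
  · obtain ⟨y, hy, hyr⟩ := hcrowded
    obtain ⟨κ, hκ, hsource, hcount, hlen, hout⟩ := hc.exists_isCode_of_mem hnd hb hm.le hy
    have hne : plainCode b ≠ κ := by
      rintro rfl
      simp at hcount
    have hweight : z ^ m * (z ^ (2 * ℓ) * u) ≤ codeWeight z u κ := by
      rw [codeWeight, hcount, pow_one, ← mul_assoc, ← pow_add]
      gcongr ?_ * u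
      exact pow_le_pow_of_le_one hz.le hz1 (hlen.trans_eq (by rw [hm]))
    refine ⟨{plainCode b, κ}, ?_, ?_⟩
    · have hκb : IsCodeFor H ℓ c m r b κ :=
        ⟨hκ, hsource, fun x hx => (hout x hx).imp_right fun hxc => ⟨y, hy, hyr, hxc⟩⟩
      simpa using ⟨isCodeFor_plainCode hnd, hκb⟩
    · rw [Finset.sum_pair hne, codeWeight_plainCode, hm, if_pos ⟨y, hy, hyr⟩]
      calc z ^ m * t ≤ z ^ m * (1 + z ^ (2 * ℓ) * u) := by gcongr
        _ ≤ z ^ m + codeWeight z u κ := by linarith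
  · refine ⟨{plainCode b}, by simpa using isCodeFor_plainCode hnd, ?_⟩
    rw [if_neg hcrowded, Finset.sum_singleton, codeWeight_plainCode, hm, mul_one]

open scoped Classical in
theorem IsCycleFamily.exists_le_sum_codeWeight (hc : IsCycleFamily H ℓ c) (hz : 0 < z)
    (hz1 : z ≤ 1) (hu : 0 ≤ u) (ht0 : 0 ≤ t) (ht : t ≤ 1 + z ^ (2 * ℓ) * u) (k : ℕ) {l : List Q}
    (hl : l.IsChain H.Adj) (hlen : l.length = m * k) (hsparse : IsSparse H (2 * ℓ) r l) :
    ∃ K : Finset (List (List Q × List Q)), (∀ κ ∈ K, IsCodeFor H ℓ c m r l κ) ∧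
      z ^ (m * k) * t ^ crowdedBlocks H (2 * ℓ) r m k l ≤ ∑ κ ∈ K, codeWeight z u κ := by
  induction k generalizing l with
  | zero =>
    refine ⟨{plainCode l}, by simpa using isCodeFor_plainCode hsparse.1, ?_⟩
    simp [crowdedBlocks, codeWeight_plainCode, hlen]
  | succ k ih =>
    have htake := hsparse.sublist (List.take_sublist m l)
    have hdrop := hsparse.sublist (List.drop_sublist m l)
    rw [Nat.mul_succ] at hlen
    obtain ⟨K₁, hK₁, hsum₁⟩ := hc.exists_le_sum_codeWeight_block (m := m) (r := r) hz hz1 hu ht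
      htake.1 (hl.take m) (by simp [hlen])
    obtain ⟨K₂, hK₂, hsum₂⟩ := ih (hl.drop m) (by simp [hlen]) hdrop
    have hinj : Set.InjOn (fun p => p.1 ++ p.2) (K₁ ×ˢ K₂ : Set (_ × _)) := fun p hp q hq h =>
      Prod.ext_iff.2 <| (hK₁ _ hp.1).isCode.eq_of_append_eq (hK₁ _ hq.1).isCode
        ((hK₁ _ hp.1).source_eq.trans (hK₁ _ hq.1).source_eq.symm) h
    refine ⟨(K₁ ×ˢ K₂).image fun p => p.1 ++ p.2, fun κ hκ => ?_, ?_⟩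
    · obtain ⟨⟨κ₁, κ₂⟩, hp, rfl⟩ := Finset.mem_image.1 hκ
      obtain ⟨hκ₁, hκ₂⟩ := Finset.mem_product.1 hp
      rw [← List.take_append_drop m l] at hsparse ⊢
      exact hc.isCodeFor_append (hK₁ _ hκ₁) (hK₂ _ hκ₂) hsparse
    · rw [Finset.sum_image (by simpa using hinj), Finset.sum_product]
      simp only [codeWeight_append]
      rw [← Finset.sum_mul_sum, pow_crowdedBlocks_succ, Nat.mul_succ, add_comm, pow_add,
        mul_mul_mul_comm]
      exact mul_le_mul hsum₁ hsum₂ (by positivity)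
        (Finset.sum_nonneg fun κ _ => codeWeight_nonneg hz.le hu κ)

variable [H.LocallyFinite] {M : ℕ}

theorem card_le_of_forall_isCodeItem (hℓ : 0 < ℓ) (hM : ∀ x, (walksUpTo H m x).card ≤ M)
    {W : List Q} {S : Finset (List Q)} (hS : ∀ s ∈ S, IsCodeItem H ℓ c m (W, s)) :
    S.card ≤ M ^ [W].countP (1 < ·.length) := by
  classical
  by_cases hW : 1 < W.length
  · obtain ⟨a, ha⟩ : ∃ a, W.head? = some a :=
      ⟨_, List.head?_eq_some_head (List.ne_nil_of_length_pos (by omega))⟩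
    have hsub : S ⊆ (walksUpTo H m a).image (a :: ·) := fun s hs => by
      rcases hS s hs with ⟨x, hx⟩ | hdetour
      · simp_all
      · obtain ⟨s', rfl⟩ := List.head?_eq_some_iff.1 (hdetour.head?_eq.trans ha)
        exact Finset.mem_image_of_mem _ ((mem_walksUpTo H).2
          ⟨(Nat.le_succ _).trans hdetour.length_le, hdetour.isChain⟩)
    simpa [hW] using (Finset.card_le_card hsub).trans (Finset.card_image_le.trans (hM a))
  · have hsub : S ⊆ {W} := fun s hs => by
      rcases hS s hs with ⟨x, hx⟩ | hdetour
      · simp_all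
      · exact absurd (Nat.lt_of_le_of_lt hℓ hdetour.isWinding.lt_length) hW
    simpa [hW] using Finset.card_le_card hsub

theorem card_le_of_forall_map_fst_eq (hℓ : 0 < ℓ) (hM : ∀ x, (walksUpTo H m x).card ≤ M)
    {ws : List (List Q)} {K : Finset (List (List Q × List Q))}
    (hK : ∀ κ ∈ K, (∀ p ∈ κ, IsCodeItem H ℓ c m p) ∧ κ.map Prod.fst = ws) :
    K.card ≤ M ^ ws.countP (1 < ·.length) := by
  classical
  induction ws generalizing K with
  | nil =>
    have hsub : K ⊆ {[]} := fun κ hκ => by simpa using (hK κ hκ).2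
    simpa using Finset.card_le_card hsub
  | cons W ws ih =>
    have hcons : ∀ κ ∈ K, ∃ s κ', κ = (W, s) :: κ' ∧ κ'.map Prod.fst = ws := fun κ hκ => by
      obtain ⟨⟨W, s⟩, κ', rfl, rfl, hκ'⟩ := List.map_eq_cons_iff.1 (hK κ hκ).2
      exact ⟨s, κ', rfl, hκ'⟩
    let segment : List (List Q × List Q) → List Q := fun κ => (κ.map Prod.snd).headD []
    have hsub : K ⊆ (K.image segment ×ˢ K.image List.tail).image fun p => (W, p.1) :: p.2 := by
      intro κ hκ
      obtain ⟨s, κ', rfl, -⟩ := hcons κ hκ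
      exact Finset.mem_image.2 ⟨(s, κ'), Finset.mem_product.2
        ⟨Finset.mem_image_of_mem segment hκ, Finset.mem_image_of_mem List.tail hκ⟩, rfl⟩
    have hsegment : (K.image segment).card ≤ M ^ [W].countP (1 < ·.length) := by
      refine card_le_of_forall_isCodeItem (c := c) hℓ hM (Finset.forall_mem_image.2 fun κ hκ => ?_)
      obtain ⟨s, κ', rfl, -⟩ := hcons κ hκ
      exact (hK _ hκ).1 _ List.mem_cons_self
    have htail : (K.image List.tail).card ≤ M ^ ws.countP (1 < ·.length) := by
      refine ih (Finset.forall_mem_image.2 fun κ hκ => ?_)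
      obtain ⟨s, κ', rfl, hκ'⟩ := hcons κ hκ
      exact ⟨fun p hp => (hK _ hκ).1 p (List.mem_cons_of_mem _ hp), hκ'⟩
    calc K.card ≤ (K.image segment).card * (K.image List.tail).card :=
          (Finset.card_le_card hsub).trans
            (Finset.card_image_le.trans_eq (Finset.card_product _ _))
      _ ≤ M ^ [W].countP (1 < ·.length) * M ^ ws.countP (1 < ·.length) :=
          Nat.mul_le_mul hsegment htail
      _ = M ^ (W :: ws).countP (1 < ·.length) := by
          rw [← pow_add, ← List.countP_append, List.singleton_append]

theorem IsCycleFamily.sum_inv_pow_detourCount_le (hc : IsCycleFamily H ℓ c)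
    (hM : ∀ x, (walksUpTo H m x).card ≤ M) {φ : List Q} {K : Finset (List (List Q × List Q))}
    (hK : ∀ κ ∈ K, IsCode H ℓ c m κ ∧ codeOutput κ = φ) :
    ∑ κ ∈ K, (M : ℝ)⁻¹ ^ detourCount κ ≤ 1 := by
  rcases K.eq_empty_or_nonempty with rfl | ⟨κ₀, hκ₀⟩
  · simp
  have hfst : ∀ κ ∈ K, κ.map Prod.fst = κ₀.map Prod.fst := fun κ hκ =>
    hc.eq_of_flatten_eq (hK κ hκ).1.isPieceList (hK κ₀ hκ₀).1.isPieceList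
      ((hK κ hκ).2.trans (hK κ₀ hκ₀).2.symm)
  have hcard : (K.card : ℝ) ≤ (M : ℝ) ^ detourCount κ₀ := by
    exact_mod_cast card_le_of_forall_map_fst_eq hc.pos hM fun κ hκ =>
      ⟨(hK κ hκ).1.isCodeItem, hfst κ hκ⟩
  calc ∑ κ ∈ K, (M : ℝ)⁻¹ ^ detourCount κ = ∑ _κ ∈ K, (M : ℝ)⁻¹ ^ detourCount κ₀ :=
        Finset.sum_congr rfl fun κ hκ => by rw [detourCount, hfst κ hκ, detourCount]
    _ = K.card / (M : ℝ) ^ detourCount κ₀ := by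
        rw [Finset.sum_const, nsmul_eq_mul, inv_pow, div_eq_mul_inv]
    _ ≤ 1 := div_le_one_of_le₀ hcard (by positivity)

open scoped Classical in
theorem IsCycleFamily.sum_codeWeight_le (hc : IsCycleFamily H ℓ c)
    (hM : ∀ x, (walksUpTo H m x).card ≤ M) (hz : 0 ≤ z) {K : Finset (List (List Q × List Q))}
    (hK : ∀ κ ∈ K, IsCode H ℓ c m κ) :
    ∑ κ ∈ K, codeWeight z (M : ℝ)⁻¹ κ ≤ ∑ φ ∈ K.image codeOutput, z ^ φ.length := by
  rw [← Finset.sum_fiberwise_of_maps_to fun κ hκ => Finset.mem_image_of_mem codeOutput hκ]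
  refine Finset.sum_le_sum fun φ _ => ?_
  calc ∑ κ ∈ K with codeOutput κ = φ, codeWeight z (M : ℝ)⁻¹ κ
      = z ^ φ.length * ∑ κ ∈ K with codeOutput κ = φ, (M : ℝ)⁻¹ ^ detourCount κ := by
        rw [Finset.mul_sum]
        exact Finset.sum_congr rfl fun κ hκ => by rw [codeWeight, (Finset.mem_filter.1 hκ).2]
    _ ≤ z ^ φ.length := mul_le_of_le_one_right (by positivity) <|
        hc.sum_inv_pow_detourCount_le hM fun κ hκ =>
          ⟨hK κ (Finset.mem_filter.1 hκ).1, (Finset.mem_filter.1 hκ).2⟩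

/-- Each sparse walk yields at least `t ^ crowdedBlocks` worth of codes, and no output gets a total
weight above one from the codes producing it. -/
theorem IsCycleFamily.pow_mul_sum_pow_crowdedBlocks_le (hc : IsCycleFamily H ℓ c)
    (hM : ∀ x, (walksUpTo H m x).card ≤ M) (hz : 0 < z) (hz1 : z ≤ 1) (ht0 : 0 ≤ t)
    (ht : t ≤ 1 + z ^ (2 * ℓ) * (M : ℝ)⁻¹) {x : Q} {C : ℝ}
    (hC : ∀ Φ : Finset (List Q), (∀ φ ∈ Φ, (x :: φ).IsChain H.Adj ∧
      ∃ ws, IsPieceList ℓ c ws ∧ ws.flatten = φ) → ∑ φ ∈ Φ, z ^ φ.length ≤ C) (k : ℕ) :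
    z ^ (m * k) * ∑ l ∈ sparseWalks H (2 * ℓ) r (m * k) x,
      t ^ crowdedBlocks H (2 * ℓ) r m k l ≤ C := by
  classical
  have hcodes : ∀ l ∈ sparseWalks H (2 * ℓ) r (m * k) x,
      ∃ K : Finset (List (List Q × List Q)), (∀ κ ∈ K, IsCodeFor H ℓ c m r l κ) ∧
        z ^ (m * k) * t ^ crowdedBlocks H (2 * ℓ) r m k l ≤
          ∑ κ ∈ K, codeWeight z (M : ℝ)⁻¹ κ := fun l hl => by
    rw [mem_sparseWalks] at hl
    exact hc.exists_le_sum_codeWeight hz hz1 (by positivity) ht0 ht k hl.2.1.tail hl.1 hl.2.2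
  choose! K hK hsum using hcodes
  have hdisj : (sparseWalks H (2 * ℓ) r (m * k) x : Set (List Q)).PairwiseDisjoint K :=
    fun l hl l' hl' hne => Finset.disjoint_left.2 fun κ hκ hκ' =>
      hne ((hK l hl κ hκ).source_eq.symm.trans (hK l' hl' κ hκ').source_eq)
  calc z ^ (m * k) * ∑ l ∈ sparseWalks H (2 * ℓ) r (m * k) x,
          t ^ crowdedBlocks H (2 * ℓ) r m k l
      ≤ ∑ l ∈ sparseWalks H (2 * ℓ) r (m * k) x, ∑ κ ∈ K l, codeWeight z (M : ℝ)⁻¹ κ := by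
        rw [Finset.mul_sum]
        exact Finset.sum_le_sum hsum
    _ = ∑ κ ∈ (sparseWalks H (2 * ℓ) r (m * k) x).biUnion K, codeWeight z (M : ℝ)⁻¹ κ :=
        (Finset.sum_biUnion hdisj).symm
    _ ≤ _ := hc.sum_codeWeight_le hM hz.le fun κ hκ => by
        obtain ⟨l, hl, hκl⟩ := Finset.mem_biUnion.1 hκ
        exact (hK l hl κ hκl).isCode
    _ ≤ C := hC _ <| Finset.forall_mem_image.2 fun κ hκ => by
        obtain ⟨l, hl, hκl⟩ := Finset.mem_biUnion.1 hκ
        obtain ⟨hcode, hsource, -⟩ := hK l hl κ hκl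
        exact ⟨hc.isChain_cons_codeOutput hcode (hsource ▸ (mem_sparseWalks.1 hl).2.1),
          κ.map Prod.fst, hcode.isPieceList, rfl⟩

end CodeWeights

section Growth

theorem rpow_one_div_natCast_le_iff {a q : ℝ} (ha : 0 ≤ a) (hq : 0 ≤ q) {n : ℕ} (hn : 1 ≤ n) :
    a ^ ((1 : ℝ) / n) ≤ q ↔ a ≤ q ^ n := by
  rw [one_div, Real.rpow_inv_le_iff_of_pos ha hq (by exact_mod_cast hn), Real.rpow_natCast]

theorem exists_forall_le_const_mul_pow {a : ℕ → ℝ} (ha : ∀ n, 0 ≤ a n)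
    (hsub : ∀ m n, a (m + n) ≤ a m * a n) {q : ℝ} (hq : 0 < q) {m : ℕ} (hm : 1 ≤ m)
    (ham : a m ≤ q ^ m) : ∃ C, ∀ n, a n ≤ C * q ^ n := by
  set C := ∑ j ∈ Finset.range m, a j / q ^ j
  have hC : ∀ j < m, a j ≤ C * q ^ j := fun j hj => by
    rw [← div_le_iff₀ (by positivity)]
    exact Finset.single_le_sum (f := fun j => a j / q ^ j)
      (fun i _ => div_nonneg (ha i) (by positivity)) (Finset.mem_range.2 hj)
  have hblock : ∀ k, ∀ j < m, a (m * k + j) ≤ C * q ^ (m * k + j) := fun k j hj => by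
    induction k with
    | zero => simpa using hC j hj
    | succ k ih =>
      calc a (m * (k + 1) + j) = a (m + (m * k + j)) := by ring_nf
        _ ≤ a m * a (m * k + j) := hsub _ _
        _ ≤ q ^ m * (C * q ^ (m * k + j)) := by gcongr; exact ha _
        _ = C * q ^ (m * (k + 1) + j) := by ring
  refine ⟨C, fun n => ?_⟩
  simpa only [Nat.div_add_mod] using hblock (n / m) (n % m) (Nat.mod_lt _ hm)

theorem limsup_rpow_one_div_lt {a : ℕ → ℝ} (ha : ∀ n, 0 ≤ a n) {C q μ : ℝ} (hq : 0 < q)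
    (hqμ : q < μ) (h : ∀ n, a n ≤ C * q ^ n) :
    limsup (fun n : ℕ => a n ^ ((1 : ℝ) / n)) atTop < μ := by
  obtain ⟨q', hqq', hq'μ⟩ := exists_between hqμ
  have hq' : 0 < q' := hq.trans hqq'
  have htendsto : Tendsto (fun n : ℕ => C * (q / q') ^ n) atTop (nhds 0) := by
    simpa using (tendsto_pow_atTop_nhds_zero_of_lt_one (by positivity)
      ((div_lt_one hq').2 hqq')).const_mul C
  have hroot : ∀ᶠ n : ℕ in atTop, a n ^ ((1 : ℝ) / n) ≤ q' := by
    filter_upwards [htendsto.eventually_le_const zero_lt_one, eventually_ge_atTop 1] with n hn h1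
    rw [div_pow, ← mul_div_assoc, div_le_one (by positivity)] at hn
    exact (rpow_one_div_natCast_le_iff (ha n) hq'.le h1).2 ((h n).trans hn)
  have hbdd : IsCoboundedUnder (· ≤ ·) atTop fun n : ℕ => a n ^ ((1 : ℝ) / n) :=
    IsCoboundedUnder.of_frequently_ge (a := 0)
      (Frequently.of_forall fun n => Real.rpow_nonneg (ha n) _)
  exact (limsup_le_of_le hbdd hroot).trans_lt hq'μ

theorem exists_pos_lt_and_le_pow {b μ : ℝ} (hμ : 0 < μ) {m : ℕ} (hb : b < μ ^ m) :
    ∃ q, 0 < q ∧ q < μ ∧ b ≤ q ^ m := by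
  have htendsto : Tendsto (fun q : ℝ => q ^ m) (nhdsWithin μ (Set.Iio μ)) (nhds (μ ^ m)) :=
    ((continuous_pow m).tendsto μ).mono_left nhdsWithin_le_nhds
  obtain ⟨q, hbq, hq⟩ :=
    ((htendsto.eventually_const_le hb).and (Ioo_mem_nhdsLT hμ)).exists
  exact ⟨q, hq.1, hq.2, hbq⟩

theorem summable_mul_pow_of_tendsto_rpow {a : ℕ → ℝ} (ha : ∀ n, 0 ≤ a n) {μ z : ℝ}
    (hμ : 0 < μ) (h : Tendsto (fun n : ℕ => a n ^ ((1 : ℝ) / n)) atTop (nhds μ)) (hz : 0 < z)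
    (hzμ : z * μ < 1) : Summable fun n => a n * z ^ n := by
  obtain ⟨q, hμq, hqz⟩ := exists_between ((lt_div_iff₀' hz).2 hzμ)
  have hq : 0 < q := hμ.trans hμq
  have hqz1 : q * z < 1 := (lt_div_iff₀ hz).1 hqz
  refine Summable.of_norm_bounded_eventually_nat
    (summable_geometric_of_lt_one (by positivity) hqz1) ?_
  filter_upwards [h.eventually_le_const hμq, eventually_ge_atTop 1] with n hn h1
  rw [rpow_one_div_natCast_le_iff (ha n) hq.le h1] at hn
  rw [Real.norm_of_nonneg (mul_nonneg (ha n) (by positivity)), mul_pow]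
  gcongr

theorem exists_one_lt_pow_mul_lt {D U L t : ℝ} (hDL : D < L) (ht : 1 < t) :
    ∃ θ > 1, ∃ p : ℕ, θ ^ p * (D + t⁻¹ ^ p * U) < L := by
  have hp_tendsto : Tendsto (fun p : ℕ => D + t⁻¹ ^ p * U) atTop (nhds D) := by
    simpa using ((tendsto_pow_atTop_nhds_zero_of_lt_one (by positivity)
      (inv_lt_one_of_one_lt₀ ht)).mul_const U).const_add D
  obtain ⟨p, hp⟩ := (hp_tendsto.eventually_lt_const hDL).exists
  have hθ_tendsto : Tendsto (fun θ : ℝ => θ ^ p * (D + t⁻¹ ^ p * U)) (nhdsWithin 1 (Set.Ioi 1))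
      (nhds (D + t⁻¹ ^ p * U)) := by
    have hcont : Continuous fun θ : ℝ => θ ^ p * (D + t⁻¹ ^ p * U) := by fun_prop
    simpa using (hcont.tendsto 1).mono_left nhdsWithin_le_nhds
  obtain ⟨θ, hθ, hθ1⟩ :=
    ((hθ_tendsto.eventually_lt_const hp).and self_mem_nhdsWithin).exists
  exact ⟨θ, hθ1, p, hθ⟩

theorem one_le_inv_mul_add_pow_mul_inv_pow {y ρ : ℝ} (hy : 0 < y) (hρ : 0 < ρ) (p : ℕ) :
    1 ≤ ρ⁻¹ * y + ρ ^ p * y⁻¹ ^ p := by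
  rcases le_total ρ y with h | h
  · have : 1 ≤ ρ⁻¹ * y := by rwa [inv_mul_eq_div, one_le_div hρ]
    exact this.trans (le_add_of_nonneg_right (by positivity))
  · have : 1 ≤ ρ ^ p * y⁻¹ ^ p := by
      rw [← mul_pow, ← div_eq_mul_inv]
      exact one_le_pow₀ ((one_le_div hy).2 h)
    exact this.trans (le_add_of_nonneg_left (by positivity))

theorem eventually_const_mul_pow_add_pow_lt_pow (C : ℝ) {A E L : ℝ} (hA : 0 ≤ A) (hAL : A < L)
    (hE : 0 ≤ E) (hEL : E < L) : ∀ᶠ k : ℕ in atTop, C * A ^ k + E ^ k < L ^ k := by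
  have hL : 0 < L := hA.trans_lt hAL
  have htendsto : Tendsto (fun k : ℕ => C * (A / L) ^ k + (E / L) ^ k) atTop (nhds 0) := by
    have hpow {B : ℝ} (hB : 0 ≤ B) (hBL : B < L) :=
      tendsto_pow_atTop_nhds_zero_of_lt_one (div_nonneg hB hL.le) ((div_lt_one hL).2 hBL)
    simpa using ((hpow hA hAL).const_mul C).add (hpow hE hEL)
  filter_upwards [htendsto.eventually_lt_const zero_lt_one] with k hk
  rwa [div_pow, div_pow, ← mul_div_assoc, ← add_div, div_lt_one (by positivity)] at hk

/-- A bound on the moment of order `-p` of `t ^ g` forbids `t ^ g` from being small too often, one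
on the first moment from being large too often. -/
theorem exists_card_lt_pow_of_sum_pow_le {α : Type*} {S : ℕ → Finset α} {g : ℕ → α → ℕ}
    {D U L t : ℝ} (hD : 0 ≤ D) (hU : 0 ≤ U) (hDL : D < L) (ht : 1 < t)
    (hsmall : ∀ s ≥ 0, ∀ k, ∑ l ∈ S k, s ^ g k l ≤ (D + s * U) ^ k)
    (hlarge : ∀ θ > 1, ∃ C, ∀ k, ∑ l ∈ S k, t ^ g k l ≤ C * (θ * L) ^ k) :
    ∃ k, 1 ≤ k ∧ ((S k).card : ℝ) < L ^ k := by
  obtain ⟨θ, hθ1, p, hθ⟩ := exists_one_lt_pow_mul_lt (U := U) hDL ht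
  obtain ⟨θ', hθ'1, hθ'⟩ := exists_between hθ1
  obtain ⟨C, hC⟩ := hlarge θ' hθ'1
  have hL : 0 < L := hD.trans_lt hDL
  have hθ0 : 0 < θ := by positivity
  set A := θ⁻¹ * (θ' * L)
  set E := θ ^ p * (D + t⁻¹ ^ p * U)
  have hAL : A < L := by
    calc A = θ⁻¹ * θ' * L := (mul_assoc _ _ _).symm
      _ < L := mul_lt_of_lt_one_left hL (by rwa [inv_mul_lt_one₀ hθ0])
  have hbound (k : ℕ) : ((S k).card : ℝ) ≤ C * A ^ k + E ^ k := by
    calc ((S k).card : ℝ) = ∑ _l ∈ S k, (1 : ℝ) := by simp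
      _ ≤ ∑ l ∈ S k, ((θ ^ k)⁻¹ * t ^ g k l + (θ ^ k) ^ p * (t ^ g k l)⁻¹ ^ p) :=
          Finset.sum_le_sum fun l _ =>
            one_le_inv_mul_add_pow_mul_inv_pow (by positivity) (by positivity) p
      _ = (θ ^ k)⁻¹ * ∑ l ∈ S k, t ^ g k l + (θ ^ k) ^ p * ∑ l ∈ S k, (t⁻¹ ^ p) ^ g k l := by
          rw [Finset.sum_add_distrib, Finset.mul_sum, Finset.mul_sum]
          simp only [← inv_pow, ← pow_mul, mul_comm p]
      _ ≤ (θ ^ k)⁻¹ * (C * (θ' * L) ^ k) + (θ ^ k) ^ p * (D + t⁻¹ ^ p * U) ^ k := by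
          gcongr
          · exact hC k
          · exact hsmall _ (by positivity) k
      _ = C * A ^ k + E ^ k := by
          simp only [A, E, mul_pow, inv_pow, ← pow_mul, mul_comm p]
          ring
  obtain ⟨k, hk, hk1⟩ := ((eventually_const_mul_pow_add_pow_lt_pow C (by positivity) hAL
    (by positivity) hθ).and (eventually_ge_atTop 1)).exists
  exact ⟨k, hk1, (hbound k).trans_lt hk⟩

theorem exists_lt_inv_and_inv_pow_le {μ θ : ℝ} (hμ : 0 < μ) (hθ : 1 < θ) (m : ℕ) :
    ∃ z, (2 * μ)⁻¹ < z ∧ z < μ⁻¹ ∧ (z ^ m)⁻¹ ≤ θ * μ ^ m := by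
  have htendsto : Tendsto (fun z : ℝ => (z ^ m)⁻¹) (nhdsWithin μ⁻¹ (Set.Iio μ⁻¹))
      (nhds (μ ^ m)) := by
    have hcont : ContinuousAt (fun z : ℝ => (z ^ m)⁻¹) μ⁻¹ := by fun_prop (disch := positivity)
    simpa using hcont.tendsto.mono_left nhdsWithin_le_nhds
  have hlt : μ ^ m < θ * μ ^ m := lt_mul_of_one_lt_left (by positivity) hθ
  obtain ⟨z, hzm, hz⟩ := ((htendsto.eventually_le_const hlt).and
    (Ioo_mem_nhdsLT (inv_strictAnti₀ hμ (by linarith : μ < 2 * μ)))).exists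
  exact ⟨z, hz.1, hz.2, hzm⟩

variable {Q : Type*} {H : SimpleGraph Q} [H.LocallyFinite]
  [MulAction.IsPretransitive (H ≃g H) Q] {ℓ : ℕ} {c : Q → ℕ → Q}

theorem IsCycleFamily.exists_card_sparseWalks_succ_lt (hc : IsCycleFamily H ℓ c) {μ : ℝ}
    (hμ : 1 ≤ μ) {x : Q}
    (hbound : ∀ z, 0 < z → z * μ < 1 → ∃ C, ∀ Φ : Finset (List Q),
      (∀ φ ∈ Φ, (x :: φ).IsChain H.Adj ∧ ∃ ws, IsPieceList ℓ c ws ∧ ws.flatten = φ) →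
        ∑ φ ∈ Φ, z ^ φ.length ≤ C)
    {r m : ℕ} (hm : 1 ≤ m) (hlt : ((sparseWalks H (2 * ℓ) r m x).card : ℝ) < μ ^ m) :
    ∃ n, 1 ≤ n ∧ ((sparseWalks H (2 * ℓ) (r + 1) n x).card : ℝ) < μ ^ n := by
  have hμ0 : 0 < μ := by positivity
  set M := (walksUpTo H m x).card
  have hM (y : Q) : (walksUpTo H m y).card ≤ M :=
    (card_eq_of_forall_map_mem H (map_mem_walksUpTo H) y x).le
  have hM0 : 0 < M := Finset.card_pos.2 ⟨[], by simp⟩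
  set t : ℝ := 1 + (2 * μ)⁻¹ ^ (2 * ℓ) * (M : ℝ)⁻¹
  have ht : 1 < t := lt_add_of_pos_right 1 (by positivity)
  have hlarge : ∀ θ > 1, ∃ C, ∀ k, ∑ l ∈ sparseWalks H (2 * ℓ) (r + 1) (m * k) x,
      t ^ crowdedBlocks H (2 * ℓ) (r + 1) m k l ≤ C * (θ * μ ^ m) ^ k := fun θ hθ => by
    obtain ⟨z, hz, hzμ, hzθ⟩ := exists_lt_inv_and_inv_pow_le hμ0 hθ m
    have hz0 : 0 < z := lt_trans (by positivity) hz
    obtain ⟨C, hC⟩ := hbound z hz0 ((lt_div_iff₀ hμ0).1 (by rwa [one_div]))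
    have hC0 : 0 ≤ C := by simpa using hC ∅ (by simp)
    refine ⟨C, fun k => ?_⟩
    have htz : t ≤ 1 + z ^ (2 * ℓ) * (M : ℝ)⁻¹ := by simp only [t]; gcongr
    have hsum := hc.pow_mul_sum_pow_crowdedBlocks_le (r := r + 1) hM hz0
      (hzμ.le.trans (inv_le_one_of_one_le₀ hμ)) (by positivity) htz hC k
    calc _ ≤ C * (z ^ (m * k))⁻¹ := by
          rwa [← div_eq_mul_inv, le_div_iff₀' (by positivity)]
      _ = C * ((z ^ m)⁻¹) ^ k := by rw [pow_mul, inv_pow]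
      _ ≤ C * (θ * μ ^ m) ^ k := by gcongr
  obtain ⟨k, hk, hcard⟩ := exists_card_lt_pow_of_sum_pow_le (Nat.cast_nonneg _) (Nat.cast_nonneg _)
    hlt ht (fun s hs k => sum_pow_crowdedBlocks_le hs m k x) hlarge
  exact ⟨m * k, Nat.mul_pos hm hk, by rwa [pow_mul]⟩

theorem IsCycleFamily.exists_card_sparseWalks_lt (hc : IsCycleFamily H ℓ c) {μ : ℝ} (hμ : 1 ≤ μ)
    {x : Q}
    (hbound : ∀ z, 0 < z → z * μ < 1 → ∃ C, ∀ Φ : Finset (List Q),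
      (∀ φ ∈ Φ, (x :: φ).IsChain H.Adj ∧ ∃ ws, IsPieceList ℓ c ws ∧ ws.flatten = φ) →
        ∑ φ ∈ Φ, z ^ φ.length ≤ C) (r : ℕ) :
    ∃ n, 1 ≤ n ∧ ((sparseWalks H (2 * ℓ) r n x).card : ℝ) < μ ^ n := by
  induction r with
  | zero =>
    refine ⟨1, le_rfl, ?_⟩
    rw [sparseWalks_zero_one, pow_one, Finset.card_empty, Nat.cast_zero]
    positivity
  | succ r ih =>
    obtain ⟨m, hm, hlt⟩ := ih
    exact hc.exists_card_sparseWalks_succ_lt hμ hbound hm hlt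

theorem IsCycleFamily.limsup_sawCount_lt (hc : IsCycleFamily H ℓ c) {μ : ℝ} (hμ : 1 ≤ μ) {x : Q}
    (hbound : ∀ z, 0 < z → z * μ < 1 → ∃ C, ∀ Φ : Finset (List Q),
      (∀ φ ∈ Φ, (x :: φ).IsChain H.Adj ∧ ∃ ws, IsPieceList ℓ c ws ∧ ws.flatten = φ) →
        ∑ φ ∈ Φ, z ^ φ.length ≤ C) :
    limsup (fun n : ℕ => (sawCount H x n : ℝ) ^ ((1 : ℝ) / n)) atTop < μ := by
  have : Nonempty Q := ⟨x⟩
  obtain ⟨R, hR⟩ := exists_forall_sawCount_le_card_sparseWalks (G := H) (2 * ℓ)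
  obtain ⟨m, hm, hlt⟩ := hc.exists_card_sparseWalks_lt hμ hbound R
  obtain ⟨q, hq, hqμ, hmq⟩ := exists_pos_lt_and_le_pow (by positivity) hlt
  obtain ⟨C, hC⟩ := exists_forall_le_const_mul_pow
    (a := fun n => ((sparseWalks H (2 * ℓ) R n x).card : ℝ)) (fun n => Nat.cast_nonneg _)
    (fun m n => by exact_mod_cast card_sparseWalks_add_le m n x) hq hm hmq
  exact limsup_rpow_one_div_lt (fun n => Nat.cast_nonneg _) hq hqμ fun n =>
    (Nat.cast_le.2 (hR n x)).trans (hC n)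

end Growth

section Counting

variable {V : Type*} {G : SimpleGraph V} [G.LocallyFinite]
  [MulAction.IsPretransitive (G ≃g G) V]

theorem card_le_degree_mul_sawCount {S : Finset (List V)} {x : V} {n : ℕ}
    (hS : ∀ l ∈ S, l.length = n + 1 ∧ (x :: l).IsChain G.Adj ∧ l.Nodup) :
    S.card ≤ sawCount G x n * G.degree x := by
  classical
  refine Finset.card_le_mul_card_image_of_maps_to (f := fun l => l.headD x) (fun l hl => ?_) _
    fun y _ => ?_
  · obtain ⟨hlen, hchain, -⟩ := hS l hl
    obtain ⟨y, l, rfl⟩ := List.exists_cons_of_length_eq_add_one hlen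
    simpa using (List.isChain_cons_cons.1 hchain).1
  · rw [sawCount_eq G x y, sawCount_eq_card_selfAvoidingWalks]
    have hcons : ∀ l ∈ S, l.headD x = y → l = y :: l.tail := by
      rintro l hl rfl
      obtain ⟨y, l, rfl⟩ := List.exists_cons_of_length_eq_add_one (hS l hl).1
      rfl
    refine Finset.card_le_card_of_injOn List.tail (fun l hl => ?_) fun l hl l' hl' h => ?_
    · obtain ⟨hl, hy⟩ := Finset.mem_filter.1 hl
      obtain ⟨hlen, hchain, hnodup⟩ := hS l hl
      rw [hcons l hl hy] at hlen hchain hnodup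
      rw [Finset.mem_coe, mem_selfAvoidingWalks]
      exact ⟨by simpa using hlen, (List.isChain_cons_cons.1 hchain).2, hnodup⟩
    · obtain ⟨hl, hy⟩ := Finset.mem_filter.1 hl
      obtain ⟨hl', hy'⟩ := Finset.mem_filter.1 hl'
      rw [hcons l hl hy, hcons l' hl' hy', h]

theorem sum_pow_length_le {z : ℝ} (hz : 0 < z) {x : V}
    (hsum : Summable fun n => (sawCount G x n : ℝ) * z ^ n) {S : Finset (List V)}
    (hS : ∀ l ∈ S, (x :: l).IsChain G.Adj ∧ l.Nodup) :
    ∑ l ∈ S, z ^ l.length ≤ 1 + z * G.degree x * ∑' n, (sawCount G x n : ℝ) * z ^ n := by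
  set N := S.sup List.length
  have hempty : ({l ∈ S | l.length = 0}).card ≤ 1 := Finset.card_le_one.2 fun l hl l' hl' => by
    rw [List.length_eq_zero_iff.1 (Finset.mem_filter.1 hl).2,
      List.length_eq_zero_iff.1 (Finset.mem_filter.1 hl').2]
  have hsucc (n : ℕ) : ({l ∈ S | l.length = n + 1}).card ≤ sawCount G x n * G.degree x :=
    card_le_degree_mul_sawCount fun l hl =>
      ⟨(Finset.mem_filter.1 hl).2, hS l (Finset.mem_filter.1 hl).1⟩
  calc ∑ l ∈ S, z ^ l.length
      = ∑ n ∈ Finset.range (N + 1), ({l ∈ S | l.length = n}).card * z ^ n := by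
        rw [← Finset.sum_fiberwise_of_maps_to (fun l hl =>
          Finset.mem_range_succ_iff.2 (Finset.le_sup (f := List.length) hl))]
        refine Finset.sum_congr rfl fun n _ => ?_
        rw [Finset.sum_congr rfl fun l hl => by rw [(Finset.mem_filter.1 hl).2],
          Finset.sum_const, nsmul_eq_mul]
    _ ≤ 1 + ∑ n ∈ Finset.range N, ((sawCount G x n * G.degree x : ℕ) : ℝ) * z ^ (n + 1) := by
        rw [Finset.sum_range_succ', pow_zero, mul_one, add_comm]
        gcongr with n
        · exact_mod_cast hempty
        · exact hsucc n
    _ = 1 + z * G.degree x * ∑ n ∈ Finset.range N, (sawCount G x n : ℝ) * z ^ n := by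
        rw [Finset.mul_sum]
        congr! 2 with n
        push_cast
        ring
    _ ≤ 1 + z * G.degree x * ∑' n, (sawCount G x n : ℝ) * z ^ n := by
        gcongr
        exact hsum.sum_le_tsum _ fun n _ => by positivity

end Counting

section Coverings

variable {V Q : Type*} {G : SimpleGraph V} {H : SimpleGraph Q} {π : V → Q}

theorem nodup_of_map_eq_flatten {ℓ : ℕ} {c : Q → ℕ → Q}
    (hwinding : ∀ w : List V, w.IsChain G.Adj → IsWinding ℓ c (w.map π) → w.Nodup)
    {ws : List (List Q)} (hws : IsPieceList ℓ c ws) {w : List V} (hw : w.IsChain G.Adj)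
    (h : w.map π = ws.flatten) : w.Nodup := by
  induction ws generalizing w with
  | nil => simp_all
  | cons W ws ih =>
    obtain ⟨w₁, w₂, rfl, rfl, h₂⟩ := List.map_eq_append_iff.1 h
    refine List.nodup_append'.2 ⟨?_, ih hws.tail hw.right_of_append h₂, ?_⟩
    · rcases hws.isPiece _ List.mem_cons_self with ⟨x, hx⟩ | hW
      · obtain ⟨y, rfl⟩ := List.length_eq_one_iff.1 (by simpa using congrArg List.length hx)
        exact List.nodup_singleton y
      · exact hwinding w₁ hw.left_of_append hW
    · intro x hx₁ hx₂
      obtain ⟨W', hW', hxW'⟩ := List.mem_flatten.1 (h₂ ▸ List.mem_map_of_mem (f := π) hx₂)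
      exact List.rel_of_pairwise_cons hws.pairwise_disjoint hW' (List.mem_map_of_mem hx₁) hxW'

/-- A map of graphs is a covering if it is bijective on the neighbourhood of every vertex. -/
def IsCovering (G : SimpleGraph V) (H : SimpleGraph Q) (π : V → Q) : Prop :=
  ∀ u, Set.BijOn π (G.neighborSet u) (H.neighborSet (π u))

namespace IsCovering

theorem adj (hπ : IsCovering G H π) {u w : V} (h : G.Adj u w) : H.Adj (π u) (π w) :=
  (hπ u).mapsTo h

theorem adj_iff (hπ : IsCovering G H π) {u w : V} :
    H.Adj (π u) (π w) ↔ ∃ x, G.Adj u x ∧ π x = π w :=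
  ⟨fun h => (hπ u).surjOn h, fun ⟨_, hx, h⟩ => h ▸ hπ.adj hx⟩

theorem adj_iff_of_comp_eq (hπ : IsCovering G H π) (hsurj : π.Surjective) {γ : G ≃g G} {e : Q ≃ Q}
    (he : ∀ x, e (π x) = π (γ x)) {a b : Q} : H.Adj (e a) (e b) ↔ H.Adj a b := by
  obtain ⟨u, rfl⟩ := hsurj a
  obtain ⟨w, rfl⟩ := hsurj b
  rw [he, he, hπ.adj_iff, hπ.adj_iff, γ.surjective.exists]
  simp only [γ.map_adj_iff, ← he, e.injective.eq_iff]

theorem finite_neighborSet [G.LocallyFinite] (hπ : IsCovering G H π) (u : V) :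
    (H.neighborSet (π u)).Finite := by
  rw [← (hπ u).image_eq]
  exact (Set.toFinite _).image π

theorem exists_isChain_map_eq (hπ : IsCovering G H π) {φ : List Q} {u : V}
    (hφ : (π u :: φ).IsChain H.Adj) : ∃ w : List V, (u :: w).IsChain G.Adj ∧ w.map π = φ := by
  induction φ generalizing u with
  | nil => exact ⟨[], by simp⟩
  | cons y φ ih =>
    rw [List.isChain_cons_cons] at hφ
    obtain ⟨x, hx, rfl⟩ := (hπ u).surjOn hφ.1
    obtain ⟨w, hw, rfl⟩ := ih hφ.2
    exact ⟨x :: w, List.isChain_cons_cons.2 ⟨hx, hw⟩, rfl⟩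

theorem eq_of_map_eq (hπ : IsCovering G H π) {w w' : List V} {u : V}
    (hw : (u :: w).IsChain G.Adj) (hw' : (u :: w').IsChain G.Adj) (h : w.map π = w'.map π) :
    w = w' := by
  induction w generalizing w' u with
  | nil => simpa using h
  | cons x w ih =>
    cases w' with
    | nil => simp at h
    | cons x' w' =>
      rw [List.isChain_cons_cons] at hw hw'
      rw [List.map_cons, List.map_cons, List.cons.injEq] at h
      obtain rfl : x = x' := (hπ u).injOn hw.1 hw'.1 h.1
      rw [ih hw.2 hw'.2 h.2]

theorem eq_of_map_eq_of_apply_eq (hπ : IsCovering G H π) (hconn : G.Connected) {α : G ≃g G}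
    (hα : ∀ u, π (α u) = π u) {u : V} (hu : α u = u) (w : V) : α w = w := by
  obtain ⟨p⟩ := hconn u w
  induction p with
  | nil => exact hu
  | @cons u x _ h _ ih =>
    exact ih ((hπ u).injOn (by simpa [hu] using α.map_adj_iff.2 h) h (hα x))

theorem exists_sum_pow_length_le [G.LocallyFinite] [MulAction.IsPretransitive (G ≃g G) V]
    (hπ : IsCovering G H π) {ℓ : ℕ} {c : Q → ℕ → Q}
    (hwinding : ∀ w : List V, w.IsChain G.Adj → IsWinding ℓ c (w.map π) → w.Nodup)
    {v : V} {z : ℝ} (hz : 0 < z) (hsum : Summable fun n => (sawCount G v n : ℝ) * z ^ n) :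
    ∃ C, ∀ Φ : Finset (List Q),
      (∀ φ ∈ Φ, (π v :: φ).IsChain H.Adj ∧ ∃ ws, IsPieceList ℓ c ws ∧ ws.flatten = φ) →
        ∑ φ ∈ Φ, z ^ φ.length ≤ C := by
  classical
  refine ⟨1 + z * G.degree v * ∑' n, (sawCount G v n : ℝ) * z ^ n, fun Φ hΦ => ?_⟩
  choose! lift hchain hmap using fun φ hφ => hπ.exists_isChain_map_eq (hΦ φ hφ).1
  have hinj : Set.InjOn lift Φ := Set.LeftInvOn.injOn hmap
  have hsaw : ∀ w ∈ Φ.image lift, (v :: w).IsChain G.Adj ∧ w.Nodup := by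
    refine Finset.forall_mem_image.2 fun φ hφ => ⟨hchain φ hφ, ?_⟩
    obtain ⟨ws, hws, hflatten⟩ := (hΦ φ hφ).2
    exact nodup_of_map_eq_flatten hwinding hws (hchain φ hφ).tail
      ((hmap φ hφ).trans hflatten.symm)
  calc ∑ φ ∈ Φ, z ^ φ.length = ∑ w ∈ Φ.image lift, z ^ w.length := by
        rw [Finset.sum_image hinj]
        refine Finset.sum_congr rfl fun φ hφ => ?_
        rw [← List.length_map (as := lift φ) π, hmap φ hφ]
    _ ≤ _ := sum_pow_length_le hz hsum hsaw

end IsCovering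

end Coverings

section Axes

variable {V Q : Type*} {G : SimpleGraph V} {H : SimpleGraph Q} {π : V → Q} {ℓ : ℕ}

/-- A walk of `G` lying over a cycle of length `ℓ` of the base graph and not closing up after a
full turn of it. -/
structure IsAxis (G : SimpleGraph V) (π : V → Q) (ℓ : ℕ) (F : ℕ → V) : Prop where
  pos : 0 < ℓ
  adj : ∀ j, G.Adj (F j) (F (j + 1))
  periodic : Function.Periodic (π ∘ F) ℓ
  injOn : Set.InjOn (π ∘ F) (Set.Iio ℓ)
  ne : ∀ j, F (j + ℓ) ≠ F j

theorem IsAxis.comp {F : ℕ → V} (hF : IsAxis G π ℓ F) {γ : G ≃g G}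
    (hγ : ∀ u w, π (γ u) = π (γ w) ↔ π u = π w) : IsAxis G π ℓ (γ ∘ F) where
  pos := hF.pos
  adj j := γ.map_adj_iff.2 (hF.adj j)
  periodic j := (hγ _ _).2 (hF.periodic j)
  injOn _ hi _ hj h := hF.injOn hi hj ((hγ _ _).1 h)
  ne j := γ.injective.ne (hF.ne j)

theorem IsAxis.injOn_Ico {F : ℕ → V} (hF : IsAxis G π ℓ F) (i : ℕ) :
    Set.InjOn F (Set.Ico i (i + 2 * ℓ)) := by
  have key : ∀ j k, j < k → k < j + 2 * ℓ → F j ≠ F k := fun j k hjk hk h => by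
    have hmod : j % ℓ = k % ℓ := by
      refine hF.injOn (Nat.mod_lt j hF.pos) (Nat.mod_lt k hF.pos) ?_
      rw [hF.periodic.map_mod_nat, hF.periodic.map_mod_nat, Function.comp, Function.comp, h]
    obtain ⟨q, hq⟩ : ℓ ∣ k - j := (Nat.modEq_iff_dvd' hjk.le).1 hmod
    obtain rfl : q = 1 := by
      have : q < 2 := lt_of_mul_lt_mul_left (a := ℓ) (by omega) (Nat.zero_le ℓ)
      have : q ≠ 0 := by rintro rfl; omega
      omega
    obtain rfl : k = j + ℓ := by omega
    exact hF.ne j h.symm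
  intro j hj k hk h
  rcases lt_trichotomy j k with hjk | hjk | hjk
  · exact absurd h (key j k hjk (by have := hj.1; have := hk.2; omega))
  · exact hjk
  · exact absurd h.symm (key k j hjk (by have := hk.1; have := hj.2; omega))

/-- The walk `f 0, …, f ℓ` followed by its successive translates by `α`. -/
def translates (α : G ≃g G) (ℓ : ℕ) (f : ℕ → V) (j : ℕ) : V := (α ^ (j / ℓ)) (f (j % ℓ))

theorem translates_of_lt (α : G ≃g G) (f : ℕ → V) {j : ℕ} (hj : j < ℓ) :
    translates α ℓ f j = f j := by
  simp [translates, Nat.div_eq_of_lt hj, Nat.mod_eq_of_lt hj]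

theorem translates_add_self (α : G ≃g G) (hℓ : 0 < ℓ) (f : ℕ → V) (j : ℕ) :
    translates α ℓ f (j + ℓ) = α (translates α ℓ f j) := by
  simp only [translates, Nat.add_div_right _ hℓ, Nat.add_mod_right, pow_succ', RelIso.mul_apply]

theorem translates_mul_add {α : G ≃g G} {f : ℕ → V} (hα : α (f 0) = f ℓ) (q : ℕ) {r : ℕ}
    (hr : r ≤ ℓ) (hℓ : 0 < ℓ) : translates α ℓ f (ℓ * q + r) = (α ^ q) (f r) := by
  rcases hr.lt_or_eq with hr | rfl
  · rw [translates, Nat.mul_add_div hℓ, Nat.div_eq_of_lt hr, Nat.mul_add_mod,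
      Nat.mod_eq_of_lt hr, add_zero]
  · rw [← Nat.mul_succ, translates, Nat.mul_div_cancel_left _ hℓ, Nat.mul_mod_right, pow_succ,
      RelIso.mul_apply, hα]

theorem IsCovering.isAxis_translates (hπ : IsCovering G H π) (hconn : G.Connected) (hℓ : 0 < ℓ)
    {α : G ≃g G} (hα : ∀ x, π (α x) = π x) {f : ℕ → V} (hf : ∀ j < ℓ, G.Adj (f j) (f (j + 1)))
    (hαf : α (f 0) = f ℓ) (hne : f 0 ≠ f ℓ) (hinj : Set.InjOn (π ∘ f) (Set.Iio ℓ)) :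
    IsAxis G π ℓ (translates α ℓ f) where
  pos := hℓ
  adj j := by
    have hlt : j % ℓ < ℓ := Nat.mod_lt j hℓ
    rw [← Nat.div_add_mod j ℓ, add_assoc, translates_mul_add hαf _ hlt.le hℓ,
      translates_mul_add hαf _ hlt hℓ]
    exact (α ^ (j / ℓ)).map_adj_iff.2 (hf _ hlt)
  periodic j := by
    rw [Function.comp, Function.comp, translates_add_self α hℓ, hα]
  injOn i hi j hj h := by
    rw [Function.comp, Function.comp, translates_of_lt α f hi, translates_of_lt α f hj] at h
    exact hinj hi hj h
  ne j h := by
    rw [translates_add_self α hℓ] at h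
    exact hne ((hπ.eq_of_map_eq_of_apply_eq hconn hα h (f 0)).symm.trans hαf)

theorem exists_walk_injOn_of_not_injective (hconn : G.Connected) (hπ : ¬ π.Injective) :
    ∃ (ℓ : ℕ) (f : ℕ → V), 0 < ℓ ∧ (∀ j < ℓ, G.Adj (f j) (f (j + 1))) ∧ f 0 ≠ f ℓ ∧
      π (f 0) = π (f ℓ) ∧ Set.InjOn (π ∘ f) (Set.Iio ℓ) := by
  obtain ⟨u₀, w₀, h₀⟩ := Function.not_injective_iff.1 hπ
  obtain ⟨⟨u, w⟩, ⟨huw, hne⟩, hmin⟩ := (measure fun p : V × V => G.dist p.1 p.2).wf.has_min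
    {p | π p.1 = π p.2 ∧ p.1 ≠ p.2} ⟨(u₀, w₀), h₀⟩
  obtain ⟨p, hp, hlen⟩ := hconn.exists_path_of_dist u w
  have hdist : ∀ i j, i ≤ j → G.dist (p.getVert i) (p.getVert j) ≤ j - i := fun i j hij => by
    have h := (SimpleGraph.dist_le ((p.drop i).take (j - i))).trans_eq
      (SimpleGraph.Walk.take_length ..)
    rw [SimpleGraph.Walk.drop_getVert, Nat.add_sub_cancel' hij] at h
    exact h.trans (min_le_left _ _)
  have key : ∀ i j, i < j → j < p.length → π (p.getVert i) ≠ π (p.getVert j) :=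
    fun i j hij hj h => by
      refine hmin (p.getVert i, p.getVert j) ⟨h, fun heq => hij.ne ?_⟩ ?_
      · exact hp.getVert_injOn (hij.trans hj).le hj.le heq
      · exact (hdist i j hij.le).trans_lt (by dsimp only; omega)
  refine ⟨p.length, p.getVert, ?_, fun j hj => p.adj_getVert_succ hj, by simpa using hne,
    by simpa using huw, fun i hi j hj h => ?_⟩
  · rw [hlen]
    exact hconn.pos_dist_of_ne hne
  · rcases lt_trichotomy i j with hij | hij | hij
    · exact absurd h (key i j hij hj)
    · exact hij
    · exact absurd h.symm (key j i hij hi)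

/-- A covering is regular if its deck transformations act transitively on each fibre. -/
structure IsRegularCovering (G : SimpleGraph V) (H : SimpleGraph Q) (π : V → Q) : Prop where
  isCovering : IsCovering G H π
  exists_deck : ∀ u w, π u = π w → ∃ α : G ≃g G, (∀ x, π (α x) = π x) ∧ α u = w

namespace IsRegularCovering

theorem exists_isAxis (hπ : IsRegularCovering G H π) (hconn : G.Connected)
    (hinj : ¬ π.Injective) : ∃ ℓ F, IsAxis G π ℓ F := by
  obtain ⟨ℓ, f, hℓ, hf, hne, heq, hf_inj⟩ := exists_walk_injOn_of_not_injective hconn hinj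
  obtain ⟨α, hα, hαf⟩ := hπ.exists_deck _ _ heq
  exact ⟨ℓ, _, hπ.isCovering.isAxis_translates hconn hℓ hα hf hαf hne hf_inj⟩

theorem isCycleFamily [Nonempty Q] (hπ : IsRegularCovering G H π) {F : Q → ℕ → V}
    (hF : ∀ y, IsAxis G π ℓ (F y)) (hF₀ : ∀ y, π (F y 0) = y) :
    IsCycleFamily H ℓ fun y => π ∘ F y where
  pos := (hF (Classical.arbitrary Q)).pos
  zero := hF₀
  adj y i := hπ.isCovering.adj ((hF y).adj i)
  periodic y := (hF y).periodic

theorem nodup_of_isWinding (hπ : IsRegularCovering G H π) {F : Q → ℕ → V}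
    (hF : ∀ y, IsAxis G π ℓ (F y)) {w : List V} (hw : w.IsChain G.Adj)
    (hwinding : IsWinding ℓ (fun y => π ∘ F y) (w.map π)) : w.Nodup := by
  obtain ⟨y, i, h, hh, hmap⟩ := hwinding
  cases w with
  | nil => exact List.nodup_nil
  | cons x w =>
    rw [List.range'_succ, List.map_cons, List.map_cons, List.cons.injEq] at hmap
    obtain ⟨β, hβ, rfl⟩ := hπ.exists_deck _ _ hmap.1.symm
    have hlift : β (F y i) :: w = (List.range' i (ℓ + h + 1)).map (β ∘ F y) := by
      have hchain : ((List.range' i (ℓ + h + 1)).map (β ∘ F y)).IsChain G.Adj :=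
        List.isChain_map_of_isChain _
          (fun a b (hab : b = a + 1) => hab ▸ β.map_adj_iff.2 ((hF y).adj a))
          (List.isChain_range' i (ℓ + h + 1) 1)
      rw [List.range'_succ, List.map_cons] at hchain ⊢
      refine congrArg _ (hπ.isCovering.eq_of_map_eq hw hchain ?_)
      rw [hmap.2, List.map_map]
      exact List.map_congr_left fun j _ => (hβ (F y j)).symm
    rw [hlift]
    refine List.Nodup.map_on (fun j hj k hk hjk => ?_) List.nodup_range'
    rw [List.mem_range'_1] at hj hk
    exact (hF y).injOn_Ico i (by constructor <;> omega) (by constructor <;> omega)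
      (β.injective hjk)

theorem limsup_sawCount_lt [Infinite V] [G.LocallyFinite] (hπ : IsRegularCovering G H π)
    (hconn : G.Connected) (hsurj : π.Surjective) (hinj : ¬ π.Injective)
    (htrans : ∀ u w, ∃ (γ : G ≃g G) (e : H ≃g H), (∀ x, e (π x) = π (γ x)) ∧ γ u = w)
    {v : V} {μ : ℝ}
    (hμ : Tendsto (fun n : ℕ => (sawCount G v n : ℝ) ^ ((1 : ℝ) / n)) atTop (nhds μ)) :
    limsup (fun n : ℕ => (sawCount H (π v) n : ℝ) ^ ((1 : ℝ) / n)) atTop < μ := by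
  have : Nonempty Q := ⟨π v⟩
  have hG : MulAction.IsPretransitive (G ≃g G) V := ⟨fun u w =>
    let ⟨γ, _, _, h⟩ := htrans u w
    ⟨γ, h⟩⟩
  have hH : MulAction.IsPretransitive (H ≃g H) Q := ⟨hsurj.forall₂.2 fun u w =>
    let ⟨_, e, he, h⟩ := htrans u w
    ⟨e, (he u).trans (congrArg π h)⟩⟩
  have hfinite : ∀ y, (H.neighborSet y).Finite :=
    hsurj.forall.2 hπ.isCovering.finite_neighborSet
  let : H.LocallyFinite := fun y => (hfinite y).fintype
  have hμ₁ : 1 ≤ μ := ge_of_tendsto' hμ fun n =>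
    Real.one_le_rpow (by exact_mod_cast one_le_sawCount G hconn v n) (by positivity)
  obtain ⟨ℓ, F, hF⟩ := hπ.exists_isAxis hconn hinj
  choose γ e he hγ using fun y => htrans (F 0) (Function.surjInv hsurj y)
  have hFγ (y : Q) : IsAxis G π ℓ (γ y ∘ F) :=
    hF.comp fun u w => by rw [← he, ← he, (e y).injective.eq_iff]
  have hc := hπ.isCycleFamily hFγ fun y => by
    rw [Function.comp, hγ, Function.surjInv_eq hsurj]
  exact hc.limsup_sawCount_lt hμ₁ fun z hz hzμ =>
    hπ.isCovering.exists_sum_pow_length_le (fun w hw => hπ.nodup_of_isWinding hFγ hw) hz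
      (summable_mul_pow_of_tendsto_rpow (fun n => Nat.cast_nonneg _) (by positivity) hμ hz hzμ)

end IsRegularCovering

end Axes

section Quotients

variable {V : Type*} {G : SimpleGraph V} {Γ A : Subgroup (Equiv.Perm V)}

theorem mk_orbitRel_eq_iff {u w : V} :
    Quotient.mk (MulAction.orbitRel A V) u = Quotient.mk (MulAction.orbitRel A V) w ↔
      ∃ α ∈ A, α w = u := by
  rw [Quotient.eq, MulAction.orbitRel_apply, MulAction.mem_orbit_iff, Subtype.exists]
  simp only [exists_prop, Subgroup.mk_smul, Equiv.Perm.smul_def]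

theorem quotGraph_adj_mk_iff {u w : V} :
    (quotGraph G A).Adj (Quotient.mk _ u) (Quotient.mk _ w) ↔
      Quotient.mk (MulAction.orbitRel A V) u ≠ Quotient.mk _ w ∧
        ∃ α ∈ A, ∃ β ∈ A, G.Adj (α u) (β w) := by
  rw [quotGraph, SimpleGraph.fromRel_adj, and_congr_right_iff]
  simp only [mk_orbitRel_eq_iff]
  refine fun _ => ⟨?_, ?_⟩
  · rintro (⟨_, _, h, ⟨α, hα, rfl⟩, β, hβ, rfl⟩ | ⟨_, _, h, ⟨β, hβ, rfl⟩, α, hα, rfl⟩)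
    exacts [⟨α, hα, β, hβ, h⟩, ⟨α, hα, β, hβ, h.symm⟩]
  · rintro ⟨α, hα, β, hβ, h⟩
    exact Or.inl ⟨_, _, h, ⟨α, hα, rfl⟩, β, hβ, rfl⟩

theorem isCovering_mk_quotGraph (hA : ∀ α ∈ A, ∀ u w : V, G.Adj (α u) (α w) ↔ G.Adj u w)
    (hL : ∀ (u w : V) (p : G.Walk u w), p.IsPath → (p.length = 1 ∨ p.length = 2) →
      Quotient.mk (MulAction.orbitRel A V) u ≠ Quotient.mk (MulAction.orbitRel A V) w) :
    IsCovering G (quotGraph G A) (Quotient.mk _) := by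
  refine fun u => ⟨fun w (h : G.Adj u w) => ?_,
    fun w (h : G.Adj u w) w' (h' : G.Adj u w') heq => ?_, Quotient.forall.2 fun w h => ?_⟩
  · refine quotGraph_adj_mk_iff.2 ⟨hL u w h.toWalk ?_ (Or.inl rfl), 1, A.one_mem, 1, A.one_mem, h⟩
    exact SimpleGraph.Walk.IsPath.of_adj h
  · by_contra hne
    refine hL w w' (SimpleGraph.Walk.cons h.symm h'.toWalk) ?_ (Or.inr rfl) heq
    simp [SimpleGraph.Adj.toWalk, h'.ne, h.ne', hne]
  · obtain ⟨-, α, hα, β, hβ, h⟩ := quotGraph_adj_mk_iff.1 h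
    refine ⟨(α⁻¹ * β) w, ?_, mk_orbitRel_eq_iff.2 ⟨_, A.mul_mem (A.inv_mem hα) hβ, rfl⟩⟩
    rw [SimpleGraph.mem_neighborSet, ← hA α hα]
    simpa using h

theorem isRegularCovering_mk_quotGraph (hA : ∀ α ∈ A, ∀ u w : V, G.Adj (α u) (α w) ↔ G.Adj u w)
    (hL : ∀ (u w : V) (p : G.Walk u w), p.IsPath → (p.length = 1 ∨ p.length = 2) →
      Quotient.mk (MulAction.orbitRel A V) u ≠ Quotient.mk (MulAction.orbitRel A V) w) :
    IsRegularCovering G (quotGraph G A) (Quotient.mk _) where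
  isCovering := isCovering_mk_quotGraph hA hL
  exists_deck u w h := by
    obtain ⟨α, hα, rfl⟩ := mk_orbitRel_eq_iff.1 h.symm
    exact ⟨⟨α, hA α hα _ _⟩, fun x => mk_orbitRel_eq_iff.2 ⟨α, hα, rfl⟩, rfl⟩

theorem not_injective_mk_orbitRel (hA : ∃ α ∈ A, α ≠ 1) :
    ¬ (Quotient.mk (MulAction.orbitRel A V)).Injective := fun hinj => by
  obtain ⟨α, hα, hne⟩ := hA
  exact hne (Equiv.ext fun u => hinj (mk_orbitRel_eq_iff.2 ⟨α, hα, rfl⟩))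

theorem mk_orbitRel_apply_eq_iff (hAnormal : ∀ γ ∈ Γ, ∀ α ∈ A, γ * α * γ⁻¹ ∈ A) {γ : Equiv.Perm V}
    (hγ : γ ∈ Γ) {u w : V} :
    Quotient.mk (MulAction.orbitRel A V) (γ u) = Quotient.mk _ (γ w) ↔
      Quotient.mk (MulAction.orbitRel A V) u = Quotient.mk _ w := by
  have hmap : ∀ γ ∈ Γ, ∀ u w, Quotient.mk (MulAction.orbitRel A V) u = Quotient.mk _ w →
      Quotient.mk (MulAction.orbitRel A V) (γ u) = Quotient.mk _ (γ w) := fun γ hγ u w h => by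
    obtain ⟨α, hα, rfl⟩ := mk_orbitRel_eq_iff.1 h
    exact mk_orbitRel_eq_iff.2 ⟨_, hAnormal γ hγ α hα, by simp⟩
  exact ⟨fun h => by simpa using hmap _ (Γ.inv_mem hγ) _ _ h, hmap γ hγ u w⟩

theorem exists_quotGraph_iso
    (hcover : IsCovering G (quotGraph G A) (Quotient.mk _))
    (hAnormal : ∀ γ ∈ Γ, ∀ α ∈ A, γ * α * γ⁻¹ ∈ A) {γ : G ≃g G} (hγ : γ.toEquiv ∈ Γ) :
    ∃ e : quotGraph G A ≃g quotGraph G A, ∀ u, e (Quotient.mk _ u) = Quotient.mk _ (γ u) := by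
  let e := Quotient.congr (ra := MulAction.orbitRel A V) (rb := MulAction.orbitRel A V) γ.toEquiv
    fun u w => by
      rw [← Quotient.eq, ← Quotient.eq]
      exact (mk_orbitRel_apply_eq_iff hAnormal hγ).symm
  have he (u : V) : e (Quotient.mk _ u) = Quotient.mk _ (γ u) := rfl
  exact ⟨⟨e, hcover.adj_iff_of_comp_eq Quotient.mk_surjective he⟩, he⟩

end Quotients

/-- Strict inequality for quotient graphs: if `𝒜` is a non-trivial normal subgroup of a
transitively acting group `Γ` of automorphisms of the infinite, connected, locally finite
graph `G`, and every SAW of length 1 or 2 has endpoints in distinct `𝒜`-orbits, then the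
connective constant of `G/𝒜` is strictly smaller than that of `G`. -/
theorem quotient_graph_strict_inequality {V : Type*} (G : SimpleGraph V) [Infinite V]
    (hconn : G.Connected)
    (hlf : ∀ v : V, (G.neighborSet v).Finite)
    (Γ A : Subgroup (Equiv.Perm V))
    (hΓaut : ∀ γ ∈ Γ, ∀ u w : V, G.Adj (γ u) (γ w) ↔ G.Adj u w)
    (hΓtrans : ∀ u w : V, ∃ γ ∈ Γ, γ u = w)
    (hAΓ : A ≤ Γ)
    (hAnormal : ∀ γ ∈ Γ, ∀ α ∈ A, γ * α * γ⁻¹ ∈ A)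
    (hAnontriv : ∃ α ∈ A, α ≠ 1)
    (hL : ∀ (u w : V) (p : G.Walk u w), p.IsPath → (p.length = 1 ∨ p.length = 2) →
      Quotient.mk (MulAction.orbitRel A V) u ≠ Quotient.mk (MulAction.orbitRel A V) w)
    (v : V) (μ : ℝ)
    (hμ : Tendsto (fun n : ℕ => (sawCount G v n : ℝ) ^ ((1 : ℝ) / n)) atTop (nhds μ)) :
    limsup (fun n : ℕ =>
      (sawCount (quotGraph G A) (Quotient.mk (MulAction.orbitRel A V) v) n : ℝ) ^ ((1 : ℝ) / n))
      atTop < μ := by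
  let : G.LocallyFinite := fun u => (hlf u).fintype
  have hcover : IsRegularCovering G (quotGraph G A) (Quotient.mk (MulAction.orbitRel A V)) :=
    isRegularCovering_mk_quotGraph (fun α hα => hΓaut α (hAΓ hα)) hL
  refine hcover.limsup_sawCount_lt hconn Quotient.mk_surjective
    (not_injective_mk_orbitRel hAnontriv) (fun u w => ?_) hμ
  obtain ⟨γ, hγ, hγu⟩ := hΓtrans u w
  obtain ⟨e, he⟩ := exists_quotGraph_iso hcover.isCovering hAnormal
    (γ := ⟨γ, hΓaut γ hγ _ _⟩) hγ
  exact ⟨_, e, he, hγu⟩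
end

section
/- Let G be an infinite, connected, locally finite simple graph, let Γ be a subgroup of Aut(G) acting transitively on the vertex set V, and let 𝒜 be a non-trivial subgroup of Γ acting freely on V (i.e., if α ∈ 𝒜 fixes some vertex then α is the identity). Suppose the quotient graph G/𝒜 is vertex-transitive, and that there exists an integer l ≥ 3 such that G/𝒜 contains a cycle of length l but G contains no cycle of length l. Let σ̄_n(𝒜v) denote the number of n-step SAWs in G/𝒜 from the orbit 𝒜v. If σ_n(v)^{1/n} → μ as n → ∞ for a vertex v of G, then limsup_{n→∞} σ̄_n(𝒜v)^{1/n} < μ. -/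
open Filter

/-!
Let `H = G/𝒜`. A walk in `H` in which vertices repeat only at distance `l` lifts to a walk in `G`
with the same property, and the lift is self-avoiding because `G` has no cycle of length `l`. Hence
the generating series of such walks converges at every `ξ < 1/μ`.

On the other hand, such walks can be made from self-avoiding walks of `H` by inserting detours round
cycles of length `l`. Call a self-avoiding walk `k`-sparse if it visits each of these cycles at most
`k` times; every self-avoiding walk is `l`-sparse, and a single vertex is never `0`-sparse. Suppose
that for some `M` there are fewer than `μ ^ M` `k`-sparse walks of length `M`, but at least `μ ^ n`
`(k + 1)`-sparse ones of every length `n`. Cut the latter into pieces of length `M`. In most of them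
a positive proportion of the pieces are not `k`-sparse. Such a piece makes all the visits of the
walk to some cycle, so a detour round this cycle does not meet the other pieces. Inserting detours
at arbitrary subsets of these pieces gains an exponential factor, and the original walk and the
subset can be recovered from little extra information. So the generating series would diverge
at some `ξ < 1/μ`. By induction on `k`, the self-avoiding walks of some length `n` are fewer than
`μ ^ n`, up to the convention on the first vertex, and submultiplicativity does the rest.
-/

namespace SAW

open scoped Classical Topology

variable {X Y : Type*} {H : SimpleGraph X} {l k M : ℕ}

/-! ### Lists with controlled repetitions -/

/-- A list in which equal entries in different positions are exactly `l` positions apart. On a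
graph without cycles of length `l`, a walk with this property is self-avoiding. -/
def RepeatsOnlyAtDist (l : ℕ) (t : List X) : Prop :=
  ∀ i j (hj : j < t.length) (hi : i < j), t[i] = t[j] → j = i + l

namespace RepeatsOnlyAtDist

theorem of_nodup {t : List X} (h : t.Nodup) : RepeatsOnlyAtDist l t :=
  fun _ _ _ hij e => absurd (h.getElem_inj_iff.1 e) hij.ne

theorem append {s t : List X} (hs : RepeatsOnlyAtDist l s) (ht : RepeatsOnlyAtDist l t)
    (hst : s.Disjoint t) : RepeatsOnlyAtDist l (s ++ t) := by
  intro i j hj hij e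
  rw [List.length_append] at hj
  rw [List.getElem_append, List.getElem_append] at e
  split_ifs at e with hjs his
  · exact hs i j _ hij e
  · exact absurd (List.getElem_mem _) (e ▸ hst (List.getElem_mem _))
  · omega
  · have := ht _ _ _ (by omega) e
    omega

theorem of_map {φ : Y → X} {t : List Y} (h : RepeatsOnlyAtDist l (t.map φ)) :
    RepeatsOnlyAtDist l t :=
  fun i j hj hij e => h i j (by simpa using hj) hij (by simp only [List.getElem_map, e])

end RepeatsOnlyAtDist

theorem isChain_cons_append_iff {R : X → X → Prop} {x : X} {p q : List X} :
    (x :: (p ++ q)).IsChain R ↔ (x :: p).IsChain R ∧ (p.getLastD x :: q).IsChain R := by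
  induction p generalizing x with
  | nil => simp
  | cons a p ih => simp only [List.cons_append, List.getLastD_cons, List.isChain_cons_cons, ih,
      and_assoc]

theorem exists_append_of_first_hit {C : Set X} {p : List X} (h : ∃ y ∈ p, y ∈ C) :
    ∃ A, ∃ y ∈ C, ∃ B : List X, p = A ++ y :: B ∧ ∀ z ∈ A, z ∉ C := by
  obtain ⟨y, hy⟩ := Option.isSome_iff_exists.1
    ((List.find?_isSome (p := fun y => decide (y ∈ C))).2 (by simpa using h))
  obtain ⟨hyC, A, B, rfl, hA⟩ := List.find?_eq_some_iff_append.1 hy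
  exact ⟨A, y, by simpa using hyC, B, rfl, by simpa using hA⟩

theorem exists_append_of_first_and_last_hit {C : Set X} {p : List X} (h : ∃ y ∈ p, y ∈ C) :
    ∃ A K B : List X, p = A ++ K ++ B ∧ (∃ y ∈ C, K.head? = some y) ∧
      (∃ y ∈ C, K.getLast? = some y) ∧ (∀ y ∈ A, y ∉ C) ∧ ∀ y ∈ B, y ∉ C := by
  obtain ⟨A, y, hy, q, rfl, hA⟩ := exists_append_of_first_hit h
  obtain ⟨B, z, hz, K, hq, hB⟩ :=
    exists_append_of_first_hit (C := C) (p := (y :: q).reverse) ⟨y, by simp, hy⟩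
  have hq : y :: q = K.reverse ++ [z] ++ B.reverse := by
    simpa using congrArg List.reverse hq
  refine ⟨A, K.reverse ++ [z], B.reverse, by rw [List.append_assoc, ← hq], ⟨y, hy, ?_⟩,
    ⟨z, hz, by simp⟩, hA, by simpa using hB⟩
  simpa [List.head?_append] using (congrArg List.head? hq).symm

/-! ### Cycles -/

/-- A parametrization of a cycle of length `l` (for `3 ≤ l`) by the integers modulo `l`. -/
structure IsCycleParam (H : SimpleGraph X) (f : ZMod l → X) : Prop where
  injective : f.Injective
  adj : ∀ i, H.Adj (f i) (f (i + 1))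

/-- The vertex sets of the cycles of length `l`. -/
def cycleSets (H : SimpleGraph X) (l : ℕ) : Set (Set X) :=
  {C | ∃ f : ZMod l → X, IsCycleParam H f ∧ Set.range f = C}

theorem IsCycleParam.shift {f : ZMod l → X} (hf : IsCycleParam H f) (s : ZMod l) :
    IsCycleParam H fun i => f (i + s) :=
  ⟨hf.injective.comp (add_left_injective s), fun i => by
    simpa only [add_right_comm] using hf.adj (i + s)⟩

theorem image_mem_cycleSets {C : Set X} (hC : C ∈ cycleSets H l) (φ : H ≃g H) :
    φ '' C ∈ cycleSets H l := by
  obtain ⟨f, hf, rfl⟩ := hC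
  exact ⟨φ ∘ f, ⟨φ.injective.comp hf.injective, fun i => φ.map_adj_iff.2 (hf.adj i)⟩,
    Set.range_comp φ f⟩

theorem exists_isCycleParam_zero_eq {C : Set X} (hC : C ∈ cycleSets H l) {y : X} (hy : y ∈ C) :
    ∃ f : ZMod l → X, IsCycleParam H f ∧ Set.range f = C ∧ f 0 = y := by
  obtain ⟨f, hf, rfl⟩ := hC
  obtain ⟨s, rfl⟩ := hy
  exact ⟨_, hf.shift s, (Equiv.addRight s).surjective.range_comp f, by simp⟩

theorem cycleSets_nonempty {x : X} {c : H.Walk x x} (hc : c.IsCycle) :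
    (cycleSets H c.length).Nonempty := by
  have hl := hc.three_le_length
  have : NeZero c.length := ⟨by omega⟩
  have : Fact (1 < c.length) := ⟨by omega⟩
  refine ⟨_, fun i => c.getVert i.val, ⟨fun i j h => ZMod.val_injective _ ?_, fun i => ?_⟩, rfl⟩
  · have := i.val_lt
    have := j.val_lt
    exact hc.getVert_injOn' (by rw [Set.mem_ofPred_eq]; omega) (by rw [Set.mem_ofPred_eq]; omega) h
  · have hadj := c.adj_getVert_succ i.val_lt
    rw [ZMod.val_add, ZMod.val_one]
    rcases (Nat.succ_le_of_lt i.val_lt).lt_or_eq with hlt | heq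
    · rwa [Nat.mod_eq_of_lt hlt]
    · rw [Nat.succ_eq_add_one] at heq
      rw [heq, Nat.mod_self, c.getVert_zero]
      rwa [heq, c.getVert_length] at hadj

/-! ### Detours -/

/-- The walk that starts at `f 0`, goes once round the cycle `f` and then on to `f r`. -/
def loopList (f : ZMod l → X) (r : ℕ) : List X :=
  (List.range (l + r + 1)).map fun i : ℕ => f i

theorem isChain_loopList {f : ZMod l → X} (hf : IsCycleParam H f) (r : ℕ) :
    (loopList f r).IsChain H.Adj := by
  rw [loopList, List.isChain_map, List.isChain_range]
  intro i _
  simpa only [Nat.cast_succ] using hf.adj i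

theorem head?_loopList (f : ZMod l → X) (r : ℕ) : (loopList f r).head? = some (f 0) := by
  simp [loopList, List.head?_range]

theorem getLast?_loopList (f : ZMod l → X) (r : ℕ) : (loopList f r).getLast? = some (f r) := by
  simp [loopList, List.range_succ]

theorem repeatsOnlyAtDist_loopList {f : ZMod l → X} (hf : f.Injective) {r : ℕ}
    (hr : r < l) : RepeatsOnlyAtDist l (loopList f r) := by
  intro i j hj hij e
  rw [loopList, List.length_map, List.length_range] at hj
  simp only [loopList, List.getElem_map, List.getElem_range] at e
  obtain ⟨m, hm⟩ := (Nat.modEq_iff_dvd' hij.le).1 ((ZMod.natCast_eq_natCast_iff _ _ _).1 (hf e))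
  have hm0 : 0 < m := Nat.pos_of_ne_zero fun h => by
    rw [h, mul_zero] at hm
    omega
  have hm2 : m < 2 := lt_of_mul_lt_mul_left (a := l) (by omega) (Nat.zero_le _)
  obtain rfl : m = 1 := by omega
  omega

/-- `p'` arises from `p` by a detour that goes once round a cycle of length `l` with vertex set
`C`: this records what the surgery on walks needs to know about `p'`. -/
structure IsDetour (H : SimpleGraph X) (l : ℕ) (C : Set X) (p p' : List X) : Prop where
  isChain : p.IsChain H.Adj → p'.IsChain H.Adj
  head?_eq : p'.head? = p.head?
  getLast?_eq : p'.getLast? = p.getLast?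
  length_le : p'.length ≤ p.length + 2 * l
  mem_or_mem : ∀ y ∈ p', y ∈ p ∨ y ∈ C
  repeatsOnlyAtDist : p.Nodup → RepeatsOnlyAtDist l p'
  exists_repeat : ∃ i < p.length, ∃ y, p'[i]? = some y ∧ p'[i + l]? = some y

theorem exists_isDetour [NeZero l] {C : Set X} (hC : C ∈ cycleSets H l) {p : List X}
    (hp : ∃ y ∈ p, y ∈ C) : ∃ p', IsDetour H l C p p' := by
  obtain ⟨A, K, B, rfl, ⟨y, hyC, hy⟩, ⟨z, hzC, hz⟩, hA, hB⟩ :=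
    exists_append_of_first_and_last_hit hp
  obtain ⟨f, hf, rfl, rfl⟩ := exists_isCycleParam_zero_eq hC hyC
  obtain ⟨r, rfl⟩ := hzC
  have hloop : ∀ u ∈ loopList f r.val, u ∈ Set.range f := by simp [loopList]
  have hK : 0 < K.length := List.length_pos_iff.2 (by rintro rfl; simp at hy)
  have hr := r.val_lt
  have hhead := head?_loopList f r.val
  have hlast := getLast?_loopList f r.val
  rw [ZMod.natCast_zmod_val] at hlast
  have hlen : (loopList f r.val).length = l + r.val + 1 := by simp [loopList]
  refine ⟨A ++ loopList f r.val ++ B, ?_, ?_, ?_, ?_, ?_, ?_, ?_⟩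
  · simp only [List.isChain_append, List.getLast?_append, hhead, hlast, hy, hz]
    rintro ⟨⟨h1, -, h2⟩, h3, h4⟩
    exact ⟨⟨h1, isChain_loopList hf _, h2⟩, h3, h4⟩
  · simp [List.head?_append, hhead, hy]
  · simp [List.getLast?_append, hlast, hz]
  · simp only [List.length_append, hlen]
    omega
  · intro u hu
    simp only [List.mem_append] at hu ⊢
    rcases hu with (hu | hu) | hu
    exacts [.inl (.inl (.inl hu)), .inr (hloop u hu), .inl (.inr hu)]
  · intro hnodup
    rw [List.nodup_append', List.nodup_append'] at hnodup
    obtain ⟨⟨hAn, -, -⟩, hBn, hAKB⟩ := hnodup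
    refine ((RepeatsOnlyAtDist.of_nodup hAn).append (repeatsOnlyAtDist_loopList hf.injective hr)
      fun u hu hu' => hA u hu (hloop u hu')).append (.of_nodup hBn) fun u hu hu' => ?_
    rcases List.mem_append.1 hu with hu | hu
    exacts [hAKB (List.mem_append_left _ hu) hu', hB u hu' (hloop u hu)]
  · refine ⟨A.length, by simp only [List.length_append]; omega, f 0, ?_, ?_⟩
    · simp [loopList]
    · rw [List.append_assoc, List.getElem?_append_right (by omega), Nat.add_sub_cancel_left,
        List.getElem?_append_left (by omega)]
      simp [loopList]

/-! ### Walks that visit cycles often -/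

/-- The number of entries of a list in a set. -/
noncomputable def visits (C : Set X) (t : List X) : ℕ :=
  t.countP (· ∈ C)

theorem visits_append (C : Set X) (s t : List X) : visits C (s ++ t) = visits C s + visits C t :=
  List.countP_append

theorem visits_map_image {φ : X → Y} (hφ : φ.Injective) (C : Set X) (t : List X) :
    visits (φ '' C) (t.map φ) = visits C t := by
  simp [visits, List.countP_map, Function.comp_def, -Set.mem_image, hφ.mem_set_image]

theorem visits_le [NeZero l] {C : Set X} (hC : C ∈ cycleSets H l) {t : List X} (ht : t.Nodup) :
    visits C t ≤ l := by
  obtain ⟨f, -, rfl⟩ := hC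
  rw [visits, List.countP_eq_length_filter, ← List.toFinset_card_of_nodup (ht.filter _)]
  calc _ ≤ (Finset.univ.image f).card := Finset.card_le_card fun y => by simp
    _ ≤ l := Finset.card_image_le.trans (by simp)

/-- A self-avoiding list of vertices that visits each cycle of length `l` at most `k` times. -/
def CycleSparse (H : SimpleGraph X) (l k : ℕ) (t : List X) : Prop :=
  t.Nodup ∧ ∀ C ∈ cycleSets H l, visits C t ≤ k

theorem CycleSparse.of_append_left {s t : List X} (h : CycleSparse H l k (s ++ t)) :
    CycleSparse H l k s :=
  ⟨h.1.of_append_left, fun C hC => by have := h.2 C hC; rw [visits_append] at this; omega⟩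

theorem CycleSparse.of_append_right {s t : List X} (h : CycleSparse H l k (s ++ t)) :
    CycleSparse H l k t :=
  ⟨h.1.of_append_right, fun C hC => by have := h.2 C hC; rw [visits_append] at this; omega⟩

theorem CycleSparse.map {t : List X} (h : CycleSparse H l k t) (φ : H ≃g H) :
    CycleSparse H l k (t.map φ) := by
  refine ⟨h.1.map φ.injective, fun C hC => ?_⟩
  have hC' := h.2 _ (image_mem_cycleSets hC φ.symm)
  rwa [← visits_map_image φ.injective, Set.image_image, show (fun x => φ (φ.symm x)) = id from
    funext φ.apply_symm_apply, Set.image_id] at hC'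

theorem cycleSparse_self_of_nodup [NeZero l] {t : List X} (ht : t.Nodup) : CycleSparse H l l t :=
  ⟨ht, fun _ hC => visits_le hC ht⟩

/-- A cycle visited more than `k` times and a detour round it, for each self-avoiding list that
has such a cycle. -/
structure DetourChoice (H : SimpleGraph X) (l k : ℕ) where
  cycle : List X → Set X
  detour : List X → List X
  cycle_mem : ∀ {p}, p.Nodup → ¬CycleSparse H l k p → cycle p ∈ cycleSets H l
  lt_visits : ∀ {p}, p.Nodup → ¬CycleSparse H l k p → k < visits (cycle p) p
  isDetour : ∀ {p}, p.Nodup → ¬CycleSparse H l k p → IsDetour H l (cycle p) p (detour p)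

instance [NeZero l] : Nonempty (DetourChoice H l k) := by
  have h : ∀ p : List X, ∃ C p', p.Nodup → ¬CycleSparse H l k p →
      C ∈ cycleSets H l ∧ k < visits C p ∧ IsDetour H l C p p' := by
    intro p
    by_cases hp : p.Nodup ∧ ¬CycleSparse H l k p
    · obtain ⟨C, hC, hk⟩ : ∃ C ∈ cycleSets H l, k < visits C p := by
        simpa [CycleSparse, hp.1] using hp.2
      obtain ⟨p', hp'⟩ := exists_isDetour hC (p := p)
        (by simpa [visits, List.countP_pos_iff] using (Nat.zero_le k).trans_lt hk)
      exact ⟨C, p', fun _ _ => ⟨hC, hk, hp'⟩⟩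
    · exact ⟨∅, p, fun h1 h2 => absurd ⟨h1, h2⟩ hp⟩
  choose C p' h using h
  exact ⟨⟨C, p', fun h1 h2 => (h _ h1 h2).1, fun h1 h2 => (h _ h1 h2).2.1,
    fun h1 h2 => (h _ h1 h2).2.2⟩⟩

/-! ### Surgery on walks cut into pieces -/

/-- Replace the pieces in `S` by their detours and leave the other pieces alone. -/
noncomputable def splice (D : DetourChoice H l k) (S : Finset (List X)) (p : List X) : List X :=
  if p ∈ S then D.detour p else p

/-- The walk obtained from pieces `ps` by replacing those in `S` by their detours. -/
noncomputable def surgery (D : DetourChoice H l k) (S : Finset (List X)) (ps : List (List X)) :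
    List X :=
  ps.flatMap (splice D S)

/-- The vertices that may occur in a piece after surgery. -/
def footprint (D : DetourChoice H l k) (S : Finset (List X)) (p : List X) : Set X :=
  {y | y ∈ p ∨ p ∈ S ∧ y ∈ D.cycle p}

/-- A sequence of self-avoiding pieces of length `M` for which surgery at the pieces in `S` is
meaningful and creates no intersections between different pieces. -/
structure IsAdmissible (D : DetourChoice H l k) (M : ℕ) (S : Finset (List X))
    (ps : List (List X)) : Prop where
  length_eq : ∀ p ∈ ps, p.length = M
  nodup : ∀ p ∈ ps, p.Nodup
  not_cycleSparse : ∀ p ∈ ps, p ∈ S → ¬CycleSparse H l k p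
  pairwise_disjoint : ps.Pairwise fun p q => Disjoint (footprint D S p) (footprint D S q)

section Surgery

variable {D : DetourChoice H l k} {S : Finset (List X)} {p : List X} {ps : List (List X)}

theorem surgery_cons : surgery D S (p :: ps) = splice D S p ++ surgery D S ps := rfl

namespace IsAdmissible

theorem tail (h : IsAdmissible D M S (p :: ps)) : IsAdmissible D M S ps where
  length_eq q hq := h.length_eq q (.tail _ hq)
  nodup q hq := h.nodup q (.tail _ hq)
  not_cycleSparse q hq := h.not_cycleSparse q (.tail _ hq)
  pairwise_disjoint := h.pairwise_disjoint.of_cons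

theorem isDetour (h : IsAdmissible D M S ps) (hp : p ∈ ps) (hpS : p ∈ S) :
    IsDetour H l (D.cycle p) p (D.detour p) :=
  D.isDetour (h.nodup p hp) (h.not_cycleSparse p hp hpS)

theorem mem_footprint_of_mem_splice (h : IsAdmissible D M S ps) (hp : p ∈ ps) {y : X}
    (hy : y ∈ splice D S p) : y ∈ footprint D S p := by
  unfold splice at hy
  split_ifs at hy with hpS
  · exact ((h.isDetour hp hpS).mem_or_mem y hy).imp_right fun hyC => ⟨hpS, hyC⟩
  · exact .inl hy

theorem disjoint_splice_surgery (h : IsAdmissible D M S (p :: ps)) :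
    ∀ y ∈ footprint D S p, y ∉ surgery D S ps := by
  intro y hyp hy
  obtain ⟨q, hq, hyq⟩ := List.mem_flatMap.1 hy
  exact Set.disjoint_left.1 ((List.pairwise_cons.1 h.pairwise_disjoint).1 q hq) hyp
    (h.mem_footprint_of_mem_splice (.tail _ hq) hyq)

theorem repeatsOnlyAtDist_surgery (h : IsAdmissible D M S ps) :
    RepeatsOnlyAtDist l (surgery D S ps) := by
  induction ps with
  | nil => exact .of_nodup List.nodup_nil
  | cons p ps ih =>
    refine .append ?_ (ih h.tail) fun y hy =>
      h.disjoint_splice_surgery y (h.mem_footprint_of_mem_splice (.head _) hy)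
    have hp := h.nodup p (.head _)
    unfold splice
    split_ifs with hpS
    · exact (h.isDetour (.head _) hpS).repeatsOnlyAtDist hp
    · exact .of_nodup hp

theorem isChain_cons_surgery (h : IsAdmissible D M S ps) {x : X}
    (hc : (x :: ps.flatten).IsChain H.Adj) : (x :: surgery D S ps).IsChain H.Adj := by
  induction ps generalizing x with
  | nil => simp [surgery]
  | cons p ps ih =>
    rw [List.flatten_cons, isChain_cons_append_iff] at hc
    rw [surgery_cons, isChain_cons_append_iff]
    unfold splice
    split_ifs with hpS
    · have hd := h.isDetour (.head _) hpS
      rw [List.isChain_cons] at hc ⊢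
      rw [hd.head?_eq, List.getLastD_eq_getLast?, hd.getLast?_eq, ← List.getLastD_eq_getLast?]
      exact ⟨⟨hc.1.1, hd.isChain hc.1.2⟩, ih h.tail hc.2⟩
    · exact ⟨hc.1, ih h.tail hc.2⟩

theorem length_surgery_le (h : IsAdmissible D M S ps) :
    (surgery D S ps).length ≤ ps.length * M + 2 * l * (ps.filter (· ∈ S)).length := by
  induction ps with
  | nil => simp [surgery]
  | cons p ps ih =>
    have hp := h.length_eq p (.head _)
    have hps := ih h.tail
    rw [surgery_cons, List.length_append, List.length_cons, splice, add_one_mul]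
    by_cases hpS : p ∈ S
    · have := (h.isDetour (.head _) hpS).length_le
      rw [if_pos hpS, List.filter_cons_of_pos (by simpa using hpS), List.length_cons, mul_add_one]
      omega
    · rw [if_neg hpS, List.filter_cons_of_neg (by simpa using hpS)]
      omega

theorem mem_iff_exists_repeat [NeZero l] (h : IsAdmissible D M S (p :: ps)) :
    p ∈ S ↔ ∃ i < M, ∃ y, (surgery D S (p :: ps))[i]? = some y ∧
      (surgery D S (p :: ps))[i + l]? = some y := by
  have hM := h.length_eq p (.head _)
  rw [surgery_cons]
  constructor
  · intro hpS
    obtain ⟨i, hi, y, hy, hy'⟩ := (h.isDetour (.head _) hpS).exists_repeat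
    rw [splice, if_pos hpS]
    have append_left : ∀ {j}, (D.detour p)[j]? = some y →
        (D.detour p ++ surgery D S ps)[j]? = some y := fun hj => by
      rw [List.getElem?_append_left (List.getElem?_eq_some_iff.1 hj).1, hj]
    exact ⟨i, hM ▸ hi, y, append_left hy, append_left hy'⟩
  · rintro ⟨i, hi, y, hy, hy'⟩
    by_contra hpS
    rw [splice, if_neg hpS] at hy hy'
    rw [List.getElem?_append_left (by omega)] at hy
    rcases lt_or_ge (i + l) p.length with hlt | hge
    · rw [List.getElem?_append_left hlt, ← hy] at hy'
      have := NeZero.pos l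
      exact List.nodup_iff_getElem?_ne_getElem?.1 (h.nodup p (.head _)) i (i + l) (by omega) hlt
        hy'.symm
    · rw [List.getElem?_append_right hge] at hy'
      exact h.disjoint_splice_surgery y (.inl (List.mem_of_getElem? hy)) (List.mem_of_getElem? hy')

theorem head?_surgery_cons (h : IsAdmissible D M S (p :: ps)) (hM : 0 < M) :
    (surgery D S (p :: ps)).head? = p.head? := by
  have hp : p.head? ≠ none := by
    rw [Ne, List.head?_eq_none_iff, ← List.length_eq_zero_iff, h.length_eq p (.head _)]
    exact hM.ne'
  have hsplice : (splice D S p).head? = p.head? := by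
    unfold splice
    split_ifs with hpS
    exacts [(h.isDetour (.head _) hpS).head?_eq, rfl]
  rw [surgery_cons, List.head?_append, hsplice,
    Option.or_of_isSome (Option.isSome_iff_ne_none.2 hp)]

/-- Whether the first piece was replaced is visible in the walk after surgery, by
`mem_iff_exists_repeat`. If it was not, it is an initial segment; if it was, it is recovered from
its first vertex and its code. -/
theorem surgery_injective [NeZero l] (hM : 0 < M) {code : List X → List Y}
    (hcode : ∀ p q : List X, p.head? = q.head? → code p = code q → p = q)
    {T : Finset (List X)} {qs : List (List X)} (hps : IsAdmissible D M S ps)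
    (hqs : IsAdmissible D M T qs) (hlen : ps.length = qs.length)
    (hsurgery : surgery D S ps = surgery D T qs)
    (hcodes : (ps.filter (· ∈ S)).map code = (qs.filter (· ∈ T)).map code) :
    ps = qs ∧ ∀ p ∈ ps, p ∈ S ↔ p ∈ T := by
  induction ps generalizing qs with
  | nil => simpa [eq_comm] using hlen
  | cons p ps ih =>
    obtain - | ⟨q, qs⟩ := qs
    · simp at hlen
    have hpq : p ∈ S ↔ q ∈ T := by
      rw [hps.mem_iff_exists_repeat, hqs.mem_iff_exists_repeat, hsurgery]
    obtain ⟨rfl, hcodes'⟩ : p = q ∧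
        (ps.filter (· ∈ S)).map code = (qs.filter (· ∈ T)).map code := by
      by_cases hpS : p ∈ S
      · have hhead : p.head? = q.head? := by
          rw [← hps.head?_surgery_cons hM, ← hqs.head?_surgery_cons hM, hsurgery]
        rw [List.filter_cons_of_pos (by simpa using hpS),
          List.filter_cons_of_pos (by simpa using hpq.1 hpS), List.map_cons, List.map_cons,
          List.cons.injEq] at hcodes
        exact ⟨hcode p q hhead hcodes.1, hcodes.2⟩
      · have hqT := hpq.not.1 hpS
        have hpq := congrArg (List.take M) hsurgery
        rw [surgery_cons, surgery_cons, splice, splice, if_neg hpS, if_neg hqT,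
          List.take_left' (hps.length_eq p (.head _)),
          List.take_left' (hqs.length_eq q (.head _))] at hpq
        rw [List.filter_cons_of_neg (by simpa using hpS),
          List.filter_cons_of_neg (by simpa using hqT)] at hcodes
        exact ⟨hpq, hcodes⟩
    have hsplice : splice D S p = splice D T p := by simp only [splice, hpq]
    rw [surgery_cons, surgery_cons, hsplice, List.append_cancel_left_eq] at hsurgery
    obtain ⟨rfl, hST⟩ := ih hps.tail hqs.tail (by simpa using hlen) hsurgery hcodes'
    exact ⟨rfl, List.forall_mem_cons.2 ⟨hpq, hST⟩⟩

end IsAdmissible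

end Surgery

/-! ### Counting walks -/

theorem sum_le_sum_of_injOn {ι κ : Type*} {s : Finset ι} {t : Finset κ} {f : ι → ℝ} {g : κ → ℝ}
    (e : ι → κ) (he : Set.MapsTo e s t) (hinj : Set.InjOn e s) (hfg : ∀ i ∈ s, f i ≤ g (e i))
    (hg : ∀ j ∈ t, 0 ≤ g j) : ∑ i ∈ s, f i ≤ ∑ j ∈ t, g j :=
  calc ∑ i ∈ s, f i ≤ ∑ i ∈ s, g (e i) := Finset.sum_le_sum hfg
    _ = ∑ j ∈ s.image e, g j := (Finset.sum_image hinj).symm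
    _ ≤ ∑ j ∈ t, g j := Finset.sum_le_sum_of_subset_of_nonneg
      (Finset.image_subset_iff.2 he) fun j hj _ => hg j hj

section WalkTails

variable [H.LocallyFinite]

/-- The walks with `n` steps that start at `x`, each given as the list of its vertices after `x`. -/
noncomputable def walkTails (H : SimpleGraph X) [H.LocallyFinite] : ℕ → X → Finset (List X)
  | 0, _ => {[]}
  | n + 1, x => (H.neighborFinset x).biUnion fun y => (walkTails H n y).image (y :: ·)

theorem mem_walkTails {n : ℕ} {x : X} {t : List X} :
    t ∈ walkTails H n x ↔ t.length = n ∧ (x :: t).IsChain H.Adj := by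
  induction n generalizing x t with
  | zero => cases t <;> simp [walkTails]
  | succ n ih => cases t <;> simp [walkTails, ih, and_left_comm]

/-- The walks in `walkTails H n x` that, without their starting vertex, are sparse. Leaving the
starting vertex out makes initial and final segments of such a walk of the same kind. -/
noncomputable def sparseTails (H : SimpleGraph X) [H.LocallyFinite] (l k n : ℕ) (x : X) :
    Finset (List X) :=
  (walkTails H n x).filter (CycleSparse H l k)

theorem mem_sparseTails {n : ℕ} {x : X} {t : List X} :
    t ∈ sparseTails H l k n x ↔
      t.length = n ∧ (x :: t).IsChain H.Adj ∧ CycleSparse H l k t := by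
  rw [sparseTails, Finset.mem_filter, mem_walkTails, and_assoc]

theorem card_sparseTails_eq (htrans : ∀ x y : X, ∃ φ : H ≃g H, φ x = y) (n : ℕ) (x y : X) :
    (sparseTails H l k n x).card = (sparseTails H l k n y).card := by
  suffices h : ∀ x y, (sparseTails H l k n x).card ≤ (sparseTails H l k n y).card from
    (h x y).antisymm (h y x)
  intro x y
  obtain ⟨φ, rfl⟩ := htrans x y
  refine Finset.card_le_card_of_injOn (List.map φ) (fun t ht => ?_)
    (List.map_injective_iff.2 φ.injective).injOn
  obtain ⟨hn, hc, hs⟩ := mem_sparseTails.1 ht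
  refine mem_sparseTails.2 ⟨by simpa, ?_, hs.map φ⟩
  rw [← List.map_cons, List.isChain_map]
  exact hc.imp fun _ _ => φ.map_adj_iff.2

theorem sum_take_mul_drop_le {m n : ℕ} {x : X} {F G : List X → ℝ} (hF : ∀ t, 0 ≤ F t)
    (hG : ∀ t, 0 ≤ G t) :
    ∑ t ∈ sparseTails H l k (m + n) x, F (t.take m) * G (t.drop m) ≤
      ∑ p ∈ sparseTails H l k m x, F p * ∑ q ∈ sparseTails H l k n (p.getLastD x), G q := by
  simp only [Finset.mul_sum]
  rw [Finset.sum_sigma' (sparseTails H l k m x) fun p => sparseTails H l k n (p.getLastD x)]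
  refine sum_le_sum_of_injOn (fun t => ⟨t.take m, t.drop m⟩) (fun t ht => ?_)
    (fun t _ t' _ e => ?_) (fun _ _ => le_rfl) fun _ _ => mul_nonneg (hF _) (hG _)
  · obtain ⟨hn, hc, hs⟩ := mem_sparseTails.1 ht
    rw [← List.take_append_drop m t] at hc hs
    rw [isChain_cons_append_iff] at hc
    simp only [Finset.coe_sigma, Set.mem_sigma_iff, Finset.mem_coe, mem_sparseTails]
    exact ⟨⟨by simp [hn], hc.1, hs.of_append_left⟩, by simp [hn], hc.2, hs.of_append_right⟩
  · simp only [Sigma.mk.injEq, heq_eq_eq] at e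
    rw [← List.take_append_drop m t, e.1, e.2, List.take_append_drop]

theorem card_sparseTails_add_le (htrans : ∀ x y : X, ∃ φ : H ≃g H, φ x = y) (m n : ℕ) (x : X) :
    (sparseTails H l k (m + n) x).card ≤
      (sparseTails H l k m x).card * (sparseTails H l k n x).card := by
  have h := sum_take_mul_drop_le (H := H) (l := l) (k := k) (m := m) (n := n) (x := x)
    (F := 1) (G := 1) (fun _ => zero_le_one) fun _ => zero_le_one
  simp only [Pi.one_apply, one_mul, mul_one, Finset.sum_const,
    card_sparseTails_eq htrans n _ x, nsmul_eq_mul] at h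
  exact_mod_cast h

end WalkTails

/-- The first `Q` consecutive pieces of length `M` of a list. -/
def pieces (M : ℕ) : ℕ → List X → List (List X)
  | 0, _ => []
  | Q + 1, t => t.take M :: pieces M Q (t.drop M)

theorem length_pieces (M Q : ℕ) (t : List X) : (pieces M Q t).length = Q := by
  induction Q generalizing t with
  | zero => rfl
  | succ Q ih => rw [pieces, List.length_cons, ih]

section Pieces

variable {Q : ℕ} {t : List X}

theorem flatten_pieces (ht : t.length = Q * M) : (pieces M Q t).flatten = t := by
  induction Q generalizing t with
  | zero => simpa [pieces, eq_comm] using ht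
  | succ Q ih =>
    rw [pieces, List.flatten_cons, ih (by rw [List.length_drop, ht, add_one_mul]; omega),
      List.take_append_drop]

theorem length_of_mem_pieces (ht : t.length = Q * M) : ∀ p ∈ pieces M Q t, p.length = M := by
  induction Q generalizing t with
  | zero => simp [pieces]
  | succ Q ih =>
    rw [add_one_mul] at ht
    rw [pieces, List.forall_mem_cons]
    exact ⟨by simp; omega, ih (by simp; omega)⟩

theorem nodup_of_mem_pieces (ht : t.length = Q * M) (hnodup : t.Nodup) :
    ∀ p ∈ pieces M Q t, p.Nodup := by
  rw [← flatten_pieces ht, List.nodup_flatten] at hnodup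
  exact hnodup.1

theorem pairwise_disjoint_pieces (ht : t.length = Q * M) (hnodup : t.Nodup) :
    (pieces M Q t).Pairwise List.Disjoint := by
  rw [← flatten_pieces ht, List.nodup_flatten] at hnodup
  exact hnodup.2

theorem disjoint_of_mem_pieces (ht : t.length = Q * M) (hnodup : t.Nodup) {p q : List X}
    (hp : p ∈ pieces M Q t) (hq : q ∈ pieces M Q t) (hne : p ≠ q) : p.Disjoint q :=
  have : Std.Symm (List.Disjoint (α := X)) := ⟨fun _ _ h => h.symm⟩
  (pairwise_disjoint_pieces ht hnodup).forall hp hq hne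

theorem nodup_pieces (hM : 0 < M) (ht : t.length = Q * M) (hnodup : t.Nodup) :
    (pieces M Q t).Nodup := by
  refine (pairwise_disjoint_pieces ht hnodup).imp_of_mem ?_
  rintro p q hp - hd rfl
  obtain ⟨y, hy⟩ := List.exists_mem_of_length_pos (hM.trans_eq (length_of_mem_pieces ht p hp).symm)
  exact hd hy hy

end Pieces

/-- The number of those among the first `Q` consecutive pieces of length `M` of a list that visit
some cycle of length `l` more than `k` times. -/
noncomputable def heavyCount (H : SimpleGraph X) (l k M Q : ℕ) (t : List X) : ℕ :=
  (pieces M Q t).countP (¬CycleSparse H l k ·)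

theorem heavyCount_succ (M Q : ℕ) (t : List X) : heavyCount H l k M (Q + 1) t =
    (if CycleSparse H l k (t.take M) then 0 else 1) + heavyCount H l k M Q (t.drop M) := by
  rw [heavyCount, pieces, List.countP_cons, add_comm, heavyCount]
  congr 1
  by_cases h : CycleSparse H l k (t.take M) <;> simp [h]

theorem sum_ite_cycleSparse_le [H.LocallyFinite] (n : ℕ) (x : X) {τ : ℝ} (hτ : 0 ≤ τ) :
    ∑ p ∈ sparseTails H l (k + 1) n x, (if CycleSparse H l k p then 1 else τ) ≤
      (sparseTails H l k n x).card + τ * (sparseTails H l (k + 1) n x).card := by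
  rw [Finset.sum_ite, Finset.sum_const, Finset.sum_const, nsmul_eq_mul, mul_one, nsmul_eq_mul,
    mul_comm]
  gcongr
  · intro p hp
    rw [Finset.mem_filter, mem_sparseTails] at hp
    exact mem_sparseTails.2 ⟨hp.1.1, hp.1.2.1, hp.2⟩
  · exact Finset.filter_subset _ _

theorem sum_pow_heavyCount_le [H.LocallyFinite] (htrans : ∀ x y : X, ∃ φ : H ≃g H, φ x = y)
    (M Q : ℕ) (x x₀ : X) {τ : ℝ} (hτ : 0 ≤ τ) :
    ∑ t ∈ sparseTails H l (k + 1) (Q * M) x, τ ^ heavyCount H l k M Q t ≤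
      ((sparseTails H l k M x₀).card + τ * (sparseTails H l (k + 1) M x₀).card) ^ Q := by
  induction Q generalizing x with
  | zero =>
    rw [zero_mul]
    have h : sparseTails H l (k + 1) 0 x ⊆ {[]} := fun t ht => by
      simpa using (mem_sparseTails.1 ht).1
    simpa [heavyCount, pieces] using Finset.card_le_card h
  | succ Q ih =>
    set b : ℝ := (sparseTails H l k M x₀).card + τ * (sparseTails H l (k + 1) M x₀).card with hb
    let F : List X → ℝ := fun p => if CycleSparse H l k p then 1 else τ
    have hF : ∀ p, 0 ≤ F p := fun p => by dsimp only [F]; split_ifs <;> positivity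
    calc ∑ t ∈ sparseTails H l (k + 1) ((Q + 1) * M) x, τ ^ heavyCount H l k M (Q + 1) t
        = ∑ t ∈ sparseTails H l (k + 1) (M + Q * M) x,
            F (t.take M) * τ ^ heavyCount H l k M Q (t.drop M) := by
          simp only [F, heavyCount_succ, pow_add, pow_ite, pow_zero, pow_one, add_one_mul, add_comm]
      _ ≤ ∑ p ∈ sparseTails H l (k + 1) M x, F p *
            ∑ q ∈ sparseTails H l (k + 1) (Q * M) (p.getLastD x), τ ^ heavyCount H l k M Q q :=
          sum_take_mul_drop_le hF fun _ => pow_nonneg hτ _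
      _ ≤ ∑ p ∈ sparseTails H l (k + 1) M x, F p * b ^ Q :=
          Finset.sum_le_sum fun p _ => mul_le_mul_of_nonneg_left (ih _) (hF p)
      _ = b ^ Q * ∑ p ∈ sparseTails H l (k + 1) M x, F p := by rw [← Finset.sum_mul, mul_comm]
      _ ≤ b ^ Q * b := by
          rw [hb, card_sparseTails_eq htrans M x₀ x, card_sparseTails_eq htrans M x₀ x]
          exact mul_le_mul_of_nonneg_left (sum_ite_cycleSparse_le M x hτ) (by positivity)

/-! ### Disjoint cycles -/

theorem exists_pairwiseDisjoint_card_le_mul {ι α : Type*} {s : Finset ι} {f : ι → Set α} {β : ℕ}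
    (hf : ∀ i ∈ s, (f i).Nonempty)
    (hβ : ∀ i ∈ s, (s.filter fun j => ¬Disjoint (f i) (f j)).card ≤ β) :
    ∃ I ⊆ s, (I : Set ι).PairwiseDisjoint f ∧ s.card ≤ I.card * β := by
  obtain ⟨I, hI⟩ :=
    (s.powerset.filter fun I : Finset ι => (I : Set ι).PairwiseDisjoint f).exists_maximal
      ⟨∅, by simp⟩
  obtain ⟨hIs, hdisj⟩ : I ⊆ s ∧ (I : Set ι).PairwiseDisjoint f := by simpa using hI.prop
  refine ⟨I, hIs, hdisj, ?_⟩
  suffices hcover : s ⊆ I.biUnion fun i => s.filter fun j => ¬Disjoint (f i) (f j) from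
    (Finset.card_le_card hcover).trans
      (Finset.card_biUnion_le_card_mul _ _ _ fun i hi => hβ i (hIs hi))
  intro j hj
  by_contra hnot
  have hdisj_j : ∀ i ∈ I, Disjoint (f j) (f i) := by
    simpa [hj, disjoint_comm] using hnot
  have hinsert : insert j I ⊆ I := hI.le_of_ge (by
    simpa [Finset.insert_subset_iff, hj, hIs] using
      hdisj.insert fun i hi _ => hdisj_j i hi) (Finset.subset_insert j I)
  have hjj := hdisj_j j (hinsert (Finset.mem_insert_self j I))
  rw [disjoint_self] at hjj
  exact (hf j hj).ne_empty hjj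

/-- The vertices that lie on a common cycle of length `l` with `z`. -/
def cycleNeighbors (H : SimpleGraph X) (l : ℕ) (z : X) : Set X :=
  {y | ∃ C ∈ cycleSets H l, z ∈ C ∧ y ∈ C}

theorem map_mem_cycleNeighbors (φ : H ≃g H) {y z : X} (hy : y ∈ cycleNeighbors H l z) :
    φ y ∈ cycleNeighbors H l (φ z) := by
  obtain ⟨C, hC, hzC, hyC⟩ := hy
  exact ⟨φ '' C, image_mem_cycleSets hC φ, Set.mem_image_of_mem φ hzC, Set.mem_image_of_mem φ hyC⟩

theorem finite_cycleNeighbors [H.LocallyFinite] [NeZero l] (z : X) :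
    (cycleNeighbors H l z).Finite := by
  refine ((walkTails H l z).finite_toSet.biUnion fun t _ => t.finite_toSet).subset ?_
  rintro y ⟨C, hC, hz, hy⟩
  obtain ⟨f, hf, rfl, rfl⟩ := exists_isCycleParam_zero_eq hC hz
  obtain ⟨s, rfl⟩ := hy
  refine Set.mem_biUnion (x := (List.range l).map fun i : ℕ => f (i + 1)) ?_ ?_
  · have hc : (f 0 :: (List.range l).map fun i : ℕ => f (i + 1)) =
      (List.range (l + 1)).map fun i : ℕ => f i := by
      simp [List.range_succ_eq_map, Function.comp_def]
    rw [Finset.mem_coe, mem_walkTails, hc, List.isChain_map, List.isChain_range]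
    exact ⟨by simp, fun i _ => by simpa using hf.adj i⟩
  · exact List.mem_map.2 ⟨(s - 1).val, List.mem_range.2 (ZMod.val_lt _), by simp⟩

theorem exists_card_le_of_subset_biUnion_cycleNeighbors [H.LocallyFinite] [NeZero l]
    (htrans : ∀ x y : X, ∃ φ : H ≃g H, φ x = y) (x₀ : X) :
    ∃ β : ℕ, ∀ z, ∀ F : Finset X,
      (F : Set X) ⊆ ⋃ u ∈ cycleNeighbors H l z, cycleNeighbors H l u → F.card ≤ β := by
  have hfin : (⋃ u ∈ cycleNeighbors H l x₀, cycleNeighbors H l u).Finite :=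
    (finite_cycleNeighbors x₀).biUnion fun u _ => finite_cycleNeighbors u
  refine ⟨hfin.toFinset.card, fun z F hF => ?_⟩
  obtain ⟨φ, rfl⟩ := htrans z x₀
  refine Finset.card_le_card_of_injOn φ (fun y hy => ?_) φ.injective.injOn
  obtain ⟨u, hu, hyu⟩ := Set.mem_iUnion₂.1 (hF hy)
  rw [hfin.coe_toFinset]
  exact Set.mem_biUnion (map_mem_cycleNeighbors φ hu) (map_mem_cycleNeighbors φ hyu)

theorem card_le_of_not_disjoint_cycle {β : ℕ}
    (hβ : ∀ z, ∀ F : Finset X,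
      (F : Set X) ⊆ ⋃ u ∈ cycleNeighbors H l z, cycleNeighbors H l u → F.card ≤ β)
    {C₀ : Set X} (hC₀ : C₀ ∈ cycleSets H l) {s : Finset (List X)}
    (hs : (s : Set (List X)).Pairwise List.Disjoint) {C : List X → Set X}
    (hC : ∀ p ∈ s, C p ∈ cycleSets H l) (hhit : ∀ p ∈ s, ∃ y ∈ p, y ∈ C p)
    (hmeet : ∀ p ∈ s, ¬Disjoint C₀ (C p)) : s.card ≤ β := by
  obtain ⟨f, -, rfl⟩ := id hC₀
  have : Nonempty X := ⟨f 0⟩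
  choose! y hyp hyC using hhit
  have hinj : Set.InjOn y s := fun p hp q hq hpq => by
    by_contra hne
    exact hs hp hq hne (hyp p hp) (hpq ▸ hyp q hq)
  rw [← Finset.card_image_of_injOn hinj]
  refine hβ (f 0) _ fun w hw => ?_
  obtain ⟨p, hp, rfl⟩ : ∃ p ∈ s, y p = w := by simpa using hw
  obtain ⟨u, hu, huC⟩ := Set.not_disjoint_iff.1 (hmeet p hp)
  exact Set.mem_biUnion ⟨_, hC₀, Set.mem_range_self 0, hu⟩ ⟨C p, hC p hp, huC, hyC p hp⟩

/-- A set of pieces of `t` that surgery can act on: each of them visits some cycle of length `l`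
more than `k` times, and the cycles chosen for them are disjoint. -/
structure IsSurgerySet (D : DetourChoice H l k) (M Q : ℕ) (t : List X) (S : Finset (List X)) :
    Prop where
  subset : S ⊆ (pieces M Q t).toFinset
  not_cycleSparse : ∀ p ∈ S, ¬CycleSparse H l k p
  pairwiseDisjoint : (S : Set (List X)).PairwiseDisjoint D.cycle

theorem exists_isSurgerySet_heavyCount_le_mul [H.LocallyFinite] [NeZero l]
    (htrans : ∀ x y : X, ∃ φ : H ≃g H, φ x = y) (x₀ : X) (D : DetourChoice H l k) :
    ∃ β : ℕ, ∀ M Q t, 0 < M → t.length = Q * M → t.Nodup →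
      ∃ I, IsSurgerySet D M Q t I ∧ heavyCount H l k M Q t ≤ I.card * β := by
  obtain ⟨β, hβ⟩ := exists_card_le_of_subset_biUnion_cycleNeighbors (l := l) htrans x₀
  refine ⟨β, fun M Q t hM hlen ht => ?_⟩
  let heavy := (pieces M Q t).toFinset.filter (¬CycleSparse H l k ·)
  have hmem : ∀ {p}, p ∈ heavy ↔ p ∈ pieces M Q t ∧ ¬CycleSparse H l k p := by simp [heavy]
  have hnodup : ∀ p ∈ heavy, p.Nodup := fun p hp => nodup_of_mem_pieces hlen ht p (hmem.1 hp).1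
  have hcard : heavyCount H l k M Q t = heavy.card := by
    rw [heavyCount, List.countP_eq_length_filter,
      ← List.toFinset_card_of_nodup ((nodup_pieces hM hlen ht).filter _), List.toFinset_filter]
    simp [heavy]
  have hcycle : ∀ p ∈ heavy, D.cycle p ∈ cycleSets H l := fun p hp =>
    D.cycle_mem (hnodup p hp) (hmem.1 hp).2
  have hhit : ∀ p ∈ heavy, ∃ y ∈ p, y ∈ D.cycle p := fun p hp => by
    simpa [visits, List.countP_pos_iff] using
      (Nat.zero_le k).trans_lt (D.lt_visits (hnodup p hp) (hmem.1 hp).2)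
  obtain ⟨I, hI, hdisj, hle⟩ := exists_pairwiseDisjoint_card_le_mul (s := heavy) (f := D.cycle)
    (β := β) (fun p hp => (hhit p hp).imp fun _ => And.right) fun p hp =>
      card_le_of_not_disjoint_cycle hβ (hcycle p hp)
        (fun q hq r hr hqr => disjoint_of_mem_pieces hlen ht
          (hmem.1 (Finset.mem_of_mem_filter q hq)).1 (hmem.1 (Finset.mem_of_mem_filter r hr)).1 hqr)
        (fun q hq => hcycle q (Finset.mem_of_mem_filter q hq))
        (fun q hq => hhit q (Finset.mem_of_mem_filter q hq))
        fun q hq => (Finset.mem_filter.1 hq).2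
  exact ⟨I, ⟨fun p hp => List.mem_toFinset.2 (hmem.1 (hI hp)).1, fun p hp => (hmem.1 (hI hp)).2,
    hdisj⟩, hcard ▸ hle⟩

/-! ### Counting walks after surgery -/

namespace IsSurgerySet

variable {D : DetourChoice H l k} {Q : ℕ} {t t' : List X} {S T : Finset (List X)}

theorem mono (h : IsSurgerySet D M Q t T) (hST : S ⊆ T) : IsSurgerySet D M Q t S where
  subset := hST.trans h.subset
  not_cycleSparse p hp := h.not_cycleSparse p (hST hp)
  pairwiseDisjoint := h.pairwiseDisjoint.subset (Finset.coe_subset.2 hST)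

/-- The cycle of `p` is visited at most `k + 1` times by `t`, and `p` accounts for all of these
visits. -/
theorem not_mem_cycle (h : IsSurgerySet D M Q t S) (ht : t.length = Q * M)
    (hsparse : CycleSparse H l (k + 1) t) {p q : List X} (hp : p ∈ S)
    (hpq : [p, q].Sublist (pieces M Q t) ∨ [q, p].Sublist (pieces M Q t)) :
    ∀ y ∈ q, y ∉ D.cycle p := by
  intro y hyq hyp
  have hpnodup := nodup_of_mem_pieces ht hsparse.1 p (List.mem_toFinset.1 (h.subset hp))
  have hvisits : visits (D.cycle p) p + visits (D.cycle p) q ≤ visits (D.cycle p) t := by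
    rw [← flatten_pieces ht]
    rcases hpq with hpq | hpq
    · simpa [visits] using hpq.flatten.countP_le (p := fun y => decide (y ∈ D.cycle p))
    · simpa [visits, add_comm] using hpq.flatten.countP_le (p := fun y => decide (y ∈ D.cycle p))
  have hq : 0 < visits (D.cycle p) q := List.countP_pos_iff.2 ⟨y, hyq, by simpa using hyp⟩
  have ht := hsparse.2 _ (D.cycle_mem hpnodup (h.not_cycleSparse p hp))
  have hp := D.lt_visits hpnodup (h.not_cycleSparse p hp)
  omega

theorem isAdmissible (h : IsSurgerySet D M Q t S) (hM : 0 < M) (ht : t.length = Q * M)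
    (hsparse : CycleSparse H l (k + 1) t) : IsAdmissible D M S (pieces M Q t) where
  length_eq := length_of_mem_pieces ht
  nodup := nodup_of_mem_pieces ht hsparse.1
  not_cycleSparse p _ hp := h.not_cycleSparse p hp
  pairwise_disjoint := by
    refine List.pairwise_iff_forall_sublist.2 fun {p q} hpq => Set.disjoint_left.2 ?_
    have hne : p ≠ q := by simpa using (nodup_pieces hM ht hsparse.1).sublist hpq
    rintro y (hyp | ⟨hp, hyp⟩) (hyq | ⟨hq, hyq⟩)
    · exact disjoint_of_mem_pieces ht hsparse.1 (hpq.subset (by simp)) (hpq.subset (by simp)) hne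
        hyp hyq
    · exact h.not_mem_cycle ht hsparse hq (.inr hpq) y hyp hyq
    · exact h.not_mem_cycle ht hsparse hp (.inl hpq) y hyq hyp
    · exact Set.disjoint_left.1 (h.pairwiseDisjoint hp hq hne) hyp hyq

theorem length_filter (h : IsSurgerySet D M Q t S) (hM : 0 < M) (ht : t.length = Q * M)
    (hnodup : t.Nodup) : ((pieces M Q t).filter (· ∈ S)).length = S.card := by
  rw [← List.toFinset_card_of_nodup ((nodup_pieces hM ht hnodup).filter _), List.toFinset_filter]
  congr 1
  ext p
  simpa using fun hp => List.mem_toFinset.1 (h.subset hp)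

theorem eq_of_surgery_eq [NeZero l] (hM : 0 < M) {code : List X → List Y}
    (hcode : ∀ p q : List X, p.head? = q.head? → code p = code q → p = q)
    (hS : IsSurgerySet D M Q t S) (hT : IsSurgerySet D M Q t' T)
    (ht : t.length = Q * M) (ht' : t'.length = Q * M)
    (hsparse : CycleSparse H l (k + 1) t) (hsparse' : CycleSparse H l (k + 1) t')
    (hcodes : ((pieces M Q t).filter (· ∈ S)).map code =
      ((pieces M Q t').filter (· ∈ T)).map code)
    (hsurgery : surgery D S (pieces M Q t) = surgery D T (pieces M Q t')) : t = t' ∧ S = T := by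
  obtain ⟨hpieces, hST⟩ := (hS.isAdmissible hM ht hsparse).surgery_injective hM hcode
    (hT.isAdmissible hM ht' hsparse') (by simp only [length_pieces]) hsurgery hcodes
  obtain rfl : t = t' := by rw [← flatten_pieces ht, hpieces, flatten_pieces ht']
  refine ⟨rfl, Finset.ext fun p => ⟨fun hp => ?_, fun hp => ?_⟩⟩
  · exact (hST p (List.mem_toFinset.1 (hS.subset hp))).1 hp
  · exact (hST p (List.mem_toFinset.1 (hT.subset hp))).2 hp

end IsSurgerySet

theorem card_le_pow_of_forall_mem {α : Type*} {K : Finset α} {n : ℕ} {L : Finset (List α)}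
    (hL : ∀ s ∈ L, s.length = n ∧ ∀ a ∈ s, a ∈ K) : L.card ≤ K.card ^ n := by
  rw [← Fintype.card_piFinset_const K n]
  refine (Finset.card_le_card fun s hs => ?_).trans (Finset.card_image_le (f := List.ofFn))
  obtain ⟨rfl, hK⟩ := hL s hs
  exact Finset.mem_image.2 ⟨s.get, Fintype.mem_piFinset.2 fun i => hK _ (List.get_mem s i),
    List.ofFn_get s⟩

theorem sum_pow_length_le_two {α : Type*} {K : Finset α} {c : ℝ} (hc : 0 ≤ c)
    (hcK : K.card * c ≤ 1 / 2) {L : Finset (List α)} (hL : ∀ s ∈ L, ∀ a ∈ s, a ∈ K) :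
    ∑ s ∈ L, c ^ s.length ≤ 2 := by
  obtain ⟨N, hN⟩ := (L.image List.length).bddAbove
  rw [← Finset.sum_fiberwise_of_maps_to (t := Finset.range (N + 1)) (g := List.length)
    fun s hs => Finset.mem_range_succ_iff.2 (hN (Finset.mem_coe.2 (Finset.mem_image_of_mem _ hs)))]
  refine (Finset.sum_le_sum fun n _ => ?_).trans (sum_geometric_two_le (N + 1))
  have hcard : (L.filter (·.length = n)).card ≤ K.card ^ n :=
    card_le_pow_of_forall_mem fun s hs => ⟨(Finset.mem_filter.1 hs).2,
      hL s (Finset.mem_filter.1 hs).1⟩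
  calc ∑ s ∈ L with s.length = n, c ^ s.length = (L.filter (·.length = n)).card * c ^ n := by
        rw [Finset.sum_congr rfl fun s hs => by rw [(Finset.mem_filter.1 hs).2], Finset.sum_const,
          nsmul_eq_mul]
    _ ≤ (K.card : ℝ) ^ n * c ^ n := by gcongr; exact_mod_cast hcard
    _ = (K.card * c) ^ n := (mul_pow _ _ _).symm
    _ ≤ (1 / 2) ^ n := by gcongr

theorem exists_code [H.LocallyFinite] (htrans : ∀ x y : X, ∃ φ : H ≃g H, φ x = y) (x₀ : X) :
    ∃ code : List X → List X,
      (∀ p q : List X, p.head? = q.head? → code p = code q → p = q) ∧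
      ∀ p : List X, p.IsChain H.Adj → code p ∈ walkTails H (p.length - 1) x₀ := by
  choose Φ hΦ using fun y => htrans y x₀
  refine ⟨fun p => match p with
    | [] => []
    | y :: q => q.map (Φ y), ?_, ?_⟩
  · rintro (- | ⟨y, p⟩) (- | ⟨z, q⟩) hhead hcode
    · rfl
    · simp at hhead
    · simp at hhead
    · obtain rfl : y = z := by simpa using hhead
      rw [List.map_injective_iff.2 (Φ y).injective hcode]
  · rintro (- | ⟨y, p⟩) hp
    · simp [mem_walkTails]
    · refine mem_walkTails.2 ⟨by simp, ?_⟩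
      rw [← hΦ y, ← List.map_cons, List.isChain_map]
      exact hp.imp fun _ _ => (Φ y).map_adj_iff.2

theorem mem_walkTails_of_mem_map_pieces [H.LocallyFinite] {code : List X → List X} {x₀ x : X}
    (hcode : ∀ p : List X, p.IsChain H.Adj → code p ∈ walkTails H (p.length - 1) x₀) {Q : ℕ}
    {t : List X} (ht : t.length = Q * M) (hchain : (x :: t).IsChain H.Adj) {a : List X}
    (ha : a ∈ (pieces M Q t).map code) : a ∈ walkTails H (M - 1) x₀ := by
  obtain ⟨p, hp, rfl⟩ := List.mem_map.1 ha
  rw [← flatten_pieces ht] at hchain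
  rw [← length_of_mem_pieces ht p hp]
  exact hcode p (hchain.tail.infix (List.infix_of_mem_flatten hp))

theorem sum_pow_mul_pow_card_le [NeZero l] {D : DetourChoice H l k} {Q : ℕ} (hM : 0 < M)
    {code : List X → List Y}
    (hcode : ∀ p q : List X, p.head? = q.head? → code p = code q → p = q) {ξ c : ℝ} (hξ0 : 0 ≤ ξ)
    (hξ1 : ξ ≤ 1) (hc : 0 ≤ c) {pairs : Finset (Σ _ : List X, Finset (List X))}
    (hpairs : ∀ z ∈ pairs, IsSurgerySet D M Q z.1 z.2 ∧ z.1.length = Q * M ∧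
      CycleSparse H l (k + 1) z.1) :
    ∑ z ∈ pairs, ξ ^ (Q * M) * (ξ ^ (2 * l) * c) ^ z.2.card ≤
      (∑ s ∈ pairs.image fun z => ((pieces M Q z.1).filter (· ∈ z.2)).map code, c ^ s.length) *
        ∑ w ∈ pairs.image fun z => surgery D z.2 (pieces M Q z.1), ξ ^ w.length := by
  rw [Finset.sum_mul_sum, ← Finset.sum_product']
  refine sum_le_sum_of_injOn (fun z => (((pieces M Q z.1).filter (· ∈ z.2)).map code,
    surgery D z.2 (pieces M Q z.1))) (fun z hz => ?_) (fun z hz w hw e => ?_) (fun z hz => ?_)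
    fun _ _ => by positivity
  · exact Finset.mem_product.2 ⟨Finset.mem_image_of_mem _ hz, Finset.mem_image_of_mem _ hz⟩
  · obtain ⟨hS, ht, hsparse⟩ := hpairs z hz
    obtain ⟨hT, ht', hsparse'⟩ := hpairs w hw
    obtain ⟨h1, h2⟩ := hS.eq_of_surgery_eq hM hcode hT ht ht' hsparse hsparse'
      (congrArg Prod.fst e) (congrArg Prod.snd e)
    exact Sigma.ext h1 (heq_of_eq h2)
  · obtain ⟨hS, ht, hsparse⟩ := hpairs z hz
    have hlen := (hS.isAdmissible hM ht hsparse).length_surgery_le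
    rw [length_pieces, hS.length_filter hM ht hsparse.1] at hlen
    rw [List.length_map, hS.length_filter hM ht hsparse.1]
    calc ξ ^ (Q * M) * (ξ ^ (2 * l) * c) ^ z.2.card
        = c ^ z.2.card * ξ ^ (Q * M + 2 * l * z.2.card) := by ring
      _ ≤ c ^ z.2.card * ξ ^ (surgery D z.2 (pieces M Q z.1)).length :=
        mul_le_mul_of_nonneg_left (pow_le_pow_of_le_one hξ0 hξ1 hlen) (by positivity)

/-- At `ξ`, the generating series of the walks from `x` in which vertices repeat only at distance
`l` is at most `C`. The walks are given as in `walkTails`. -/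
def WalkSeriesLE (H : SimpleGraph X) (l : ℕ) (x : X) (ξ C : ℝ) : Prop :=
  ∀ W : Finset (List X), (∀ w ∈ W, (x :: w).IsChain H.Adj ∧ RepeatsOnlyAtDist l w) →
    ∑ w ∈ W, ξ ^ w.length ≤ C

/-- Expanding the power gives a sum over pairs of a walk and a subset of its surgery set. Such a
pair can be recovered from the walk after surgery and the codes of the pieces replaced. -/
theorem exists_sum_pow_mul_one_add_pow_card_le [H.LocallyFinite] [NeZero l]
    (htrans : ∀ x y : X, ∃ φ : H ≃g H, φ x = y) (D : DetourChoice H l k) (hM : 0 < M) (x₀ : X) :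
    ∃ c : ℝ, 0 < c ∧ ∀ {Q x} {ξ C : ℝ} {I : List X → Finset (List X)}, 0 ≤ ξ → ξ ≤ 1 →
      (∀ t ∈ sparseTails H l (k + 1) (Q * M) x, IsSurgerySet D M Q t (I t)) →
      WalkSeriesLE H l x ξ C →
      ∑ t ∈ sparseTails H l (k + 1) (Q * M) x,
        ξ ^ (Q * M) * (1 + ξ ^ (2 * l) * c) ^ (I t).card ≤ 2 * C := by
  obtain ⟨code, hcode, hcode_mem⟩ := exists_code htrans x₀
  set K := walkTails H (M - 1) x₀
  set c : ℝ := (2 * (K.card + 1))⁻¹ with hc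
  have hc0 : 0 < c := by positivity
  have hcK : K.card * c ≤ 1 / 2 := by
    rw [hc, ← div_eq_mul_inv, div_le_div_iff₀ (by positivity) two_pos]
    linarith
  refine ⟨c, hc0, fun {Q x ξ C I} hξ0 hξ1 hI hC => ?_⟩
  have hpair : ∀ z ∈ (sparseTails H l (k + 1) (Q * M) x).sigma fun t => (I t).powerset,
      IsSurgerySet D M Q z.1 z.2 ∧ z.1.length = Q * M ∧ (x :: z.1).IsChain H.Adj ∧
        CycleSparse H l (k + 1) z.1 := fun z hz => by
    obtain ⟨ht, hS⟩ := Finset.mem_sigma.1 hz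
    exact ⟨(hI _ ht).mono (Finset.mem_powerset.1 hS), mem_sparseTails.1 ht⟩
  calc ∑ t ∈ sparseTails H l (k + 1) (Q * M) x, ξ ^ (Q * M) * (1 + ξ ^ (2 * l) * c) ^ (I t).card
      = ∑ z ∈ (sparseTails H l (k + 1) (Q * M) x).sigma fun t => (I t).powerset,
          ξ ^ (Q * M) * (ξ ^ (2 * l) * c) ^ z.2.card := by
        rw [Finset.sum_sigma]
        refine Finset.sum_congr rfl fun t _ => ?_
        rw [← Finset.mul_sum, add_comm, ← Finset.sum_pow_mul_eq_add_pow]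
        simp only [one_pow, mul_one]
    _ ≤ _ := sum_pow_mul_pow_card_le hM hcode hξ0 hξ1 hc0.le fun z hz =>
        (hpair z hz).imp_right (And.imp_right And.right)
    _ ≤ 2 * C := by
        refine mul_le_mul (sum_pow_length_le_two hc0.le hcK ?_) (hC _ ?_)
          (Finset.sum_nonneg fun _ _ => by positivity) zero_le_two
        · refine Finset.forall_mem_image.2 fun z hz a ha => ?_
          obtain ⟨-, ht, hchain, -⟩ := hpair z hz
          exact mem_walkTails_of_mem_map_pieces hcode_mem ht hchain
            (List.map_subset _ (List.filter_subset_self _) ha)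
        · refine Finset.forall_mem_image.2 fun z hz => ?_
          obtain ⟨hS, ht, hchain, hsparse⟩ := hpair z hz
          have hadm := hS.isAdmissible hM ht hsparse
          exact ⟨hadm.isChain_cons_surgery (by rwa [flatten_pieces ht]),
            hadm.repeatsOnlyAtDist_surgery⟩

/-! ### Exponential growth -/

theorem exists_one_lt_pow_lt {a : ℝ} (ha : 1 < a) (n : ℕ) : ∃ κ : ℝ, 1 < κ ∧ κ ^ n < a := by
  have h : Tendsto (fun κ : ℝ => κ ^ n) (𝓝[>] 1) (𝓝 1) :=
    ((continuous_pow n).tendsto' 1 1 (one_pow n)).mono_left nhdsWithin_le_nhds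
  exact (eventually_mem_nhdsWithin.and (h.eventually_lt_const ha)).exists

theorem exists_lt_one_lt_mul_pow {a b r : ℝ} (hab : a < b) (hr : r < 1) (n : ℕ) :
    ∃ ρ, r < ρ ∧ ρ < 1 ∧ a < b * ρ ^ n := by
  have h : Tendsto (fun ρ : ℝ => b * ρ ^ n) (𝓝[<] 1) (𝓝 b) :=
    ((continuous_const.mul (continuous_pow n)).tendsto' 1 b (by simp)).mono_left
      nhdsWithin_le_nhds
  have hr : ∀ᶠ ρ in 𝓝[<] (1 : ℝ), r < ρ := nhdsWithin_le_nhds (lt_mem_nhds hr)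
  exact (hr.and (eventually_mem_nhdsWithin.and (h.eventually_const_lt hab))).exists

theorem exists_add_pow_mul_le {b m : ℝ} (hbm : b < m) (s : ℝ) :
    ∃ u : ℝ, 0 < u ∧ u < 1 ∧ ∃ e : ℕ, b + u ^ e * s ≤ m * u ^ 2 := by
  obtain ⟨u, hu0, hu1, hu⟩ := exists_lt_one_lt_mul_pow hbm one_pos 2
  have h : Tendsto (fun e : ℕ => b + u ^ e * s) atTop (𝓝 b) := by
    simpa using ((tendsto_pow_atTop_nhds_zero_of_lt_one hu0.le hu1).mul_const s).const_add b
  obtain ⟨e, he⟩ := (h.eventually_le_const hu).exists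
  exact ⟨u, hu0, hu1, e, he⟩

theorem card_filter_heavyCount_lt_le [H.LocallyFinite]
    (htrans : ∀ x y : X, ∃ φ : H ≃g H, φ x = y) {e Q : ℕ} (hQ : 0 < Q) (x : X) {u μ : ℝ}
    (hμ : 0 ≤ μ) (hu0 : 0 < u) (hu1 : u ≤ 1)
    (h : (sparseTails H l k M x).card + u ^ e * (sparseTails H l (k + 1) M x).card ≤
      μ ^ M * u ^ 2) :
    (((sparseTails H l (k + 1) (Q * M) x).filter (e * heavyCount H l k M Q · < Q)).card : ℝ) ≤
      u * μ ^ (Q * M) := by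
  set s := (sparseTails H l (k + 1) (Q * M) x).filter (e * heavyCount H l k M Q · < Q)
  suffices hsu : s.card * u ^ Q ≤ u ^ Q * μ ^ (Q * M) * u ^ Q from calc
    (s.card : ℝ) ≤ u ^ Q * μ ^ (Q * M) := le_of_mul_le_mul_right hsu (by positivity)
    _ ≤ u * μ ^ (Q * M) :=
      mul_le_mul_of_nonneg_right (pow_le_of_le_one hu0.le hu1 hQ.ne') (by positivity)
  calc s.card * u ^ Q = ∑ _t ∈ s, u ^ Q := by rw [Finset.sum_const, nsmul_eq_mul]
    _ ≤ ∑ t ∈ s, (u ^ e) ^ heavyCount H l k M Q t := Finset.sum_le_sum fun _ ht => by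
        rw [← pow_mul]
        exact pow_le_pow_of_le_one hu0.le hu1 (Finset.mem_filter.1 ht).2.le
    _ ≤ ∑ t ∈ sparseTails H l (k + 1) (Q * M) x, (u ^ e) ^ heavyCount H l k M Q t :=
        Finset.sum_le_sum_of_subset_of_nonneg (Finset.filter_subset _ _) fun _ _ _ => by positivity
    _ ≤ _ := sum_pow_heavyCount_le htrans M Q x x (by positivity)
    _ ≤ (μ ^ M * u ^ 2) ^ Q := by gcongr
    _ = u ^ Q * μ ^ (Q * M) * u ^ Q := by ring

theorem card_filter_mul_pow_le_sum_pow {ι : Type*} {s : Finset ι} {g n : ι → ℕ} {e β Q : ℕ}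
    (hg : ∀ i ∈ s, g i ≤ n i * β) {a κ : ℝ} (hκ : 1 ≤ κ) (hκa : κ ^ (e * β) ≤ a) :
    (s.filter fun i => ¬e * g i < Q).card * κ ^ Q ≤ ∑ i ∈ s, a ^ n i := by
  have ha : 0 ≤ a := le_trans (by positivity) hκa
  calc _ = ∑ i ∈ s with ¬e * g i < Q, κ ^ Q := by rw [Finset.sum_const, nsmul_eq_mul]
    _ ≤ ∑ i ∈ s with ¬e * g i < Q, a ^ n i := Finset.sum_le_sum fun i hi => ?_
    _ ≤ ∑ i ∈ s, a ^ n i :=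
      Finset.sum_le_sum_of_subset_of_nonneg (Finset.filter_subset _ _) fun _ _ _ => by positivity
  obtain ⟨hi, hQ⟩ := Finset.mem_filter.1 hi
  have hQ : Q ≤ e * β * n i := calc
    Q ≤ e * g i := not_lt.1 hQ
    _ ≤ e * (n i * β) := Nat.mul_le_mul_left _ (hg i hi)
    _ = e * β * n i := by ring
  calc κ ^ Q ≤ κ ^ (e * β * n i) := pow_le_pow_right₀ hκ hQ
    _ = (κ ^ (e * β)) ^ n i := pow_mul _ _ _
    _ ≤ a ^ n i := by gcongr

/-- If walks have few heavy pieces, there are few of them; if they have many, surgery produces too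
many walks. -/
theorem one_sub_mul_pow_le_of_le_card [H.LocallyFinite]
    (htrans : ∀ x y : X, ∃ φ : H ≃g H, φ x = y) {D : DetourChoice H l k} {e Q β : ℕ} (hQ : 0 < Q)
    {x : X} {u μ ξ κ a B : ℝ} (hμ : 0 ≤ μ) (hu0 : 0 < u) (hu1 : u ≤ 1) (hξ : 0 ≤ ξ) (hκ : 1 ≤ κ)
    (hκa : κ ^ (e * β) ≤ a)
    (hfew : (sparseTails H l k M x).card + u ^ e * (sparseTails H l (k + 1) M x).card ≤
      μ ^ M * u ^ 2)
    (hlarge : μ ^ (Q * M) ≤ (sparseTails H l (k + 1) (Q * M) x).card)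
    (hβ : ∀ t ∈ sparseTails H l (k + 1) (Q * M) x,
      ∃ I, IsSurgerySet D M Q t I ∧ heavyCount H l k M Q t ≤ I.card * β)
    (hB : ∀ I : List X → Finset (List X),
      (∀ t ∈ sparseTails H l (k + 1) (Q * M) x, IsSurgerySet D M Q t (I t)) →
      ∑ t ∈ sparseTails H l (k + 1) (Q * M) x, ξ ^ (Q * M) * a ^ (I t).card ≤ B) :
    (1 - u) * ((ξ * μ) ^ M * κ) ^ Q ≤ B := by
  choose! I hI hIβ using hβ
  set s := sparseTails H l (k + 1) (Q * M) x
  have hcard : ((s.filter (e * heavyCount H l k M Q · < Q)).card : ℝ) +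
      (s.filter fun t => ¬e * heavyCount H l k M Q t < Q).card = s.card := by
    exact_mod_cast s.card_filter_add_card_filter_not (e * heavyCount H l k M Q · < Q)
  have hmany : (1 - u) * μ ^ (Q * M) ≤
      (s.filter fun t => ¬e * heavyCount H l k M Q t < Q).card := by
    linarith [card_filter_heavyCount_lt_le htrans hQ x hμ hu0 hu1 hfew]
  calc (1 - u) * ((ξ * μ) ^ M * κ) ^ Q
      = ξ ^ (Q * M) * ((1 - u) * μ ^ (Q * M) * κ ^ Q) := by ring
    _ ≤ ξ ^ (Q * M) * ((s.filter fun t => ¬e * heavyCount H l k M Q t < Q).card * κ ^ Q) := by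
      gcongr
    _ ≤ ξ ^ (Q * M) * ∑ t ∈ s, a ^ (I t).card := by
      gcongr
      exact card_filter_mul_pow_le_sum_pow hIβ hκ hκa
    _ ≤ B := by
      rw [Finset.mul_sum]
      exact hB I hI

theorem exists_card_sparseTails_succ_lt [H.LocallyFinite] [NeZero l]
    (htrans : ∀ x y : X, ∃ φ : H ≃g H, φ x = y) {x : X} {μ : ℝ} (hμ : 1 ≤ μ)
    (hseries : ∀ ξ : ℝ, 0 < ξ → ξ * μ < 1 → ∃ C, WalkSeriesLE H l x ξ C) (hM : 0 < M)
    (hlt : ((sparseTails H l k M x).card : ℝ) < μ ^ M) :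
    ∃ N, 0 < N ∧ ((sparseTails H l (k + 1) N x).card : ℝ) < μ ^ N := by
  by_contra! hlarge
  have hμ0 : 0 < μ := one_pos.trans_le hμ
  obtain ⟨D⟩ : Nonempty (DetourChoice H l k) := inferInstance
  obtain ⟨β, hβ⟩ := exists_isSurgerySet_heavyCount_le_mul htrans x D
  obtain ⟨c, hc, hsurgery⟩ := exists_sum_pow_mul_one_add_pow_card_le htrans D hM x
  obtain ⟨u, hu0, hu1, e, hfew⟩ := exists_add_pow_mul_le hlt (sparseTails H l (k + 1) M x).card
  obtain ⟨κ, hκ, hκβ⟩ := exists_one_lt_pow_lt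
    (lt_add_of_pos_right 1 (by positivity : 0 < (1 / 2 / μ) ^ (2 * l) * c)) (e * β)
  obtain ⟨ρ, hρ2, hρ1, hρκ⟩ := exists_lt_one_lt_mul_pow hκ one_half_lt_one M
  have hξμ : ρ / μ * μ = ρ := div_mul_cancel₀ _ hμ0.ne'
  have hξ0 : 0 < ρ / μ := div_pos (one_half_pos.trans hρ2) hμ0
  have hξ1 : ρ / μ ≤ 1 := (div_le_one hμ0).2 (hρ1.le.trans hμ)
  obtain ⟨C, hC⟩ := hseries (ρ / μ) hξ0 (hξμ.trans_lt hρ1)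
  have hκξ : κ ^ (e * β) ≤ 1 + (ρ / μ) ^ (2 * l) * c := hκβ.le.trans (by gcongr)
  obtain ⟨n, hn⟩ := pow_unbounded_of_one_lt (2 * C / (1 - u)) hρκ
  refine hn.not_ge ?_
  calc (κ * ρ ^ M) ^ n ≤ (κ * ρ ^ M) ^ (n + 1) := pow_le_pow_right₀ hρκ.le n.le_succ
    _ ≤ 2 * C / (1 - u) := by
      rw [le_div_iff₀' (sub_pos.2 hu1), mul_comm κ, ← hξμ]
      refine one_sub_mul_pow_le_of_le_card htrans n.succ_pos hμ0.le hu0 hu1.le hξ0.le hκ.le hκξ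
        hfew (hlarge _ (Nat.mul_pos n.succ_pos hM)) (fun t ht => ?_) fun I hI =>
          hsurgery hξ0.le hξ1 hI hC
      obtain ⟨hlen, -, hsparse⟩ := mem_sparseTails.1 ht
      exact hβ M (n + 1) t hM hlen hsparse.1

theorem sparseTails_zero_one_eq_empty [H.LocallyFinite]
    (htrans : ∀ x y : X, ∃ φ : H ≃g H, φ x = y) (hcycle : (cycleSets H l).Nonempty) (x : X) :
    sparseTails H l 0 1 x = ∅ := by
  refine Finset.eq_empty_of_forall_notMem fun t ht => ?_
  obtain ⟨hlen, -, -, hvisits⟩ := mem_sparseTails.1 ht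
  obtain ⟨y, rfl⟩ := List.length_eq_one_iff.1 hlen
  obtain ⟨C, f, hf, rfl⟩ := hcycle
  obtain ⟨φ, rfl⟩ := htrans (f 0) y
  have h := hvisits _ (image_mem_cycleSets ⟨f, hf, rfl⟩ φ)
  simp [visits] at h

theorem exists_card_sparseTails_lt [H.LocallyFinite] [NeZero l]
    (htrans : ∀ x y : X, ∃ φ : H ≃g H, φ x = y) (hcycle : (cycleSets H l).Nonempty) {x : X}
    {μ : ℝ} (hμ : 1 ≤ μ)
    (hseries : ∀ ξ : ℝ, 0 < ξ → ξ * μ < 1 → ∃ C, WalkSeriesLE H l x ξ C) (k : ℕ) :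
    ∃ M, 0 < M ∧ ((sparseTails H l k M x).card : ℝ) < μ ^ M := by
  induction k with
  | zero =>
    refine ⟨1, one_pos, ?_⟩
    rw [sparseTails_zero_one_eq_empty htrans hcycle, Finset.card_empty, Nat.cast_zero]
    positivity
  | succ k ih =>
    obtain ⟨M, hM, hlt⟩ := ih
    exact exists_card_sparseTails_succ_lt htrans hμ hseries hM hlt

theorem exists_le_mul_pow_of_submultiplicative {s : ℕ → ℝ} (hs0 : ∀ n, 0 ≤ s n)
    (hs : ∀ m n, s (m + n) ≤ s m * s n) (hM : 0 < M) {a : ℝ} (ha : 0 < a) (h : s M ≤ a ^ M) :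
    ∃ C, 0 < C ∧ ∀ n, s n ≤ C * a ^ n := by
  have hnonneg : ∀ i ∈ Finset.range M, 0 ≤ s i / a ^ i := fun i _ =>
    div_nonneg (hs0 i) (by positivity)
  refine ⟨1 + ∑ i ∈ Finset.range M, s i / a ^ i,
    add_pos_of_pos_of_nonneg one_pos (Finset.sum_nonneg hnonneg), fun n => ?_⟩
  induction n using Nat.strong_induction_on with
  | _ n ih =>
    rcases lt_or_ge n M with hn | hn
    · rw [← div_le_iff₀ (by positivity)]
      linarith [Finset.single_le_sum hnonneg (Finset.mem_range.2 hn)]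
    · obtain ⟨m, rfl⟩ := Nat.exists_eq_add_of_le hn
      calc s (M + m) ≤ s M * s m := hs M m
        _ ≤ a ^ M * (_ * a ^ m) := mul_le_mul h (ih m (by omega)) (hs0 m) (by positivity)
        _ = _ := by ring

theorem limsup_rpow_le_of_le_mul_pow {s : ℕ → ℝ} (hs0 : ∀ n, 0 ≤ s n) {a C : ℝ} (ha : 0 < a)
    (hC : 0 < C) (h : ∀ n, s n ≤ C * a ^ n) :
    limsup (fun n : ℕ => s n ^ ((1 : ℝ) / n)) atTop ≤ a := by
  have hlim : Tendsto (fun n : ℕ => C ^ ((1 : ℝ) / n) * a) atTop (𝓝 a) := by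
    simpa using ((Real.continuousAt_const_rpow hC.ne').tendsto.comp
      tendsto_one_div_atTop_nhds_zero_nat).mul_const a
  rw [← hlim.limsup_eq]
  refine limsup_le_limsup ?_ (IsBoundedUnder.isCoboundedUnder_le
    (isBoundedUnder_of ⟨0, fun n => Real.rpow_nonneg (hs0 n) _⟩)) hlim.isBoundedUnder_le
  filter_upwards [eventually_ne_atTop 0] with n hn
  calc s n ^ ((1 : ℝ) / n) ≤ (C * a ^ n) ^ ((1 : ℝ) / n) :=
        Real.rpow_le_rpow (hs0 n) (h n) (by positivity)
    _ = C ^ ((1 : ℝ) / n) * a := by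
        rw [Real.mul_rpow hC.le (by positivity), one_div, Real.pow_rpow_inv_natCast ha.le hn]

theorem exists_le_mul_pow_of_tendsto {s : ℕ → ℝ} (hs0 : ∀ n, 0 ≤ s n) {μ ν : ℝ} (hμν : μ < ν)
    (hν : 0 < ν) (hμ : Tendsto (fun n : ℕ => s n ^ ((1 : ℝ) / n)) atTop (𝓝 μ)) :
    ∃ C, ∀ n, s n ≤ C * ν ^ n := by
  have h : ∀ᶠ n in atTop, s n / ν ^ n ≤ 1 := by
    filter_upwards [hμ.eventually_lt_const hμν, eventually_ne_atTop 0] with n hlt hn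
    rw [div_le_one (by positivity), ← Real.rpow_inv_natCast_pow (hs0 n) hn, ← one_div]
    exact pow_le_pow_left₀ (Real.rpow_nonneg (hs0 n) _) hlt.le n
  obtain ⟨C, hC⟩ := (isBoundedUnder_of_eventually_le h).bddAbove_range
  exact ⟨C, fun n => (div_le_iff₀ (by positivity)).1 (hC ⟨n, rfl⟩)⟩

theorem sum_pow_length_le {W : Finset (List X)} {C ν ξ : ℝ} (hν : 0 ≤ ν) (hξ : 0 ≤ ξ)
    (hνξ : ν * ξ < 1) (hcard : ∀ n, ((W.filter (·.length = n)).card : ℝ) ≤ C * ν ^ n) :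
    ∑ w ∈ W, ξ ^ w.length ≤ C * (1 - ν * ξ)⁻¹ := by
  have hC : 0 ≤ C := by simpa using (Nat.cast_nonneg _).trans (hcard 0)
  have hq : 0 ≤ ν * ξ := by positivity
  have hle : ∀ n, ∑ w ∈ W with w.length = n, ξ ^ w.length ≤ C * (ν * ξ) ^ n := fun n => calc
    _ = (W.filter (·.length = n)).card * ξ ^ n := by
      rw [Finset.sum_congr rfl fun w hw => by rw [(Finset.mem_filter.1 hw).2], Finset.sum_const,
        nsmul_eq_mul]
    _ ≤ C * ν ^ n * ξ ^ n := by gcongr; exact hcard n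
    _ = C * (ν * ξ) ^ n := by ring
  rw [← tsum_geometric_of_lt_one hq hνξ, ← tsum_mul_left]
  calc ∑ w ∈ W, ξ ^ w.length
      = ∑ n ∈ W.image List.length, ∑ w ∈ W with w.length = n, ξ ^ w.length :=
        (Finset.sum_fiberwise_of_maps_to (fun w => Finset.mem_image_of_mem _) _).symm
    _ ≤ ∑ n ∈ W.image List.length, C * (ν * ξ) ^ n := Finset.sum_le_sum fun n _ => hle n
    _ ≤ _ := ((summable_geometric_of_lt_one hq hνξ).mul_left C).sum_le_tsum _
      fun _ _ => by positivity

/-! ### Self-avoiding walks -/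

section SelfAvoiding

variable {V : Type*} {G : SimpleGraph V}

theorem exists_walk_support_eq {v : V} {t : List V} (h : (v :: t).IsChain G.Adj) :
    ∃ (w : V) (p : G.Walk v w), p.support = v :: t :=
  ⟨_, .ofSupport (v :: t) (List.cons_ne_nil v t) h, SimpleGraph.Walk.support_ofSupport _ h⟩

theorem tail_support_mem_walkTails [G.LocallyFinite] {u v : V} (p : G.Walk u v) :
    p.support.tail ∈ walkTails G p.length u := by
  rw [mem_walkTails, p.cons_tail_support]
  exact ⟨by simp, p.isChain_adj_support⟩

/-- The self-avoiding walks in `walkTails G n v`. -/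
noncomputable def sawTails (G : SimpleGraph V) [G.LocallyFinite] (n : ℕ) (v : V) :
    Finset (List V) :=
  (walkTails G n v).filter fun t => (v :: t).Nodup

theorem tail_support_mem_sawTails [G.LocallyFinite] {u v : V} {p : G.Walk u v} (hp : p.IsPath) :
    p.support.tail ∈ sawTails G p.length u :=
  Finset.mem_filter.2
    ⟨tail_support_mem_walkTails p, p.cons_tail_support ▸ hp.support_nodup⟩

theorem sawCount_eq_card_sawTails [G.LocallyFinite] (n : ℕ) (v : V) :
    sawCount G v n = (sawTails G n v).card := by
  rw [sawCount, ← Nat.card_eq_finsetCard]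
  refine Nat.card_eq_of_bijective (fun p => ⟨p.1.2.support.tail, by
    simpa only [p.2.2] using tail_support_mem_sawTails p.2.1⟩) ⟨?_, ?_⟩
  · rintro ⟨⟨w, p⟩, hp, hpn⟩ ⟨⟨w', p'⟩, hp', hpn'⟩ h
    have hsupport : p.support = p'.support := by
      rw [← p.cons_tail_support, ← p'.cons_tail_support, Subtype.mk.inj h]
    obtain rfl : w = w' := by
      rw [← p.getLast_support, ← p'.getLast_support]
      simp only [hsupport]
    obtain rfl := SimpleGraph.Walk.ext_support hsupport
    rfl
  · rintro ⟨t, ht⟩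
    obtain ⟨hwalk, hnodup⟩ := Finset.mem_filter.1 ht
    obtain ⟨hlen, hchain⟩ := mem_walkTails.1 hwalk
    obtain ⟨w, p, hp⟩ := exists_walk_support_eq hchain
    refine ⟨⟨⟨w, p⟩, .mk' (hp ▸ hnodup), ?_⟩, by simp only [hp, List.tail_cons]⟩
    simpa [hp, hlen] using p.length_support.symm

theorem one_le_sawCount [Infinite V] [G.LocallyFinite] (hconn : G.Connected) (n : ℕ) (v : V) :
    1 ≤ sawCount G v n := by
  obtain ⟨w, hw⟩ := Infinite.exists_notMem_finset
    (((Finset.range n).biUnion fun m => walkTails G m v).image fun t => (v :: t).getLast (by simp))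
  obtain ⟨p, hp⟩ := hconn.exists_isPath v w
  have hn : n ≤ p.length := by
    by_contra! hlt
    refine hw (Finset.mem_image.2 ⟨p.support.tail, Finset.mem_biUnion.2
      ⟨_, Finset.mem_range.2 hlt, tail_support_mem_walkTails p⟩, ?_⟩)
    simp only [p.cons_tail_support, p.getLast_support]
  rw [sawCount_eq_card_sawTails, Nat.one_le_iff_ne_zero, Finset.card_ne_zero]
  have hmem := tail_support_mem_sawTails (hp.take n)
  rw [p.take_length, min_eq_left hn] at hmem
  exact ⟨_, hmem⟩

theorem sawCount_le_card_sparseTails [H.LocallyFinite] [NeZero l] (n : ℕ) (x : X) :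
    sawCount H x n ≤ (sparseTails H l l n x).card := by
  rw [sawCount_eq_card_sawTails]
  refine Finset.card_le_card fun t ht => ?_
  obtain ⟨ht, hnodup⟩ := Finset.mem_filter.1 ht
  exact Finset.mem_filter.2 ⟨ht, cycleSparse_self_of_nodup hnodup.of_cons⟩

theorem isPath_of_getVert_ne {u v : V} {p : G.Walk u v}
    (h : ∀ i j, j ≤ p.length → i < j → p.getVert i ≠ p.getVert j) : p.IsPath := by
  refine (SimpleGraph.Walk.IsPath.getVert_injOn_iff p).1 fun i hi j hj e => ?_
  rcases lt_trichotomy i j with hij | hij | hij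
  exacts [absurd e (h i j hj hij), hij, absurd e.symm (h j i hi hij)]

theorem exists_isCycle_of_getVert_eq (hl : 3 ≤ l) {u v : V} {p : G.Walk u v} {i : ℕ}
    (hi : i + l ≤ p.length) (hil : p.getVert i = p.getVert (i + l))
    (hp : ∀ a b, a < b → b < l → p.getVert (i + (a + 1)) ≠ p.getVert (i + (b + 1))) :
    ∃ c : G.Walk (p.getVert i) (p.getVert i), c.IsCycle ∧ c.length = l := by
  set c := ((p.drop i).take l).copy rfl
    ((p.drop_getVert i l).trans hil.symm) with hc
  have hlen : c.length = l := by
    rw [hc, SimpleGraph.Walk.length_copy, SimpleGraph.Walk.take_length,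
      SimpleGraph.Walk.drop_length]
    omega
  have hget : ∀ a < l, c.tail.getVert a = p.getVert (i + (a + 1)) := fun a ha => by
    rw [SimpleGraph.Walk.getVert_tail, hc, SimpleGraph.Walk.getVert_copy,
      SimpleGraph.Walk.take_getVert, SimpleGraph.Walk.drop_getVert, min_eq_right ha]
  refine ⟨c, SimpleGraph.Walk.isCycle_iff_isPath_tail_and_le_length.2 ⟨?_, hlen ▸ hl⟩, hlen⟩
  have htail : c.tail.length < l := by
    have := c.length_tail_add_one (by rw [SimpleGraph.Walk.not_nil_iff_lt_length]; omega)
    omega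
  refine isPath_of_getVert_ne fun a b hb hab => ?_
  rw [hget a (by omega), hget b (by omega)]
  exact hp a b hab (by omega)

theorem RepeatsOnlyAtDist.nodup_of_isChain (hl : 3 ≤ l)
    (hno : ∀ (u : V) (c : G.Walk u u), c.IsCycle → c.length ≠ l) {v : V} {t : List V}
    (h : (v :: t).IsChain G.Adj) (hrep : RepeatsOnlyAtDist l (v :: t)) : (v :: t).Nodup := by
  obtain ⟨w, p, hp⟩ := exists_walk_support_eq h
  rw [← hp] at hrep ⊢
  have hget : ∀ i j, j ≤ p.length → i < j → p.getVert i = p.getVert j → j = i + l := by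
    intro i j hj hij e
    refine hrep i j (by rw [p.length_support]; omega) hij ?_
    rwa [p.getVert_eq_support_getElem (by omega), p.getVert_eq_support_getElem hj] at e
  refine (isPath_of_getVert_ne fun i j hj hij e => ?_).support_nodup
  obtain rfl := hget i j hj hij e
  obtain ⟨c, hc, hcl⟩ := exists_isCycle_of_getVert_eq hl hj e fun a b hab hb e => by
    have := hget _ _ (by omega) (by omega) e
    omega
  exact hno _ c hc hcl

end SelfAvoiding

/-! ### Lifting walks -/

theorem card_filter_length_succ_le [H.LocallyFinite] {x : X} {W : Finset (List X)}
    (hW : ∀ w ∈ W, (x :: w).IsChain H.Adj ∧ RepeatsOnlyAtDist l w) {n s : ℕ}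
    (hs : ∀ y, ((walkTails H n y).filter fun t => RepeatsOnlyAtDist l (y :: t)).card ≤ s) :
    (W.filter (·.length = n + 1)).card ≤ H.degree x * s := by
  rw [← H.card_neighborFinset_eq_degree]
  calc _ ≤ ((H.neighborFinset x).biUnion fun y =>
        ((walkTails H n y).filter fun t => RepeatsOnlyAtDist l (y :: t)).image (y :: ·)).card := ?_
    _ ≤ _ := Finset.card_biUnion_le_card_mul _ _ _ fun y _ => Finset.card_image_le.trans (hs y)
  refine Finset.card_le_card fun w hw => ?_
  obtain ⟨hw, hlen⟩ := Finset.mem_filter.1 hw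
  obtain ⟨y, t, rfl⟩ := List.exists_cons_of_length_eq_add_one hlen
  obtain ⟨hchain, hrep⟩ := hW _ hw
  rw [List.isChain_cons_cons] at hchain
  refine Finset.mem_biUnion.2 ⟨y, (H.mem_neighborFinset x y).2 hchain.1,
    Finset.mem_image_of_mem _ (Finset.mem_filter.2 ⟨mem_walkTails.2 ⟨?_, hchain.2⟩, hrep⟩)⟩
  simpa using hlen

section Lift

variable {V : Type*} {G : SimpleGraph V} {π : V → X}

/-- Edges lift along `π` with a prescribed lift of their first vertex, as they do along the
projection onto the quotient by a group of automorphisms. -/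
def LiftsAdj (G : SimpleGraph V) (H : SimpleGraph X) (π : V → X) : Prop :=
  ∀ ⦃u z⦄, H.Adj (π u) z → ∃ w, G.Adj u w ∧ π w = z

theorem liftsAdj_quotGraph {A : Subgroup (Equiv.Perm V)}
    (hA : ∀ α ∈ A, ∀ u w, G.Adj (α u) (α w) ↔ G.Adj u w) :
    LiftsAdj G (quotGraph G A) (Quotient.mk (MulAction.orbitRel A V)) := by
  have hlift : ∀ {u u' w : V}, G.Adj u' w → Quotient.mk (MulAction.orbitRel A V) u' = ⟦u⟧ →
      ∃ w', G.Adj u w' ∧ Quotient.mk (MulAction.orbitRel A V) w' = ⟦w⟧ := by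
    intro u u' w hadj hu
    obtain ⟨α, rfl⟩ : u' ∈ MulAction.orbit A u := Quotient.exact hu
    refine ⟨α⁻¹ • w, (hA α α.2 _ _).1 ?_, Quotient.sound (MulAction.mem_orbit w α⁻¹)⟩
    have hw : α.1 (α⁻¹ • w) = w := smul_inv_smul α w
    rwa [hw]
  intro u z h
  obtain ⟨-, ⟨u', w, hadj, hu, rfl⟩ | ⟨w, u', hadj, rfl, hu⟩⟩ := (SimpleGraph.fromRel_adj _ _ _).1 h
  exacts [hlift hadj hu, hlift hadj.symm hu]

namespace LiftsAdj

theorem exists_apply_eq (hπ : LiftsAdj G H π) (htrans : ∀ x y : X, ∃ φ : H ≃g H, φ x = y) (v : V)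
    (x : X) : ∃ π' : V → X, LiftsAdj G H π' ∧ π' v = x := by
  obtain ⟨φ, hφ⟩ := htrans (π v) x
  refine ⟨φ ∘ π, fun u z h => ?_, hφ⟩
  obtain ⟨w, hw, hwz⟩ := hπ (φ.map_adj_iff.1 (by simpa using h) : H.Adj (π u) (φ.symm z))
  exact ⟨w, hw, by simp [hwz]⟩

theorem neighborSet_subset (hπ : LiftsAdj G H π) (v : V) :
    H.neighborSet (π v) ⊆ π '' G.neighborSet v :=
  fun _ hz => hπ hz

theorem exists_isChain_map_eq (hπ : LiftsAdj G H π) {v : V} {t : List X}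
    (h : (π v :: t).IsChain H.Adj) :
    ∃ t' : List V, (v :: t').IsChain G.Adj ∧ t'.map π = t := by
  induction t generalizing v with
  | nil => exact ⟨[], .singleton v, rfl⟩
  | cons a t ih =>
    rw [List.isChain_cons_cons] at h
    obtain ⟨w, hw, rfl⟩ := hπ h.1
    obtain ⟨t', hchain, rfl⟩ := ih h.2
    exact ⟨w :: t', List.isChain_cons_cons.2 ⟨hw, hchain⟩, rfl⟩

variable [G.LocallyFinite] [H.LocallyFinite]

theorem card_filter_repeatsOnlyAtDist_le (hπ : LiftsAdj G H π) (hl : 3 ≤ l)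
    (hno : ∀ (u : V) (c : G.Walk u u), c.IsCycle → c.length ≠ l) (n : ℕ) (v : V) :
    ((walkTails H n (π v)).filter fun t => RepeatsOnlyAtDist l (π v :: t)).card ≤
      sawCount G v n := by
  rw [sawCount_eq_card_sawTails]
  refine Finset.card_le_card_of_surjOn (List.map π) fun t ht => ?_
  obtain ⟨ht, hrep⟩ := Finset.mem_filter.1 ht
  obtain ⟨hlen, hchain⟩ := mem_walkTails.1 ht
  obtain ⟨t', hchain', rfl⟩ := hπ.exists_isChain_map_eq hchain
  refine ⟨t', Finset.mem_filter.2 ⟨mem_walkTails.2 ⟨by simpa using hlen, hchain'⟩, ?_⟩, rfl⟩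
  rw [← List.map_cons] at hrep
  exact hrep.of_map.nodup_of_isChain hl hno hchain'

theorem exists_walkSeriesLE (hπ : LiftsAdj G H π) (htrans : ∀ x y : X, ∃ φ : H ≃g H, φ x = y)
    (hl : 3 ≤ l) (hno : ∀ (u : V) (c : G.Walk u u), c.IsCycle → c.length ≠ l) (x : X) {v : V}
    {μ : ℝ} (hμ : Tendsto (fun n : ℕ => (sawCount G v n : ℝ) ^ ((1 : ℝ) / n)) atTop (𝓝 μ))
    {ξ : ℝ} (hξ : 0 < ξ) (hξμ : ξ * μ < 1) : ∃ C, WalkSeriesLE H l x ξ C := by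
  obtain ⟨ν, hμν, hνξ⟩ := exists_between ((lt_div_iff₀' hξ).2 hξμ)
  have hν : 0 < ν := (ge_of_tendsto' hμ fun n => by positivity).trans_lt hμν
  obtain ⟨C, hC⟩ := exists_le_mul_pow_of_tendsto (fun n => (sawCount G v n).cast_nonneg) hμν hν hμ
  have hC0 : 0 ≤ C := by simpa using (Nat.cast_nonneg _).trans (hC 0)
  refine ⟨_, fun W hW => sum_pow_length_le (C := 1 + H.degree x * C / ν) hν.le hξ.le
    ((lt_div_iff₀ hξ).1 hνξ) fun n => ?_⟩
  cases n with
  | zero =>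
    have hle : (W.filter (·.length = 0)).card ≤ 1 := Finset.card_le_one.2 fun s hs t ht => by
      rw [List.length_eq_zero_iff.1 (Finset.mem_filter.1 hs).2,
        List.length_eq_zero_iff.1 (Finset.mem_filter.1 ht).2]
    calc ((W.filter (·.length = 0)).card : ℝ) ≤ 1 := by exact_mod_cast hle
      _ ≤ (1 + H.degree x * C / ν) * ν ^ 0 := by
        rw [pow_zero, mul_one]
        exact le_add_of_nonneg_right (by positivity)
  | succ n =>
    have hle : (W.filter (·.length = n + 1)).card ≤ H.degree x * sawCount G v n :=
      card_filter_length_succ_le hW fun y => by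
        obtain ⟨π', hπ', rfl⟩ := hπ.exists_apply_eq htrans v y
        exact hπ'.card_filter_repeatsOnlyAtDist_le hl hno n v
    calc ((W.filter (·.length = n + 1)).card : ℝ) ≤ H.degree x * sawCount G v n := by
          exact_mod_cast hle
      _ ≤ H.degree x * (C * ν ^ n) := by gcongr; exact hC n
      _ = H.degree x * C / ν * ν ^ (n + 1) := by rw [pow_succ]; field_simp
      _ ≤ (1 + H.degree x * C / ν) * ν ^ (n + 1) := by
        gcongr
        exact le_add_of_nonneg_left zero_le_one

end LiftsAdj

end Lift

end SAW

theorem quotient_graph_free_strict_inequality_general {V X : Type*} [Infinite V]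
    {G : SimpleGraph V} {H : SimpleGraph X} (hconn : G.Connected)
    (hlf : ∀ v, (G.neighborSet v).Finite) {π : V → X} (hπ : SAW.LiftsAdj G H π)
    (htrans : ∀ x y : X, ∃ φ : H ≃g H, φ x = y) {l : ℕ}
    (hcycle : ∃ (x : X) (c : H.Walk x x), c.IsCycle ∧ c.length = l)
    (hno : ∀ (u : V) (c : G.Walk u u), c.IsCycle → c.length ≠ l) (v : V) {μ : ℝ}
    (hμ : Tendsto (fun n : ℕ => (sawCount G v n : ℝ) ^ ((1 : ℝ) / n)) atTop (nhds μ)) :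
    limsup (fun n : ℕ => (sawCount H (π v) n : ℝ) ^ ((1 : ℝ) / n)) atTop < μ := by
  obtain ⟨x, c, hc, rfl⟩ := hcycle
  have hl := hc.three_le_length
  have : NeZero c.length := ⟨by omega⟩
  let _ : G.LocallyFinite := fun u => (hlf u).fintype
  let _ : H.LocallyFinite := fun y => by
    choose π' hπ' hy using hπ.exists_apply_eq htrans v
    exact (((hlf v).image _).subset (hy y ▸ (hπ' y).neighborSet_subset v)).fintype
  have hμ1 : 1 ≤ μ := ge_of_tendsto' hμ fun n =>
    Real.one_le_rpow (by exact_mod_cast SAW.one_le_sawCount hconn n v) (by positivity)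
  have hμ0 : 0 < μ := one_pos.trans_le hμ1
  obtain ⟨M, hM, hlt⟩ := SAW.exists_card_sparseTails_lt htrans (SAW.cycleSets_nonempty hc)
    (x := π v) hμ1 (fun ξ => hπ.exists_walkSeriesLE htrans hl hno (π v) hμ) c.length
  obtain ⟨ρ, hρ0, hρ1, hρ⟩ := SAW.exists_lt_one_lt_mul_pow hlt one_pos M
  rw [← mul_pow] at hρ
  have ha : 0 < μ * ρ := mul_pos hμ0 hρ0
  obtain ⟨C, hC, hbound⟩ := SAW.exists_le_mul_pow_of_submultiplicative
    (s := fun n => ((SAW.sparseTails H c.length c.length n (π v)).card : ℝ))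
    (fun n => Nat.cast_nonneg _)
    (fun m n => by exact_mod_cast SAW.card_sparseTails_add_le htrans m n (π v)) hM ha hρ.le
  refine (SAW.limsup_rpow_le_of_le_mul_pow (fun n => Nat.cast_nonneg _) ha hC fun n =>
    le_trans ?_ (hbound n)).trans_lt (mul_lt_of_lt_one_right hμ0 hρ1)
  exact_mod_cast SAW.sawCount_le_card_sparseTails n (π v)

/-- Strict inequality for quotient graphs by freely-acting (not necessarily normal)
subgroups: if `𝒜` acts freely, `G/𝒜` is vertex-transitive, and `G/𝒜` contains a cycle of
some length `l` that is the length of no cycle of `G`, then the connective constant of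
`G/𝒜` is strictly smaller than that of `G`. -/
theorem quotient_graph_free_strict_inequality {V : Type*} (G : SimpleGraph V) [Infinite V]
    (hconn : G.Connected)
    (hlf : ∀ v : V, (G.neighborSet v).Finite)
    (Γ A : Subgroup (Equiv.Perm V))
    (hΓaut : ∀ γ ∈ Γ, ∀ u w : V, G.Adj (γ u) (γ w) ↔ G.Adj u w)
    (hΓtrans : ∀ u w : V, ∃ γ ∈ Γ, γ u = w)
    (hAΓ : A ≤ Γ)
    (hAnontriv : ∃ α ∈ A, α ≠ 1)
    (hAfree : ∀ α ∈ A, ∀ u : V, α u = u → α = 1)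
    (hquotTrans : ∀ x y : Quotient (MulAction.orbitRel A V),
      ∃ γ : quotGraph G A ≃g quotGraph G A, γ x = y)
    (l : ℕ) (hl : 3 ≤ l)
    (hcycleQuot : ∃ (x : Quotient (MulAction.orbitRel A V)) (cyc : (quotGraph G A).Walk x x),
      cyc.IsCycle ∧ cyc.length = l)
    (hnocycleG : ∀ (u : V) (cyc : G.Walk u u), cyc.IsCycle → cyc.length ≠ l)
    (v : V) (μ : ℝ)
    (hμ : Tendsto (fun n : ℕ => (sawCount G v n : ℝ) ^ ((1 : ℝ) / n)) atTop (nhds μ)) :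
    limsup (fun n : ℕ =>
      (sawCount (quotGraph G A) (Quotient.mk (MulAction.orbitRel A V) v) n : ℝ) ^ ((1 : ℝ) / n))
      atTop < μ := by
  exact quotient_graph_free_strict_inequality_general hconn hlf
    (SAW.liftsAdj_quotGraph fun α hα => hΓaut α (hAΓ hα)) hquotTrans hcycleQuot hnocycleG v hμ
end
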